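/- arXiv:1602.00429 — 2 statements merged into one kernel-verified Lean document; each statement's English description precedes it below -/
import Mathlib

section
/- Let R be a Noetherian local ring such that R_q is equidimensional for every prime q of R, and assume (DE) holds for every localization: for every prime q and all nonzero finitely generated R_q-modules A and B with Tor_i^{R_q}(A,B) = 0 for all i > 0, one has dim A + dim B = dim R_q + dim(A ⊗_{R_q} B). Let N be a nonzero finitely generated R-module with pd_R N < ∞, and suppose that for every minimal prime p of R and every prime q minimal over p + ann(N), there exists a nonzero finitely generated maximal Cohen–Macaulay module over (R/p)_q. Then every minimal prime of R is contained in some minimal prime of N. -/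
/-!
STATEMENT 13: Let `R` be a Noetherian local ring whose localizations are all equidimensional,
satisfying the dimension formula (DE) at every localization. Let `N` be a nonzero finitely
generated `R`-module of finite projective dimension such that for every minimal prime `p` of
`R` and every prime `q` minimal over `p + ann N` there is a nonzero finitely generated maximal
Cohen–Macaulay module over `(R/p)_q`. Then every minimal prime of `R` is contained in some
minimal prime of `N`.
-/

open CategoryTheory CategoryTheory.Limits

open scoped TensorProduct

universe u

/-- The Krull dimension of a commutative ring, valued in `WithBot ℕ∞`. -/
noncomputable def ringDim (R : Type u) [CommRing R] : WithBot ℕ∞ := ringKrullDim R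

/-- The Krull dimension of a module `M`: the Krull dimension of `R ⧸ ann M`. -/
noncomputable def moduleDim (R : Type u) [CommRing R] (M : Type u) [AddCommGroup M]
    [Module R M] : WithBot ℕ∞ :=
  ringDim (R ⧸ Module.annihilator R M)

/-- The depth of a module over a Noetherian local ring: the supremum of lengths of `M`-regular
sequences of elements of the maximal ideal. -/
noncomputable def moduleDepth (R : Type u) [CommRing R] [IsLocalRing R]
    (M : Type u) [AddCommGroup M] [Module R M] : ℕ∞ :=
  sSup {n : ℕ∞ | ∃ rs : List R, n = (rs.length : ℕ∞) ∧
    (∀ x ∈ rs, x ∈ IsLocalRing.maximalIdeal R) ∧ RingTheory.Sequence.IsRegular M rs}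

/-- A module has finite projective dimension iff for some `n` the functors `Ext^i(M, -)`
vanish for all `i > n`. -/
def HasFinitePD (R : Type u) [CommRing R] (M : Type u) [AddCommGroup M] [Module R M] : Prop :=
  ∃ n : ℕ, ∀ i : ℕ, n < i → ∀ L : ModuleCat.{u} R,
    IsZero (((Ext R (ModuleCat.{u} R) i).obj (Opposite.op (ModuleCat.of R M))).obj L)

/-!
Fix a minimal prime `p`, choose `q` minimal over `p + ann N`, and localize at `q`. A maximal
Cohen–Macaulay module `W` over `(R/p)_q` has depth `d = dim R_q` by equidimensionality, and the
maximal ideal of `R_q` is the radical of `ann W + ann N_q`. By Auslander–Buchsbaum,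
`pd N_q ≤ depth R_q ≤ d`. Every positive `Tor` of `W` and `N_q` is killed by a power of the maximal
ideal while tensoring `W` with a projective resolution of length at most `d` keeps depth `d` in each
degree, so the acyclicity lemma of Peskine and Szpiro makes all of them vanish. Now (DE) reads
`d + dim N_q = d + 0`, whence `dim N_q = 0` and `q` itself is minimal over `ann N`.
-/

section AbelianExt

universe w v

variable {C : Type u} [Category.{v} C] [Abelian C] [HasExt.{w} C] {A X Y : C} {t : ℕ}

lemma exists_nontrivial_ext_of_comp_eq_zero {T : ShortComplex C} (hT : T.ShortExact)
    {e : Abelian.Ext A T.X₁ t} (he : e ≠ 0) (hef : e.comp (Abelian.Ext.mk₀ T.f) (add_zero t) = 0) :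
    ∃ j, j + 1 = t ∧ Nontrivial (Abelian.Ext A T.X₃ j) := by
  have := hT.mono_f
  cases t with
  | zero =>
    refine absurd (Abelian.Ext.postcomp_mk₀_injective_of_mono A T.f ?_) he
    exact hef.trans (map_zero ((Abelian.Ext.mk₀ T.f).postcomp A (add_zero 0))).symm
  | succ j =>
    obtain ⟨y, rfl⟩ := Abelian.Ext.covariant_sequence_exact₁ A hT e hef rfl
    refine ⟨j, rfl, y, 0, ?_⟩
    rintro rfl
    exact he (Abelian.Ext.zero_comp ..)

lemma nontrivial_ext_of_retract (r : Retract X Y) [Nontrivial (Abelian.Ext A X t)] :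
    Nontrivial (Abelian.Ext A Y t) := by
  refine Function.Injective.nontrivial
    (f := fun e : Abelian.Ext A X t => e.comp (Abelian.Ext.mk₀ r.i) (add_zero t)) ?_
  refine Function.LeftInverse.injective
    (g := fun e => e.comp (Abelian.Ext.mk₀ r.r) (add_zero t)) fun e => ?_
  simp

end AbelianExt

section ModuleExt

variable {S : Type u} [CommRing S] {K L : Type u} [AddCommGroup K] [Module S K]
  [AddCommGroup L] [Module S L]

lemma nontrivial_ext_of_free [Module.Free S K] [Nontrivial K] {A : ModuleCat.{u} S} {t : ℕ}
    [Nontrivial (Abelian.Ext A (ModuleCat.of S S) t)] :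
    Nontrivial (Abelian.Ext A (ModuleCat.of S K) t) := by
  let b := Module.Free.chooseBasis S K
  obtain ⟨j⟩ := b.index_nonempty
  refine nontrivial_ext_of_retract (X := ModuleCat.of S S)
    ⟨ModuleCat.ofHom (LinearMap.toSpanSingleton S K (b j)), ModuleCat.ofHom (b.coord j), ?_⟩
  ext
  simp

lemma ext_comp_eq_zero_of_basis {ι : Type*} [Finite ι] (b : Module.Basis ι S K) (f : K →ₗ[S] L)
    {A : ModuleCat.{u} S} {t : ℕ}
    (hf : ∀ j (e : Abelian.Ext A (ModuleCat.of S S) t),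
      e.comp (Abelian.Ext.mk₀ (ModuleCat.ofHom (LinearMap.toSpanSingleton S L (f (b j)))))
        (add_zero t) = 0)
    (e : Abelian.Ext A (ModuleCat.of S K) t) :
    e.comp (Abelian.Ext.mk₀ (ModuleCat.ofHom f)) (add_zero t) = 0 := by
  have := Fintype.ofFinite ι
  have hsum : ModuleCat.ofHom f = ∑ j, ModuleCat.ofHom (b.coord j) ≫
      ModuleCat.ofHom (LinearMap.toSpanSingleton S L (f (b j))) := by
    ext x
    rw [ModuleCat.hom_sum, LinearMap.sum_apply]
    conv_lhs => rw [← b.sum_repr x, map_sum]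
    simp
  rw [hsum, Abelian.Ext.mk₀_sum, Abelian.Ext.comp_sum]
  refine Finset.sum_eq_zero fun j _ => ?_
  rw [← Abelian.Ext.mk₀_comp_mk₀, ← Abelian.Ext.comp_assoc_of_third_deg_zero, hf j]

lemma subsingleton_ext_of_free [Module.Free S K] [Module.Finite S K] {A : ModuleCat.{u} S}
    {t : ℕ} [Subsingleton (Abelian.Ext A (ModuleCat.of S S) t)] :
    Subsingleton (Abelian.Ext A (ModuleCat.of S K) t) := by
  refine subsingleton_of_forall_eq 0 fun e => ?_
  rw [← Abelian.Ext.comp_mk₀_id e]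
  refine ext_comp_eq_zero_of_basis (Module.Free.chooseBasis S K) LinearMap.id (fun j e => ?_) e
  rw [Subsingleton.elim e 0, Abelian.Ext.zero_comp]

lemma ext_comp_smul_id_eq_zero {A X : ModuleCat.{u} S} {a : S} (ha : a ∈ Module.annihilator S A)
    {t : ℕ} (e : Abelian.Ext A X t) :
    e.comp (Abelian.Ext.mk₀ (a • 𝟙 X)) (add_zero t) = 0 :=
  DFunLike.congr_fun (congrArg AddCommGrpCat.Hom.hom
    (Abelian.Ext.postcomp_smul_id_eq_zero_of_mem_annihilator ha t)) e

lemma ext_comp_toSpanSingleton_eq_zero {A : ModuleCat.{u} S} {x : L}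
    (hx : x ∈ Module.annihilator S A • (⊤ : Submodule S L)) {t : ℕ}
    (e : Abelian.Ext A (ModuleCat.of S S) t) :
    e.comp (Abelian.Ext.mk₀ (ModuleCat.ofHom (LinearMap.toSpanSingleton S L x)))
      (add_zero t) = 0 := by
  induction hx using Submodule.smul_induction_on' with
  | smul a ha y _ =>
    have hsmul : ModuleCat.ofHom (LinearMap.toSpanSingleton S L (a • y)) =
        (a • 𝟙 (ModuleCat.of S S)) ≫ ModuleCat.ofHom (LinearMap.toSpanSingleton S L y) := by
      ext
      simp
    rw [hsmul, ← Abelian.Ext.mk₀_comp_mk₀, ← Abelian.Ext.comp_assoc_of_third_deg_zero,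
      ext_comp_smul_id_eq_zero ha, Abelian.Ext.zero_comp]
  | add y _ z _ hy hz =>
    rw [LinearMap.toSpanSingleton_add, ModuleCat.ofHom_add, Abelian.Ext.mk₀_add,
      Abelian.Ext.comp_add, hy, hz, add_zero]

lemma ext_comp_eq_zero_of_range_le [Module.Free S K] [Module.Finite S K] {A : ModuleCat.{u} S}
    {f : K →ₗ[S] L} (hf : f.range ≤ Module.annihilator S A • ⊤) {t : ℕ}
    (e : Abelian.Ext A (ModuleCat.of S K) t) :
    e.comp (Abelian.Ext.mk₀ (ModuleCat.ofHom f)) (add_zero t) = 0 :=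
  ext_comp_eq_zero_of_basis (Module.Free.chooseBasis S K) f
    (fun _ => ext_comp_toSpanSingleton_eq_zero (hf ⟨_, rfl⟩)) e

end ModuleExt

/-- The residue field of a local ring `S`, as an object of the category of `S`-modules. -/
noncomputable abbrev residueModule (S : Type u) [CommRing S] [IsLocalRing S] : ModuleCat.{u} S :=
  ModuleCat.of S (IsLocalRing.ResidueField S)

/-- Depth at least `t` over a local ring with residue field `k`, expressed by the vanishing of
`Ext^i(k, X)` for `i < t`, so that it makes sense for modules that are not finitely generated. -/
def ExtDepthGE {S : Type u} [CommRing S] [IsLocalRing S] (t : ℕ) (X : ModuleCat.{u} S) : Prop :=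
  ∀ i < t, Subsingleton (Abelian.Ext (residueModule S) X i)

section ExtDepth

variable {S : Type u} [CommRing S] [IsLocalRing S]

lemma annihilator_residueModule :
    Module.annihilator S (residueModule S) = IsLocalRing.maximalIdeal S :=
  Ideal.annihilator_quotient

lemma ExtDepthGE.mono {s t : ℕ} (h : s ≤ t) {X : ModuleCat.{u} S} (hX : ExtDepthGE t X) :
    ExtDepthGE s X :=
  fun i hi => hX i (hi.trans_le h)

lemma ExtDepthGE.of_free {t : ℕ} (h : ExtDepthGE t (ModuleCat.of S S)) (K : Type u)
    [AddCommGroup K] [Module S K] [Module.Free S K] [Module.Finite S K] :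
    ExtDepthGE t (ModuleCat.of S K) := by
  intro i hi
  have := h i hi
  exact subsingleton_ext_of_free

lemma ExtDepthGE.of_isWeaklyRegular {rs : List S} (mem : ∀ r ∈ rs, r ∈ IsLocalRing.maximalIdeal S)
    {X : ModuleCat.{u} S} (reg : RingTheory.Sequence.IsWeaklyRegular X rs) :
    ExtDepthGE rs.length X := by
  induction rs generalizing X with
  | nil => simp [ExtDepthGE]
  | cons a rs ih =>
    rw [RingTheory.Sequence.isWeaklyRegular_cons_iff] at reg
    obtain ⟨ha, mem⟩ := List.forall_mem_cons.mp mem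
    rw [← annihilator_residueModule] at ha
    intro i hi
    refine subsingleton_of_forall_eq 0 fun e => ?_
    by_contra he
    obtain ⟨j, rfl, hj⟩ := exists_nontrivial_ext_of_comp_eq_zero
      reg.1.smulShortComplex_shortExact he (ext_comp_smul_id_eq_zero ha e)
    exact not_subsingleton_iff_nontrivial.mpr hj
      (ih mem (X := ModuleCat.of S (QuotSMulTop a X)) reg.2 j (by simpa using hi))

lemma ExtDepthGE.of_shortExact {T : ShortComplex (ModuleCat.{u} S)} (hT : T.ShortExact) {t : ℕ}
    (h₁ : ExtDepthGE (t + 1) T.X₁) (h₂ : ExtDepthGE t T.X₂) : ExtDepthGE t T.X₃ := by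
  intro i hi
  refine subsingleton_of_forall_eq 0 fun e => ?_
  have := h₁ (i + 1) (by omega)
  have := h₂ i hi
  obtain ⟨y, rfl⟩ := Abelian.Ext.covariant_sequence_exact₃ _ hT e rfl (Subsingleton.elim _ _)
  rw [Subsingleton.elim y 0, Abelian.Ext.zero_comp]

lemma ExtDepthGE.eq_zero_of_maximalIdeal_smul {X : ModuleCat.{u} S} (hX : ExtDepthGE 1 X)
    {x : X} (hx : ∀ a ∈ IsLocalRing.maximalIdeal S, a • x = 0) : x = 0 := by
  have : Subsingleton (residueModule S ⟶ X) :=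
    Abelian.Ext.addEquiv₀.subsingleton_congr.mp (hX 0 one_pos)
  let f : (S ⧸ IsLocalRing.maximalIdeal S) →ₗ[S] X :=
    Submodule.liftQ _ (LinearMap.toSpanSingleton S X x) hx
  have hf : f = 0 := congrArg ModuleCat.Hom.hom
    (Subsingleton.elim (α := residueModule S ⟶ X) (ModuleCat.ofHom f) 0)
  calc x = (1 : S) • x := (one_smul S x).symm
    _ = f (Submodule.Quotient.mk 1) := rfl
    _ = 0 := LinearMap.congr_fun hf _

lemma ExtDepthGE.eq_zero_of_maximalIdeal_pow_smul {X : ModuleCat.{u} S} (hX : ExtDepthGE 1 X)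
    {k : ℕ} {x : X} (hx : ∀ a ∈ IsLocalRing.maximalIdeal S ^ k, a • x = 0) : x = 0 := by
  induction k with
  | zero => simpa using hx 1 (by simp)
  | succ k ih =>
    refine ih fun b hb => hX.eq_zero_of_maximalIdeal_smul fun a ha => ?_
    rw [smul_smul]
    exact hx _ (by rw [pow_succ']; exact Ideal.mul_mem_mul ha hb)

end ExtDepth

lemma exists_ringKrullDim_eq_natCast (A : Type*) [CommRing A] [FiniteRingKrullDim A] :
    ∃ d : ℕ, ringKrullDim A = d := by
  obtain ⟨e, he⟩ := WithBot.ne_bot_iff_exists.mp (ringKrullDim_ne_bot (R := A))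
  obtain ⟨d, rfl⟩ := ENat.ne_top_iff_exists.mp fun h : e = ⊤ =>
    ringKrullDim_ne_top (he.symm.trans (congrArg _ h))
  exact ⟨d, he.symm⟩

section Dimension

variable {S : Type u} [CommRing S] [IsLocalRing S] [IsNoetherianRing S] {M : Type u}
  [AddCommGroup M] [Module S M] [Module.Finite S M]

lemma length_le_supportDim_of_isRegular {rs : List S} (reg : RingTheory.Sequence.IsRegular M rs) :
    (rs.length : WithBot ℕ∞) ≤ Module.supportDim S M := by
  rw [← Module.supportDim_add_length_eq_supportDim_of_isRegular rs reg]
  have : Nontrivial (M ⧸ Ideal.ofList rs • (⊤ : Submodule S M)) :=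
    Submodule.Quotient.nontrivial_iff.mpr reg.top_ne_smul.symm
  exact le_add_of_nonneg_left (Order.krullDim_nonneg_iff.mpr
    (Module.nonempty_support_of_nontrivial.to_subtype))

lemma ExtDepthGE.le_supportDim [Nontrivial M] {t : ℕ} (h : ExtDepthGE t (ModuleCat.of S M)) :
    (t : WithBot ℕ∞) ≤ Module.supportDim S M := by
  have hlt : IsLocalRing.maximalIdeal S • (⊤ : Submodule S M) < ⊤ :=
    (Submodule.top_ne_ideal_smul_of_le_jacobson_annihilator
      (IsLocalRing.maximalIdeal_le_jacobson _)).symm.lt_top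
  obtain ⟨rs, rfl, -, reg⟩ := ModuleCat.exists_isRegular_of_exists_subsingleton_ext
    (IsLocalRing.maximalIdeal S) t (ModuleCat.of S M) hlt (residueModule S)
    (by rw [Module.support_eq_zeroLocus, annihilator_residueModule]) h
  exact length_le_supportDim_of_isRegular reg

end Dimension

section AuslanderBuchsbaum

variable {S : Type u} [CommRing S] [IsLocalRing S]

lemma exists_surjective_ker_le_maximalIdeal_smul (M : Type u) [AddCommGroup M] [Module S M]
    [Module.Finite S M] :
    ∃ (ι : Type u) (_ : Fintype ι) (π : (ι → S) →ₗ[S] M), Function.Surjective π ∧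
      LinearMap.ker π ≤ IsLocalRing.maximalIdeal S • ⊤ := by
  classical
  let k := IsLocalRing.ResidueField S
  let w := Module.Free.chooseBasis k (k ⊗[S] M)
  obtain ⟨v, hv⟩ :=
    (TensorProduct.mk_surjective S M k Ideal.Quotient.mk_surjective).comp_left w
  refine ⟨_, inferInstance, Fintype.linearCombination S v, ?_, fun x hx => ?_⟩
  · rw [← LinearMap.range_eq_top, Fintype.range_linearCombination]
    exact IsLocalRing.span_eq_top_of_tmul_eq_basis v w (congr_fun hv)
  · have hsum : ∑ j, IsLocalRing.residue S (x j) • w j = 0 := by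
      have h := congrArg (TensorProduct.mk S k M 1) (LinearMap.mem_ker.mp hx)
      rw [Fintype.linearCombination_apply, map_sum, map_zero] at h
      rw [← h]
      refine Finset.sum_congr rfl fun j _ => ?_
      rw [map_smul, ← congr_fun hv j]
      exact algebraMap_smul k (x j) _
    have hmem (i) : x i ∈ IsLocalRing.maximalIdeal S :=
      (IsLocalRing.residue_eq_zero_iff _).mp
        (Fintype.linearIndependent_iff.mp w.linearIndependent _ hsum i)
    rw [pi_eq_sum_univ x]
    exact Submodule.sum_mem _ fun i _ => Submodule.smul_mem_smul (hmem i) trivial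

variable [IsNoetherianRing S] {t : ℕ}

lemma exists_nontrivial_ext_of_hasProjectiveDimensionLT_two
    [Nontrivial (Abelian.Ext (residueModule S) (ModuleCat.of S S) t)]
    (M : ModuleCat.{u} S) [Module.Finite S M] (hM : HasProjectiveDimensionLT M 2)
    (hM' : ¬ HasProjectiveDimensionLT M 1) :
    ∃ j, j + 1 = t ∧ Nontrivial (Abelian.Ext (residueModule S) M j) := by
  obtain ⟨ι, _, π, hπ, hker⟩ := exists_surjective_ker_le_maximalIdeal_smul (S := S) M
  have hT := LinearMap.shortExact_shortComplexKer hπ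
  have hF : Projective (ModuleCat.of S (ι → S)) :=
    (IsProjective.iff_projective (R := S) (ι → S)).mp inferInstance
  have hK : HasProjectiveDimensionLT (ModuleCat.of S (LinearMap.ker π)) 1 :=
    (hT.hasProjectiveDimensionLT_X₃_iff 0 hF).mp hM
  rw [← projective_iff_hasProjectiveDimensionLT_one] at hK
  have : Module.Projective S (LinearMap.ker π) :=
    (IsProjective.iff_projective (R := S) (LinearMap.ker π)).mpr hK
  have : Module.Free S (LinearMap.ker π) := Module.free_of_flat_of_isLocalRing
  have : Nontrivial (LinearMap.ker π) := by
    rw [Submodule.nontrivial_iff_ne_bot]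
    intro hbot
    refine hM' (projective_iff_hasProjectiveDimensionLT_one.mp ?_)
    exact (IsProjective.iff_projective (R := S) M).mp (Module.Projective.of_equiv
      (LinearEquiv.ofBijective π ⟨LinearMap.ker_eq_bot.mp hbot, hπ⟩))
  have := nontrivial_ext_of_free (K := LinearMap.ker π) (A := residueModule S) (t := t)
  obtain ⟨e, he⟩ := exists_ne (0 : Abelian.Ext (residueModule S) π.shortComplexKer.X₁ t)
  -- Minimality of the presentation makes `Extᵗ(k, ker π) → Extᵗ(k, F)` the zero map.
  refine exists_nontrivial_ext_of_comp_eq_zero hT he (ext_comp_eq_zero_of_range_le ?_ e)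
  rwa [Submodule.range_subtype, annihilator_residueModule]

lemma exists_nontrivial_ext_of_hasProjectiveDimensionLT
    [Nontrivial (Abelian.Ext (residueModule S) (ModuleCat.of S S) t)]
    (ht : ExtDepthGE t (ModuleCat.of S S)) (n : ℕ) (M : ModuleCat.{u} S) [Module.Finite S M]
    (hM : HasProjectiveDimensionLT M (n + 2)) (hM' : ¬ HasProjectiveDimensionLT M (n + 1)) :
    ∃ j, j + (n + 1) = t ∧ Nontrivial (Abelian.Ext (residueModule S) M j) := by
  induction n generalizing M with
  | zero => exact exists_nontrivial_ext_of_hasProjectiveDimensionLT_two M hM hM'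
  | succ n ih =>
    obtain ⟨ι, _, π, hπ, -⟩ := exists_surjective_ker_le_maximalIdeal_smul (S := S) M
    have hT := LinearMap.shortExact_shortComplexKer hπ
    have hF : Projective (ModuleCat.of S (ι → S)) :=
      (IsProjective.iff_projective (R := S) (ι → S)).mp inferInstance
    obtain ⟨j, hj, hKj⟩ := ih (ModuleCat.of S (LinearMap.ker π))
      ((hT.hasProjectiveDimensionLT_X₃_iff (n + 1) hF).mp hM)
      (fun h => hM' ((hT.hasProjectiveDimensionLT_X₃_iff n hF).mpr h))
    obtain ⟨e, he⟩ := exists_ne (0 : Abelian.Ext (residueModule S) π.shortComplexKer.X₁ j)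
    obtain ⟨i, rfl, hi⟩ := exists_nontrivial_ext_of_comp_eq_zero hT he
      ((ht.of_free (ι → S) j (by omega)).elim _ _)
    exact ⟨i, by omega, hi⟩

lemma exists_extDepthGE_and_nontrivial_ext : ∃ t, ExtDepthGE t (ModuleCat.of S S) ∧
    Nontrivial (Abelian.Ext (residueModule S) (ModuleCat.of S S) t) := by
  classical
  have hex : ∃ t, Nontrivial (Abelian.Ext (residueModule S) (ModuleCat.of S S) t) := by
    by_contra! hall
    obtain ⟨d, hd⟩ := exists_ringKrullDim_eq_natCast S
    have hle := ExtDepthGE.le_supportDim (S := S) (M := S) (t := d + 1) fun i _ => hall i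
    rw [Module.supportDim_self_eq_ringKrullDim, hd] at hle
    exact (Nat.lt_succ_self d).not_ge (by exact_mod_cast hle)
  exact ⟨Nat.find hex, fun i hi => not_nontrivial_iff_subsingleton.mp (Nat.find_min hex hi),
    Nat.find_spec hex⟩

lemma hasProjectiveDimensionLE_of_ringKrullDim_eq {d : ℕ} (hd : ringKrullDim S = d)
    (M : ModuleCat.{u} S) [Module.Finite S M] {n : ℕ} (hM : HasProjectiveDimensionLT M n) :
    HasProjectiveDimensionLE M d := by
  obtain ⟨t, ht, _⟩ := exists_extDepthGE_and_nontrivial_ext (S := S)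
  have htd : t ≤ d := by
    have := ht.le_supportDim
    rw [Module.supportDim_self_eq_ringKrullDim, hd] at this
    exact_mod_cast this
  induction n with
  | zero => exact hasProjectiveDimensionLT_of_ge M 0 (d + 1) (Nat.zero_le _)
  | succ n ih =>
    by_cases hM' : HasProjectiveDimensionLT M n
    · exact ih hM'
    rcases n with _ | m
    · exact hasProjectiveDimensionLT_of_ge M 1 (d + 1) (by omega)
    obtain ⟨j, hj, -⟩ := exists_nontrivial_ext_of_hasProjectiveDimensionLT ht m M hM hM'
    exact hasProjectiveDimensionLT_of_ge M (m + 2) (d + 1) (by omega)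

end AuslanderBuchsbaum

/-- The elements of `I` annihilate `M` stably: multiplication by each of them on `M` factors
through every projective module mapping onto `M`. In contrast to annihilation, this passes to
syzygies of `M`, and it forces `I` to annihilate the positive `Tor` of `M`. -/
def StablyAnnihilatedBy {S : Type u} [CommRing S] (I : Ideal S) (M : Type u) [AddCommGroup M]
    [Module S M] : Prop :=
  ∀ a ∈ I, ∀ (F : Type u) [AddCommGroup F] [Module S F] [Module.Projective S F] (π : F →ₗ[S] M),
    Function.Surjective π → ∃ s : M →ₗ[S] F, π ∘ₗ s = a • LinearMap.id

/-- The vanishing of `Tor₁(W, M)`, phrased as injectivity of `W ⊗ ker π → W ⊗ F` for every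
projective presentation `π : F → M`. -/
def HasTrivialTorOne {S : Type u} [CommRing S] (W M : Type u) [AddCommGroup W] [Module S W]
    [AddCommGroup M] [Module S M] : Prop :=
  ∀ (F : Type u) [AddCommGroup F] [Module S F] [Module.Projective S F] (π : F →ₗ[S] M),
    Function.Surjective π → Function.Injective ((LinearMap.ker π).subtype.lTensor W)

section Presentation

variable {S : Type u} [CommRing S] {F M : Type u} [AddCommGroup F] [Module S F]
  [AddCommGroup M] [Module S M] {π : F →ₗ[S] M}

lemma exists_comp_subtype_ker_eq_smul {a : S} {s : M →ₗ[S] F} (hs : π ∘ₗ s = a • LinearMap.id) :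
    ∃ r : F →ₗ[S] LinearMap.ker π, r ∘ₗ (LinearMap.ker π).subtype = a • LinearMap.id := by
  refine ⟨LinearMap.codRestrict _ (a • LinearMap.id - s ∘ₗ π) fun x => ?_, ?_⟩
  · have hx : π (s (π x)) = a • π x := LinearMap.congr_fun hs (π x)
    simp [hx]
  · ext x
    simp

lemma stablyAnnihilatedBy_annihilator : StablyAnnihilatedBy (Module.annihilator S M) M := by
  refine fun a ha F _ _ _ π _ => ⟨0, ?_⟩
  ext x
  simpa using (Module.mem_annihilator.mp ha x).symm

lemma StablyAnnihilatedBy.ker [Module.Projective S F] {I : Ideal S}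
    (hM : StablyAnnihilatedBy I M) (hπ : Function.Surjective π) :
    StablyAnnihilatedBy I (LinearMap.ker π) := by
  intro a ha F' _ _ _ π' hπ'
  obtain ⟨s, hs⟩ := hM a ha F π hπ
  obtain ⟨r, hr⟩ := exists_comp_subtype_ker_eq_smul hs
  obtain ⟨h, hh⟩ := Module.projective_lifting_property π' r hπ'
  exact ⟨h ∘ₗ (LinearMap.ker π).subtype, by rw [← LinearMap.comp_assoc, hh, hr]⟩

lemma StablyAnnihilatedBy.smul_eq_zero_of_lTensor_eq_zero [Module.Projective S F] {I : Ideal S}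
    (hM : StablyAnnihilatedBy I M) (hπ : Function.Surjective π) {W : Type u} [AddCommGroup W]
    [Module S W] {x : W ⊗[S] LinearMap.ker π} (hx : (LinearMap.ker π).subtype.lTensor W x = 0)
    {a : S} (ha : a ∈ I) : a • x = 0 := by
  obtain ⟨s, hs⟩ := hM a ha F π hπ
  obtain ⟨r, hr⟩ := exists_comp_subtype_ker_eq_smul hs
  calc a • x = (r ∘ₗ (LinearMap.ker π).subtype).lTensor W x := by
        rw [hr, LinearMap.lTensor_smul, LinearMap.lTensor_id, LinearMap.smul_apply,
          LinearMap.id_apply]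
    _ = 0 := by rw [LinearMap.lTensor_comp, LinearMap.comp_apply, hx, map_zero]

lemma hasTrivialTorOne_of_projective (W : Type u) [AddCommGroup W] [Module S W]
    [Module.Projective S M] : HasTrivialTorOne (S := S) W M := by
  intro F _ _ _ π hπ
  have hM : StablyAnnihilatedBy (⊤ : Ideal S) M := fun a _ F _ _ _ π hπ => by
    obtain ⟨s, hs⟩ := Module.projective_lifting_property π LinearMap.id hπ
    exact ⟨a • s, by rw [LinearMap.comp_smul, hs]⟩
  refine (injective_iff_map_eq_zero _).mpr fun x hx => ?_
  rw [← one_smul S x]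
  exact hM.smul_eq_zero_of_lTensor_eq_zero hπ hx trivial

lemma lTensor_shortExact (W : Type u) [AddCommGroup W] [Module S W]
    (hπ : Function.Surjective π)
    (hinj : Function.Injective ((LinearMap.ker π).subtype.lTensor W)) :
    (ShortComplex.mk (ModuleCat.ofHom ((LinearMap.ker π).subtype.lTensor W))
      (ModuleCat.ofHom (π.lTensor W)) (by
        rw [← ModuleCat.ofHom_comp, ← LinearMap.lTensor_comp,
          (LinearMap.exact_subtype_ker_map π).linearMap_comp_eq_zero, LinearMap.lTensor_zero]
        rfl)).ShortExact where
  exact := by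
    rw [ShortComplex.ShortExact.moduleCat_exact_iff_function_exact]
    exact lTensor_exact W (LinearMap.exact_subtype_ker_map π) hπ
  mono_f := (ModuleCat.mono_iff_injective _).mpr hinj
  epi_g := (ModuleCat.epi_iff_surjective _).mpr (LinearMap.lTensor_surjective W hπ)

end Presentation

section Acyclicity

variable {S : Type u} [CommRing S]

lemma annihilator_sup_annihilator_le_annihilator_tensorProduct (A B : Type*) [AddCommGroup A]
    [Module S A] [AddCommGroup B] [Module S B] :
    Module.annihilator S A ⊔ Module.annihilator S B ≤ Module.annihilator S (A ⊗[S] B) := by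
  refine sup_le (fun a ha => Module.mem_annihilator.mpr fun z => ?_)
    (fun b hb => Module.mem_annihilator.mpr fun z => ?_)
  all_goals induction z with
    | zero => exact smul_zero _
    | add x y hx hy => rw [smul_add, hx, hy, add_zero]
    | tmul x y => ?_
  · rw [TensorProduct.smul_tmul', Module.mem_annihilator.mp ha, TensorProduct.zero_tmul]
  · rw [← TensorProduct.tmul_smul, Module.mem_annihilator.mp hb, TensorProduct.tmul_zero]

variable [IsLocalRing S] {W : Type u} [AddCommGroup W] [Module S W] {I : Ideal S} {k : ℕ}

lemma injective_lTensor_subtype_ker_of_extDepthGE_one {F M : Type u} [AddCommGroup F] [Module S F]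
    [Module.Projective S F] [AddCommGroup M] [Module S M] {π : F →ₗ[S] M}
    (hπ : Function.Surjective π) (hM : StablyAnnihilatedBy I M)
    (hk : IsLocalRing.maximalIdeal S ^ k ≤ Module.annihilator S W ⊔ I)
    (hdepth : ExtDepthGE 1 (ModuleCat.of S (W ⊗[S] LinearMap.ker π))) :
    Function.Injective ((LinearMap.ker π).subtype.lTensor W) := by
  refine (injective_iff_map_eq_zero _).mpr fun x hx => ?_
  refine hdepth.eq_zero_of_maximalIdeal_pow_smul (k := k) (x := x) fun a ha => ?_
  obtain ⟨b, hb, c, hc, rfl⟩ := Submodule.mem_sup.mp (hk ha)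
  have hbx : b • x = 0 := Module.mem_annihilator.mp
    (annihilator_sup_annihilator_le_annihilator_tensorProduct _ _ (Submodule.mem_sup_left hb)) x
  exact (add_smul b c x).trans
    (by rw [hbx, hM.smul_eq_zero_of_lTensor_eq_zero hπ hx hc, add_zero])

variable {rs : List S}

lemma extDepthGE_tensorProduct (mem : ∀ r ∈ rs, r ∈ IsLocalRing.maximalIdeal S)
    (reg : RingTheory.Sequence.IsWeaklyRegular W rs)
    (hk : IsLocalRing.maximalIdeal S ^ k ≤ Module.annihilator S W ⊔ I) {t n : ℕ}
    (htn : t + n ≤ rs.length) {M : ModuleCat.{u} S} (hM : HasProjectiveDimensionLE M n)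
    (hI : StablyAnnihilatedBy I M) : ExtDepthGE t (ModuleCat.of S (W ⊗[S] M)) := by
  have hproj (F : Type u) [AddCommGroup F] [Module S F] [Module.Projective S F] :
      ExtDepthGE rs.length (ModuleCat.of S (W ⊗[S] F)) :=
    .of_isWeaklyRegular mem (reg.isWeaklyRegular_rTensor (M₂ := F))
  induction n generalizing t M with
  | zero =>
    have : Module.Projective S M := (IsProjective.iff_projective (R := S) M).mpr
      (projective_iff_hasProjectiveDimensionLT_one.mpr hM)
    exact (hproj M).mono htn
  | succ n ih =>
    have hπ := Finsupp.linearCombination_id_surjective S M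
    have hK := ih (t := t + 1) (by omega)
      (((LinearMap.shortExact_shortComplexKer hπ).hasProjectiveDimensionLT_X₃_iff n
        ((IsProjective.iff_projective (R := S) (M →₀ S)).mp inferInstance)).mp hM) (hI.ker hπ)
    have hinj := injective_lTensor_subtype_ker_of_extDepthGE_one hπ hI hk (hK.mono (by omega))
    exact .of_shortExact (lTensor_shortExact W hπ hinj) hK ((hproj (M →₀ S)).mono (by omega))

lemma hasTrivialTorOne_of_hasProjectiveDimensionLE
    (mem : ∀ r ∈ rs, r ∈ IsLocalRing.maximalIdeal S)
    (reg : RingTheory.Sequence.IsWeaklyRegular W rs)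
    (hk : IsLocalRing.maximalIdeal S ^ k ≤ Module.annihilator S W ⊔ I) {n : ℕ}
    (hn : n ≤ rs.length) {M : ModuleCat.{u} S} (hM : HasProjectiveDimensionLE M n)
    (hI : StablyAnnihilatedBy I M) : HasTrivialTorOne (S := S) W M := by
  cases n with
  | zero =>
    have : Module.Projective S M := (IsProjective.iff_projective (R := S) M).mpr
      (projective_iff_hasProjectiveDimensionLT_one.mpr hM)
    exact hasTrivialTorOne_of_projective W
  | succ n =>
    intro F _ _ _ π hπ
    refine injective_lTensor_subtype_ker_of_extDepthGE_one hπ hI hk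
      (extDepthGE_tensorProduct (M := ModuleCat.of S (LinearMap.ker π)) (t := 1) (n := n)
        mem reg hk (by omega) ?_ (hI.ker hπ))
    exact ((LinearMap.shortExact_shortComplexKer hπ).hasProjectiveDimensionLT_X₃_iff n
      ((IsProjective.iff_projective (R := S) F).mp inferInstance)).mp hM

end Acyclicity

section FinitePD

variable {S : Type u} [CommRing S]

lemma subsingleton_ext_of_isZero_ext {X Y : ModuleCat.{u} S} {n : ℕ}
    (h : IsZero (((Ext S (ModuleCat.{u} S) (n + 1)).obj (Opposite.op X)).obj Y)) :
    Subsingleton (Abelian.Ext X Y (n + 1)) := by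
  refine subsingleton_of_forall_eq 0 fun e => ?_
  let P : ProjectiveResolution X := projectiveResolution X
  obtain ⟨f, hf, rfl⟩ := P.extMk_surjective e (n + 2) rfl
  have hexact := h.of_iso (P.isoExt (R := S) (n + 1) Y).symm
  rw [← HomologicalComplex.exactAt_iff_isZero_homology,
    HomologicalComplex.exactAt_iff' _ n (n + 1) (n + 2) (by simp) (by simp),
    ShortComplex.moduleCat_exact_iff] at hexact
  exact (P.extMk_eq_zero_iff f (n + 2) rfl hf n rfl).mpr (hexact f hf)

lemma HasFinitePD.exists_hasProjectiveDimensionLE {N : Type u} [AddCommGroup N] [Module S N]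
    (h : HasFinitePD S N) : ∃ n, HasProjectiveDimensionLE (ModuleCat.of S N) n := by
  obtain ⟨n, hn⟩ := h
  refine ⟨n, (hasProjectiveDimensionLT_iff _ _).mpr fun i hi Y e => ?_⟩
  obtain ⟨i, rfl⟩ := Nat.exists_eq_succ_of_ne_zero (by omega : i ≠ 0)
  exact (subsingleton_ext_of_isZero_ext (hn (i + 1) hi Y)).elim e 0

end FinitePD

/-- A property of modules which passes from a module to the kernel of any projective
presentation of it. -/
def ClosedUnderSyzygies {S : Type u} [CommRing S] (Q : ModuleCat.{u} S → Prop) : Prop :=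
  ∀ Z, Q Z → ∀ (F : Type u) [AddCommGroup F] [Module S F] [Module.Projective S F]
    (π : F →ₗ[S] Z), Function.Surjective π → Q (ModuleCat.of S (LinearMap.ker π))

section Tor

variable {S : Type u} [CommRing S] {M : ModuleCat.{u} S} (P : ProjectiveResolution M)

lemma exists_surjective_exact_codRestrict {i : ℕ} {Z : Type u} [AddCommGroup Z] [Module S Z]
    {π : P.complex.X i →ₗ[S] Z} (hπ : Function.Exact (P.complex.d (i + 1) i).hom π) :
    ∃ π' : P.complex.X (i + 1) →ₗ[S] LinearMap.ker π, Function.Surjective π' ∧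
      (LinearMap.ker π).subtype ∘ₗ π' = (P.complex.d (i + 1) i).hom ∧
      Function.Exact (P.complex.d (i + 2) (i + 1)).hom π' := by
  refine ⟨LinearMap.codRestrict _ (P.complex.d (i + 1) i).hom fun x => (hπ _).mpr ⟨x, rfl⟩,
    ?_, rfl, ?_⟩
  · rintro ⟨y, hy⟩
    obtain ⟨x, rfl⟩ := (hπ y).mp hy
    exact ⟨x, rfl⟩
  · have h := (ShortComplex.ShortExact.moduleCat_exact_iff_function_exact _).mp (P.exact_succ i)
    intro x
    rw [← h x]
    exact Subtype.ext_iff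

lemma ClosedUnderSyzygies.exists_syzygy {Q : ModuleCat.{u} S → Prop}
    (hQ : ClosedUnderSyzygies Q) (hM : Q M) (i : ℕ) :
    ∃ Z, Q Z ∧ ∃ π : P.complex.X i →ₗ[S] Z, Function.Surjective π ∧
      Function.Exact (P.complex.d (i + 1) i).hom π := by
  induction i with
  | zero =>
    refine ⟨M, hM, (P.π.f 0).hom, (ModuleCat.epi_iff_surjective _).mp inferInstance, ?_⟩
    exact (ShortComplex.ShortExact.moduleCat_exact_iff_function_exact _).mp P.exact₀
  | succ i ih =>
    obtain ⟨Z, hZ, π, hπ, hex⟩ := ih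
    obtain ⟨π', hπ', -, hex'⟩ := exists_surjective_exact_codRestrict P hex
    have : Module.Projective S (P.complex.X i) :=
      (IsProjective.iff_projective (R := S) _).mpr (P.projective i)
    exact ⟨_, hQ Z hZ _ π hπ, π', hπ', hex'⟩

lemma ClosedUnderSyzygies.isZero_tor {Q : ModuleCat.{u} S → Prop} (hQ : ClosedUnderSyzygies Q)
    (hM : Q M) {W : ModuleCat.{u} S} (hTor : ∀ Z, Q Z → HasTrivialTorOne (S := S) W Z) {i : ℕ}
    (hi : 0 < i) :
    IsZero (((Tor (ModuleCat.{u} S) i).obj W).obj M) := by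
  obtain ⟨i, rfl⟩ := Nat.exists_eq_succ_of_ne_zero hi.ne'
  let P : ProjectiveResolution M := projectiveResolution M
  refine IsZero.of_iso ?_ (P.isoLeftDerivedObj (MonoidalCategory.tensorLeft W) (i + 1))
  refine (HomologicalComplex.exactAt_iff_isZero_homology _ _).mp ?_
  rw [HomologicalComplex.exactAt_iff' _ (i + 2) (i + 1) i (by simp) (by simp),
    ShortComplex.ShortExact.moduleCat_exact_iff_function_exact]
  obtain ⟨Z, hZ, π, hπ, hex⟩ := hQ.exists_syzygy P hM i
  obtain ⟨π', hπ', hd, hex'⟩ := exists_surjective_exact_codRestrict P hex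
  have : Module.Projective S (P.complex.X i) :=
    (IsProjective.iff_projective (R := S) _).mpr (P.projective i)
  suffices Function.Exact ((P.complex.d (i + 2) (i + 1)).hom.lTensor W)
      ((P.complex.d (i + 1) i).hom.lTensor W) from this
  rw [← hd, LinearMap.lTensor_comp]
  exact (lTensor_exact W hex' hπ').comp_injective _ (hTor Z hZ _ π hπ) (map_zero _)

end Tor

section Local

variable {S : Type u} [CommRing S]

/-- The dimension formula (DE) over the ring `S`. -/
def SatisfiesDE (S : Type u) [CommRing S] : Prop :=
  ∀ (A B : Type u) [AddCommGroup A] [Module S A] [AddCommGroup B] [Module S B]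
    [Module.Finite S A] [Module.Finite S B] [Nontrivial A] [Nontrivial B],
    (∀ i : ℕ, 0 < i → IsZero (((Tor (ModuleCat.{u} S) i).obj (ModuleCat.of S A)).obj
      (ModuleCat.of S B))) →
    moduleDim S A + moduleDim S B = ringDim S + moduleDim S (A ⊗[S] B)

variable [IsLocalRing S]

lemma isZero_tor_of_isWeaklyRegular [IsNoetherianRing S] {W : ModuleCat.{u} S} {rs : List S}
    (hrs : ringKrullDim S = rs.length) (mem : ∀ r ∈ rs, r ∈ IsLocalRing.maximalIdeal S)
    (reg : RingTheory.Sequence.IsWeaklyRegular W rs) {M : ModuleCat.{u} S} [Module.Finite S M]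
    {n : ℕ} (hM : HasProjectiveDimensionLE M n) {k : ℕ}
    (hk : IsLocalRing.maximalIdeal S ^ k ≤ Module.annihilator S W ⊔ Module.annihilator S M)
    {i : ℕ} (hi : 0 < i) : IsZero (((Tor (ModuleCat.{u} S) i).obj W).obj M) := by
  let Q (Z : ModuleCat.{u} S) : Prop :=
    HasProjectiveDimensionLE Z rs.length ∧ StablyAnnihilatedBy (Module.annihilator S M) Z
  have hQ : ClosedUnderSyzygies Q := fun Z hZ F _ _ _ π hπ =>
    ⟨((LinearMap.shortExact_shortComplexKer hπ).hasProjectiveDimensionLT_X₃_iff rs.length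
        ((IsProjective.iff_projective (R := S) F).mp inferInstance)).mp
        (@hasProjectiveDimensionLT_of_ge _ _ _ Z _ _ (Nat.le_succ _) hZ.1), hZ.2.ker hπ⟩
  exact hQ.isZero_tor
    ⟨hasProjectiveDimensionLE_of_ringKrullDim_eq hrs M hM, stablyAnnihilatedBy_annihilator⟩
    (fun Z hZ => hasTrivialTorOne_of_hasProjectiveDimensionLE mem reg hk le_rfl hZ.1 hZ.2) hi

lemma exists_isRegular_of_moduleDepth_eq {W : Type u} [AddCommGroup W] [Module S W] [Nontrivial W]
    {d : ℕ} (hd : moduleDepth S W = d) :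
    ∃ rs : List S, rs.length = d ∧ (∀ r ∈ rs, r ∈ IsLocalRing.maximalIdeal S) ∧
      RingTheory.Sequence.IsRegular W rs := by
  obtain ⟨rs, hlen, mem, reg⟩ : moduleDepth S W ∈ {n : ℕ∞ | ∃ rs : List S, n = (rs.length : ℕ∞) ∧
      (∀ x ∈ rs, x ∈ IsLocalRing.maximalIdeal S) ∧ RingTheory.Sequence.IsRegular W rs} :=
    @ENat.sSup_mem_of_nonempty_of_lt_top _
      ⟨⟨0, [], by simp, by simp, RingTheory.Sequence.IsRegular.nil S W⟩⟩
      (hd.trans_lt (ENat.natCast_lt_top d))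
  exact ⟨rs, by exact_mod_cast hlen.symm.trans hd, mem, reg⟩

lemma exists_isRegular_map_eq {T : Type u} [CommRing T] [IsLocalRing T] [Algebra S T]
    (hST : Function.Surjective (algebraMap S T)) {W : Type u} [AddCommGroup W] [Module S W]
    [Module T W] [IsScalarTower S T W] {rs : List T}
    (mem : ∀ r ∈ rs, r ∈ IsLocalRing.maximalIdeal T) (reg : RingTheory.Sequence.IsRegular W rs) :
    ∃ rs' : List S, rs'.map (algebraMap S T) = rs ∧
      (∀ r ∈ rs', r ∈ IsLocalRing.maximalIdeal S) ∧ RingTheory.Sequence.IsRegular W rs' := by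
  have : IsLocalHom (algebraMap S T) := IsLocalHom.of_surjective _ hST
  obtain ⟨rs', rfl⟩ := List.map_surjective_iff.mpr hST rs
  refine ⟨rs', rfl, fun r hr => ?_, ?_⟩
  · have := mem _ (List.mem_map_of_mem hr)
    rwa [IsLocalRing.mem_maximalIdeal, map_mem_nonunits_iff] at this
  · exact ((AddEquiv.refl W).isRegular_congr (List.forall₂_map_right_iff.mpr
      (List.forall₂_same.mpr fun r _ x => (algebraMap_smul T r x).symm))).mpr reg

lemma moduleDim_eq_of_isRegular [IsNoetherianRing S] {W : Type u} [AddCommGroup W] [Module S W]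
    [Module.Finite S W] {rs : List S} (hrs : ringKrullDim S = rs.length)
    (reg : RingTheory.Sequence.IsRegular W rs) : moduleDim S W = rs.length := by
  refine le_antisymm ((ringKrullDim_quotient_le _).trans hrs.le) ?_
  rw [moduleDim, ringDim, ← Module.supportDim_eq_ringKrullDim_quotient_annihilator]
  exact length_le_supportDim_of_isRegular reg

lemma moduleDim_le_zero_iff {A : Type u} [CommRing A] {M : Type u} [AddCommGroup M] [Module A M] :
    moduleDim A M ≤ 0 ↔ ∀ J ∈ (Module.annihilator A M).minimalPrimes, J.IsMaximal := by
  rw [moduleDim, ringDim, ← Nat.cast_zero, ← Ring.krullDimLE_iff,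
    Ideal.krullDimLE_zero_quotient_iff_forall_minimalPrimes_isMaximal]

lemma moduleDim_tensorProduct_le_zero {A B : Type u} [AddCommGroup A] [Module S A]
    [AddCommGroup B] [Module S B] {k : ℕ}
    (hk : IsLocalRing.maximalIdeal S ^ k ≤ Module.annihilator S A ⊔ Module.annihilator S B) :
    moduleDim S (A ⊗[S] B) ≤ 0 := by
  refine moduleDim_le_zero_iff.mpr fun J hJ => ?_
  have := hJ.1.1
  have hle : IsLocalRing.maximalIdeal S ≤ J := Ideal.IsPrime.le_of_pow_le <| hk.trans <|
    (annihilator_sup_annihilator_le_annihilator_tensorProduct A B).trans hJ.1.2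
  rw [← (IsLocalRing.maximalIdeal.isMaximal S).eq_of_le Ideal.IsPrime.ne_top' hle]
  exact IsLocalRing.maximalIdeal.isMaximal S

lemma SatisfiesDE.moduleDim_le_zero [IsNoetherianRing S] (hDE : SatisfiesDE S) {W M : Type u}
    [AddCommGroup W] [Module S W] [Module.Finite S W] [AddCommGroup M] [Module S M]
    [Module.Finite S M] [Nontrivial M] {rs : List S} (hrs : ringKrullDim S = rs.length)
    (mem : ∀ r ∈ rs, r ∈ IsLocalRing.maximalIdeal S) (reg : RingTheory.Sequence.IsRegular W rs)
    {n : ℕ} (hM : HasProjectiveDimensionLE (ModuleCat.of S M) n) {k : ℕ}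
    (hk : IsLocalRing.maximalIdeal S ^ k ≤ Module.annihilator S W ⊔ Module.annihilator S M) :
    moduleDim S M ≤ 0 := by
  have : Nontrivial W := reg.nontrivial
  refine (ENat.WithBot.add_le_add_natCast_left_iff (c := rs.length)).mp ?_
  calc (rs.length : WithBot ℕ∞) + moduleDim S M
      = moduleDim S W + moduleDim S M := by rw [moduleDim_eq_of_isRegular hrs reg]
    _ = ringDim S + moduleDim S (W ⊗[S] M) := hDE W M fun i hi =>
        isZero_tor_of_isWeaklyRegular (W := ModuleCat.of S W) hrs mem reg.toIsWeaklyRegular hM hk hi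
    _ = rs.length + moduleDim S (W ⊗[S] M) := by rw [ringDim, hrs]
    _ ≤ rs.length + 0 := add_le_add_right (moduleDim_tensorProduct_le_zero hk) _

end Local

section Quotient

variable {S T : Type u} [CommRing S] [CommRing T] {φ : S →+* T}

/-- All irreducible components of the spectrum of `S` have the dimension of `S`. -/
def IsEquidimensional (S : Type u) [CommRing S] : Prop :=
  ∀ p ∈ minimalPrimes S, ringDim (S ⧸ p) = ringDim S

lemma IsEquidimensional.ringDim_eq_of_surjective (hS : IsEquidimensional S)
    (hφ : Function.Surjective φ) (hker : RingHom.ker φ ∈ minimalPrimes S) :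
    ringDim T = ringDim S := by
  rw [← hS _ hker]
  exact (ringKrullDim_eq_of_ringEquiv (RingHom.quotientKerEquivOfSurjective hφ)).symm

lemma SatisfiesDE.moduleDim_le_zero_of_surjective [IsLocalRing S] [IsLocalRing T]
    [IsNoetherianRing S] (hDE : SatisfiesDE S) (hφ : Function.Surjective φ)
    (hdim : ringDim T = ringDim S) {W : Type u} [AddCommGroup W] [Module T W] [Module.Finite T W]
    [Nontrivial W] (hW : (moduleDepth T W : WithBot ℕ∞) = ringDim T) {M : Type u} [AddCommGroup M]
    [Module S M] [Module.Finite S M] [Nontrivial M] {n : ℕ}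
    (hM : HasProjectiveDimensionLE (ModuleCat.of S M) n) {k : ℕ}
    (hk : IsLocalRing.maximalIdeal S ^ k ≤ RingHom.ker φ ⊔ Module.annihilator S M) :
    moduleDim S M ≤ 0 := by
  obtain ⟨d, hd⟩ := exists_ringKrullDim_eq_natCast S
  obtain ⟨rs, rfl, mem, reg⟩ := exists_isRegular_of_moduleDepth_eq
    (WithBot.coe_injective (hW.trans (hdim.trans hd)))
  let := φ.toAlgebra
  let := Module.compHom W φ
  have : IsScalarTower S T W := ⟨fun a b w => mul_smul (φ a) b w⟩
  have : Module.Finite S W :=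
    have := Module.Finite.of_surjective (Algebra.linearMap S T) hφ
    Module.Finite.trans T W
  have hker : RingHom.ker φ ≤ Module.annihilator S W := fun a ha =>
    Module.mem_annihilator.mpr fun w =>
      (congrArg (· • w) (RingHom.mem_ker.mp ha)).trans (zero_smul T w)
  obtain ⟨rs', rfl, mem', reg'⟩ := exists_isRegular_map_eq hφ mem reg
  rw [List.length_map] at hd
  exact hDE.moduleDim_le_zero hd mem' reg' hM (hk.trans (sup_le_sup_right hker _))

end Quotient

section Localization

variable {R : Type u} [CommRing R]

lemma HasFinitePD.exists_hasProjectiveDimensionLE_localizedModule {N : Type u} [AddCommGroup N]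
    [Module R N] (h : HasFinitePD R N) (S : Submonoid R) :
    ∃ n, HasProjectiveDimensionLE (ModuleCat.of (Localization S) (LocalizedModule S N)) n := by
  obtain ⟨n, hn⟩ := h.exists_hasProjectiveDimensionLE
  have := ModuleCat.localizedModule_hasProjectiveDimensionLE n S (ModuleCat.of R N)
  exact ⟨n, @hasProjectiveDimensionLT_of_iso _ _ _ _ _
    (LinearEquiv.toModuleIso (Shrink.linearEquiv _ _)) _ this⟩

lemma annihilator_localizedModule (S : Submonoid R) (N : Type*) [AddCommGroup N] [Module R N]
    [Module.Finite R N] : Module.annihilator (Localization S) (LocalizedModule S N) =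
      (Module.annihilator R N).map (algebraMap R (Localization S)) := by
  refine le_antisymm (fun x hx => ?_) (Ideal.map_le_iff_le_comap.mpr fun a ha => ?_)
  · obtain ⟨a, t, rfl⟩ := IsLocalization.exists_mk'_eq S x
    have ha : LocalizedModule.mkLinearMap S N ∘ₗ (a • LinearMap.id) =
        LocalizedModule.mkLinearMap S N ∘ₗ 0 := by
      ext n
      have h : algebraMap R (Localization S) a • LocalizedModule.mkLinearMap S N n = 0 := by
        rw [← IsLocalization.mk'_spec' (Localization S) a t, mul_smul,
          Module.mem_annihilator.mp hx, smul_zero]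
      rw [algebraMap_smul, ← map_smul] at h
      exact h.trans (map_zero (LocalizedModule.mkLinearMap S N)).symm
    obtain ⟨c, hc⟩ := Module.Finite.exists_smul_of_comp_eq_of_isLocalizedModule S
      (LocalizedModule.mkLinearMap S N) _ _ ha
    refine (IsLocalization.mk'_mem_map_algebraMap_iff S (Localization S) _ a t).mpr
      ⟨c, c.2, Module.mem_annihilator.mpr fun n => ?_⟩
    rw [mul_smul]
    exact (LinearMap.congr_fun hc n).trans (smul_zero c)
  · refine Module.mem_annihilator.mpr fun w => ?_
    induction w using LocalizedModule.induction_on with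
    | _ n t => rw [algebraMap_smul, LocalizedModule.smul'_mk, Module.mem_annihilator.mp ha,
        LocalizedModule.zero_mk]

lemma mem_minimalPrimes_of_moduleDim_localizedModule_le_zero {q : Ideal R} [q.IsPrime] {N : Type u}
    [AddCommGroup N] [Module R N] [Module.Finite R N] (hq : Module.annihilator R N ≤ q)
    (h : moduleDim (Localization.AtPrime q) (LocalizedModule q.primeCompl N) ≤ 0) :
    q ∈ (Module.annihilator R N).minimalPrimes := by
  rw [moduleDim_le_zero_iff, annihilator_localizedModule] at h
  have hle : (Module.annihilator R N).map (algebraMap R (Localization.AtPrime q)) ≤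
      IsLocalRing.maximalIdeal (Localization.AtPrime q) :=
    (Ideal.map_mono hq).trans_eq Localization.AtPrime.map_eq_maximalIdeal
  obtain ⟨J, hJ, -⟩ := Ideal.exists_minimalPrimes_le hle
  have := IsLocalRing.eq_maximalIdeal (h J hJ)
  rwa [IsLocalization.minimalPrimes_map q.primeCompl, Set.mem_preimage, this,
    Localization.AtPrime.under_maximalIdeal] at hJ

lemma exists_maximalIdeal_pow_le_map_of_mem_minimalPrimes [IsNoetherianRing R] {q I : Ideal R}
    [q.IsPrime] (hq : q ∈ I.minimalPrimes) :
    ∃ k, IsLocalRing.maximalIdeal (Localization.AtPrime q) ^ k ≤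
      I.map (algebraMap R (Localization.AtPrime q)) := by
  refine Ideal.exists_pow_le_of_le_radical_of_fg (Eq.ge ?_) (IsNoetherian.noetherian _)
  rw [IsLocalization.AtPrime.radical_map_of_mem_minimalPrimes _ q I hq,
    Localization.AtPrime.map_eq_maximalIdeal]

lemma mem_minimalPrimes_of_under_mem_minimalPrimes (S : Submonoid R) {A : Type*} [CommRing A]
    [Algebra R A] [IsLocalization S A] {P : Ideal A} (hP : P.under R ∈ minimalPrimes R) :
    P ∈ minimalPrimes A := by
  change P ∈ (⊥ : Ideal A).minimalPrimes
  rwa [← Ideal.map_bot (f := algebraMap R A), IsLocalization.minimalPrimes_map S]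

variable {p q : Ideal R} [q.IsPrime] [(q.map (Ideal.Quotient.mk p)).IsPrime]

lemma exists_surjective_localization_quotient (hpq : p ≤ q) :
    ∃ φ : Localization.AtPrime q →+* Localization.AtPrime (q.map (Ideal.Quotient.mk p)),
      Function.Surjective φ ∧ ∀ x, φ (algebraMap R _ x) = algebraMap (R ⧸ p) _ x := by
  have hcomap : q = (q.map (Ideal.Quotient.mk p)).comap (Ideal.Quotient.mk p) := by
    rw [Ideal.comap_map_mk hpq]
  exact ⟨Localization.localRingHom _ _ (Ideal.Quotient.mk p) hcomap,
    (RingHom.surjectiveOnStalks_of_surjective Ideal.Quotient.mk_surjective).localRingHom_surjective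
      _ _ hcomap, fun x => Localization.localRingHom_to_map _ _ _ hcomap x⟩

lemma under_ker_eq [p.IsPrime]
    {φ : Localization.AtPrime q →+* Localization.AtPrime (q.map (Ideal.Quotient.mk p))}
    (hφ : ∀ x, φ (algebraMap R _ x) = algebraMap (R ⧸ p) _ x) : (RingHom.ker φ).under R = p := by
  ext x
  rw [Ideal.under_def, Ideal.mem_comap, RingHom.mem_ker, hφ, IsLocalization.to_map_eq_zero_iff _
    (q.map (Ideal.Quotient.mk p)).primeCompl_le_nonZeroDivisors, Ideal.Quotient.eq_zero_iff_mem]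

end Localization

lemma exists_mem_minimalPrimes_add_annihilator {R : Type*} [CommRing R] [IsLocalRing R]
    {p : Ideal R} (hp : p ≠ ⊤) (N : Type*) [AddCommGroup N] [Module R N] [Nontrivial N] :
    ∃ q, q ∈ (p + Module.annihilator R N).minimalPrimes := by
  have hN : Module.annihilator R N ≠ ⊤ := Module.annihilator_eq_top_iff.not.mpr
    (not_subsingleton_iff_nontrivial.mpr ‹_›)
  obtain ⟨q, hq, -⟩ := Ideal.exists_minimalPrimes_le
    (sup_le (IsLocalRing.le_maximalIdeal hp) (IsLocalRing.le_maximalIdeal hN))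
  exact ⟨q, hq⟩

theorem stmt_13_general {R : Type u} [CommRing R] [IsNoetherianRing R] {N : Type u}
    [AddCommGroup N] [Module R N] [Module.Finite R N] (hpd : HasFinitePD R N) {p q : Ideal R}
    (hp : p ∈ minimalPrimes R) (hq : q ∈ (p + Module.annihilator R N).minimalPrimes) [q.IsPrime]
    (hequi : IsEquidimensional (Localization.AtPrime q))
    (hDE : SatisfiesDE (Localization.AtPrime q)) [(q.map (Ideal.Quotient.mk p)).IsPrime]
    {W : Type u} [AddCommGroup W] [Module (Localization.AtPrime (q.map (Ideal.Quotient.mk p))) W]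
    [Module.Finite (Localization.AtPrime (q.map (Ideal.Quotient.mk p))) W] [Nontrivial W]
    (hW : (moduleDepth (Localization.AtPrime (q.map (Ideal.Quotient.mk p))) W : WithBot ℕ∞) =
      ringDim (Localization.AtPrime (q.map (Ideal.Quotient.mk p)))) :
    q ∈ (Module.annihilator R N).minimalPrimes := by
  have : p.IsPrime := hp.1.1
  have hNq : Module.annihilator R N ≤ q := le_sup_right.trans hq.1.2
  refine mem_minimalPrimes_of_moduleDim_localizedModule_le_zero hNq ?_
  have : Nontrivial (LocalizedModule q.primeCompl N) :=
    Module.mem_support_iff.mp (Module.mem_support_iff_of_finite (p := ⟨q, ‹_›⟩).mpr hNq)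
  obtain ⟨n, hn⟩ := hpd.exists_hasProjectiveDimensionLE_localizedModule q.primeCompl
  obtain ⟨φ, hφ, hcomm⟩ := exists_surjective_localization_quotient (le_sup_left.trans hq.1.2)
  have hunder : (RingHom.ker φ).under R = p := under_ker_eq hcomm
  have hker : RingHom.ker φ ∈ minimalPrimes (Localization.AtPrime q) :=
    mem_minimalPrimes_of_under_mem_minimalPrimes q.primeCompl (hunder.symm ▸ hp)
  obtain ⟨k, hk⟩ := exists_maximalIdeal_pow_le_map_of_mem_minimalPrimes hq
  refine hDE.moduleDim_le_zero_of_surjective hφ (hequi.ringDim_eq_of_surjective hφ hker) hW hn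
    (hk.trans ?_)
  rw [annihilator_localizedModule, Ideal.add_eq_sup, Ideal.map_sup]
  exact sup_le_sup_right (Ideal.map_le_iff_le_comap.mpr hunder.ge) _

theorem stmt_13 (R : Type u) [CommRing R] [IsLocalRing R] [IsNoetherianRing R]
    (hequiloc : ∀ (q : Ideal R) [q.IsPrime],
      ∀ p ∈ minimalPrimes (Localization.AtPrime q),
        ringDim (Localization.AtPrime q ⧸ p) = ringDim (Localization.AtPrime q))
    (hDEloc : ∀ (q : Ideal R) [q.IsPrime],
      ∀ (A B : Type u) [AddCommGroup A] [Module (Localization.AtPrime q) A]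
        [AddCommGroup B] [Module (Localization.AtPrime q) B]
        [Module.Finite (Localization.AtPrime q) A] [Module.Finite (Localization.AtPrime q) B]
        [Nontrivial A] [Nontrivial B],
        (∀ i : ℕ, 0 < i →
          IsZero (((Tor (ModuleCat.{u} (Localization.AtPrime q)) i).obj
            (ModuleCat.of (Localization.AtPrime q) A)).obj
            (ModuleCat.of (Localization.AtPrime q) B))) →
        moduleDim (Localization.AtPrime q) A + moduleDim (Localization.AtPrime q) B =
          ringDim (Localization.AtPrime q) +
            moduleDim (Localization.AtPrime q) (A ⊗[Localization.AtPrime q] B))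
    (N : Type u) [AddCommGroup N] [Module R N] [Module.Finite R N] [Nontrivial N]
    (hpd : HasFinitePD R N)
    (hMCM : ∀ p ∈ minimalPrimes R, ∀ q ∈ (p + Module.annihilator R N).minimalPrimes,
      ∀ [inst : (Ideal.map (Ideal.Quotient.mk p) q).IsPrime],
      ∃ W : ModuleCat.{u} (Localization.AtPrime (Ideal.map (Ideal.Quotient.mk p) q)),
        Nontrivial W ∧
        Module.Finite (Localization.AtPrime (Ideal.map (Ideal.Quotient.mk p) q)) W ∧
        (moduleDepth (Localization.AtPrime (Ideal.map (Ideal.Quotient.mk p) q)) W :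
            WithBot ℕ∞) =
          ringDim (Localization.AtPrime (Ideal.map (Ideal.Quotient.mk p) q))) :
    ∀ p ∈ minimalPrimes R, ∃ q ∈ (Module.annihilator R N).minimalPrimes, p ≤ q := by
  intro p hp
  obtain ⟨q, hq⟩ := exists_mem_minimalPrimes_add_annihilator hp.1.1.ne_top N
  have := hq.1.1
  have hpq : p ≤ q := le_sup_left.trans hq.1.2
  have hker : RingHom.ker (Ideal.Quotient.mk p) ≤ q := by rwa [Ideal.mk_ker]
  have := Ideal.map_isPrime_of_surjective Ideal.Quotient.mk_surjective hker
  obtain ⟨W, _, _, hW⟩ := hMCM p hp q hq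
  exact ⟨q, stmt_13_general hpd hp hq (hequiloc q) (hDEloc q) hW, hpq⟩
end

section
/- Let R be an unramified regular local ring, i.e., a regular local ring that either contains a field or has mixed characteristic p with p ∉ m² (m the maximal ideal). Let M and N be nonzero finitely generated R-modules with Tor_i^R(M,N) = 0 for all i > 0. Then dim M + dim N = dim R + dim(M ⊗_R N). -/
/-!
STATEMENT 15: Let `R` be an unramified regular local ring (it contains a field, or has mixed
characteristic `p` with `p ∉ m²`). If `M`, `N` are nonzero finitely generated `R`-modules with
`Tor_i^R(M, N) = 0` for all `i > 0`, then `dim M + dim N = dim R + dim (M ⊗_R N)`.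
-/

open CategoryTheory CategoryTheory.Limits

open scoped TensorProduct

universe u

/-- A Noetherian local ring is regular if its maximal ideal can be generated by
(Krull dimension of the ring) many elements. -/
def IsRegularLocal (Q : Type u) [CommRing Q] [IsLocalRing Q] : Prop :=
  IsNoetherianRing Q ∧ ∃ s : Finset Q, Ideal.span (s : Set Q) = IsLocalRing.maximalIdeal Q ∧
    (s.card : WithBot ℕ∞) = ringKrullDim Q

/-- A local ring is unramified if it contains a field (equal characteristic) or has mixed
characteristic `p` with `p ∉ m²`. -/
def IsUnramifiedLocal (R : Type u) [CommRing R] [IsLocalRing R] : Prop :=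
  (∃ K : Subring R, IsField K) ∨
    (CharZero R ∧ ∃ p : ℕ, p.Prime ∧ CharP (IsLocalRing.ResidueField R) p ∧
      (p : R) ∉ IsLocalRing.maximalIdeal R ^ 2)

/-!
For `dim R + dim (M ⊗ N) ≤ dim M + dim N`, choose `P` in the common support of `M` and `N` with
`dim R ⧸ P = dim (M ⊗ N)`. A free resolution of `N` of length `dim R` stays exact after tensoring
with `M`, also over the localization at `P`. Divide `M_P` by a maximal `M_P`-regular sequence, of
length `s ≤ dim M_P`: the maximal ideal becomes associated, so exactness forces the `s`-th syzygy
of `N_P` to be free. Hence `N_P` has depth at least `height P - s`, which gives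
`height P ≤ dim M_P + dim N_P`.

The reverse inequality is Serre's dimension inequality
`dim R ⧸ I + dim R ⧸ J ≤ dim R + dim R ⧸ (I + J)`. It descends along flat local maps with trivial
closed fibre, so `R` may be completed. A complete `R` is a quotient of a power series ring
`W⟦X₁, …, Xₙ⟧` of the same dimension, with `W` a field or, in mixed characteristic, a discrete
valuation ring, which exists because `p ∉ m ^ 2`; the inequality passes to quotients. For primes
`P` and `Q` of `W⟦X⟧`, the completed tensor product over `W` of `W⟦X⟧ ⧸ P` and `W⟦X⟧ ⧸ Q` has
dimension at least `dim W⟦X⟧ ⧸ P + dim W⟦X⟧ ⧸ Q - dim W`, and `W⟦X⟧ ⧸ (P + Q)` is its quotient by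
the `n` elements `Xᵢ ⊗ 1 - 1 ⊗ Xᵢ`, each of which lowers the dimension by at most one.
-/
universe v

section TensorExactResolution

open Function

theorem injective_iff_of_comp_eq_comp {R M M' N N' : Type*} [CommRing R] [AddCommGroup M]
    [Module R M] [AddCommGroup M'] [Module R M'] [AddCommGroup N] [Module R N] [AddCommGroup N']
    [Module R N'] (e : M ≃ₗ[R] N) (e' : M' ≃ₗ[R] N') {f : M →ₗ[R] M'} {g : N →ₗ[R] N'}
    (h : g ∘ₗ e.toLinearMap = e'.toLinearMap ∘ₗ f) : Injective f ↔ Injective g := by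
  rw [← Injective.of_comp_iff' g e.bijective, ← e'.injective.of_comp_iff f]
  exact (congrArg Injective (congrArg DFunLike.coe h)).symm.to_iff

variable (R : Type u) [CommRing R]

/-- `N` has a free resolution `0 → Fₙ → ⋯ → F₀ → N → 0` by free modules, with `Fᵢ` finite for
`i < n`, which stays exact after tensoring with `X`. The resolution is recorded one syzygy at a
time. -/
def HasTensorExactResolution : ℕ → ∀ (N : Type u) (X : Type v) [AddCommGroup N] [Module R N]
    [AddCommGroup X] [Module R X], Prop
  | 0, N, _, _, _, _, _ => Module.Free R N
  | n + 1, N, X, _, _, _, _ => ∃ (k : ℕ) (f : (Fin k → R) →ₗ[R] N), Surjective f ∧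
      Injective ((LinearMap.ker f).subtype.lTensor X) ∧
      HasTensorExactResolution n (LinearMap.ker f) X

/-- For every choice of finite free covers of `N` and of its successive syzygies, the inclusions of
the first `n` syzygies into the covering modules stay injective after tensoring with `X`. -/
def HasTensorExactSyzygies : ℕ → ∀ (N : Type u) (X : Type v) [AddCommGroup N] [Module R N]
    [AddCommGroup X] [Module R X], Prop
  | 0, _, _, _, _, _, _ => True
  | n + 1, N, X, _, _, _, _ => ∀ (k : ℕ) (f : (Fin k → R) →ₗ[R] N), Surjective f →
      Injective ((LinearMap.ker f).subtype.lTensor X) ∧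
      HasTensorExactSyzygies n (LinearMap.ker f) X

variable {R}
variable {N : Type u} {X : Type v} [AddCommGroup N] [Module R N] [AddCommGroup X] [Module R X]

theorem HasTensorExactResolution.of_hasTensorExactSyzygies {Y : Type*} [AddCommGroup Y]
    [Module R Y] {n : ℕ} (h : HasTensorExactResolution R n N X)
    (hY : HasTensorExactSyzygies R n N Y) : HasTensorExactResolution R n N Y := by
  induction n generalizing N with
  | zero => exact h
  | succ n ih =>
    obtain ⟨k, f, hf, -, hker⟩ := h
    exact ⟨k, f, hf, (hY k f hf).1, ih hker (hY k f hf).2⟩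

theorem HasTensorExactSyzygies.self (n : ℕ) (N : Type u) [AddCommGroup N] [Module R N] :
    HasTensorExactSyzygies R n N R := by
  induction n generalizing N with
  | zero => trivial
  | succ n ih =>
    exact fun _ _ _ ↦ ⟨Module.Flat.lTensor_preserves_injective_linearMap _
      (Submodule.subtype_injective _), ih _⟩

theorem quotSMulTopTensorEquivQuotSMulTop_mk_tmul {M : Type*} [AddCommGroup M] [Module R M]
    (x : R) (a : X) (m : M) :
    QuotSMulTop.quotSMulTopTensorEquivQuotSMulTop x M X
      ((Submodule.Quotient.mk a : QuotSMulTop x X) ⊗ₜ[R] m) =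
        Submodule.Quotient.mk (a ⊗ₜ[R] m) := by
  rw [QuotSMulTop.quotSMulTopTensorEquivQuotSMulTop]
  simp only [LinearEquiv.trans_apply]
  rw [LinearEquiv.symm_apply_eq]
  rfl

theorem lTensor_quotSMulTop_injective {Z F N : Type*} [AddCommGroup Z] [Module R Z]
    [AddCommGroup F] [Module R F] [AddCommGroup N] [Module R N]
    {ι : Z →ₗ[R] F} {f : F →ₗ[R] N} (hex : Exact ι f) (hf : Surjective f)
    (hinj : Injective (ι.lTensor X)) {x : R} (hN : IsSMulRegular (X ⊗[R] N) x) :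
    Injective (ι.lTensor (QuotSMulTop x X)) := by
  have hmap : Injective (QuotSMulTop.map x (ι.lTensor X)) := by
    have h := QuotSMulTop.map_first_exact_on_four_term_exact_of_isSMulRegular_last
      ((LinearMap.exact_zero_iff_injective PUnit _).2 hinj) (lTensor_exact X hex hf) hN
    rwa [map_zero, LinearMap.exact_zero_iff_injective] at h
  refine (injective_iff_of_comp_eq_comp
    (QuotSMulTop.quotSMulTopTensorEquivQuotSMulTop x Z X)
    (QuotSMulTop.quotSMulTopTensorEquivQuotSMulTop x F X) (TensorProduct.ext' fun a z ↦ ?_)).2 hmap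
  obtain ⟨a, rfl⟩ := Submodule.Quotient.mk_surjective _ a
  simp [quotSMulTopTensorEquivQuotSMulTop_mk_tmul]

theorem HasTensorExactResolution.quotSMulTop {n : ℕ} {x : R} (hX : IsSMulRegular X x)
    (hN : IsSMulRegular (X ⊗[R] N) x) (h : HasTensorExactResolution R n N X) :
    HasTensorExactResolution R n N (QuotSMulTop x X) := by
  induction n generalizing N with
  | zero => exact h
  | succ n ih =>
    obtain ⟨k, f, hf, hinj, hker⟩ := h
    exact ⟨k, f, hf, lTensor_quotSMulTop_injective f.exact_subtype_ker_map hf hinj hN,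
      ih ((hX.rTensor _).of_injective _ hinj) hker⟩

theorem HasTensorExactSyzygies.quotSMulTop {n : ℕ} {x : R} (hX : IsSMulRegular X x)
    (hN : IsSMulRegular (X ⊗[R] N) x) (h : HasTensorExactSyzygies R n N X) :
    HasTensorExactSyzygies R n N (QuotSMulTop x X) := by
  induction n generalizing N with
  | zero => trivial
  | succ n ih =>
    intro k f hf
    obtain ⟨hinj, hker⟩ := h k f hf
    exact ⟨lTensor_quotSMulTop_injective f.exact_subtype_ker_map hf hinj hN,
      ih ((hX.rTensor _).of_injective _ hinj) hker⟩

end TensorExactResolution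

section AssociatedPrimes

open Function IsLocalRing

variable {R : Type u} [CommRing R] [IsNoetherianRing R]

theorem exists_isSMulRegular_or_exists_associatedPrimes_ge (M : Type*) [AddCommGroup M]
    [Module R M] [Module.Finite R M] (I : Ideal R) :
    (∃ x ∈ I, IsSMulRegular M x) ∨ ∃ p ∈ associatedPrimes R M, I ≤ p := by
  rw [or_iff_not_imp_left]
  intro h
  push Not at h
  refine (I.subset_union_prime_finite (associatedPrimes.finite R M) (f := id) 0 0
    fun _ hp _ _ ↦ hp.isPrime).1 ?_
  exact fun x hx ↦ (biUnion_associatedPrimes_eq_compl_regular R M).ge (h x hx)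

variable [IsLocalRing R]

theorem exists_isSMulRegular_of_maximalIdeal_notMem_associatedPrimes {M : Type*}
    [AddCommGroup M] [Module R M] [Module.Finite R M]
    (h : maximalIdeal R ∉ associatedPrimes R M) : ∃ x ∈ maximalIdeal R, IsSMulRegular M x := by
  refine (exists_isSMulRegular_or_exists_associatedPrimes_ge M (maximalIdeal R)).resolve_right ?_
  rintro ⟨p, hp, hle⟩
  exact h ((le_maximalIdeal hp.isPrime.ne_top).antisymm hle ▸ hp)

end AssociatedPrimes

section LocalResolution

open Function IsLocalRing RingTheory.Sequence

variable {R : Type u} [CommRing R] [IsNoetherianRing R] [IsLocalRing R]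
variable {N : Type u} {X : Type v} [AddCommGroup N] [Module R N] [AddCommGroup X] [Module R X]

theorem free_of_lTensor_injective_of_maximalIdeal_mem_associatedPrimes {Z F N : Type*}
    [AddCommGroup Z] [Module R Z] [AddCommGroup F] [Module R F] [AddCommGroup N] [Module R N]
    [Module.Finite R Z] [Module.Finite R F] [Module.Free R F] [Module.Flat R Z] {ι : Z →ₗ[R] F}
    {f : F →ₗ[R] N} (hex : Exact ι f) (hf : Surjective f) (hinj : Injective (ι.lTensor X))
    (hX : maximalIdeal R ∈ associatedPrimes R X) : Module.Free R N := by
  obtain ⟨-, (g : ResidueField R →ₗ[R] X), hg⟩ :=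
    (isAssociatedPrime_iff_exists_injective_linearMap _ _).1 hX
  refine Module.free_of_lTensor_residueField_injective ι f hf hex ?_
  have hgZ : Injective (g.rTensor Z) := Module.Flat.rTensor_preserves_injective_linearMap g hg
  have hcomp : g.rTensor F ∘ₗ ι.lTensor (ResidueField R) = ι.lTensor X ∘ₗ g.rTensor Z := by
    rw [LinearMap.rTensor_comp_lTensor, LinearMap.lTensor_comp_rTensor]
  refine Injective.of_comp (f := g.rTensor F) ?_
  rw [← LinearMap.coe_comp, hcomp]
  exact hinj.comp hgZ

namespace HasTensorExactResolution

theorem free_of_maximalIdeal_mem_associatedPrimes {n : ℕ}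
    (hX : maximalIdeal R ∈ associatedPrimes R X) (h : HasTensorExactResolution R n N X) :
    Module.Free R N := by
  induction n generalizing N with
  | zero => exact h
  | succ n ih =>
    obtain ⟨k, f, hf, hinj, hker⟩ := h
    have := ih hker
    exact free_of_lTensor_injective_of_maximalIdeal_mem_associatedPrimes
      f.exact_subtype_ker_map hf hinj hX

theorem exists_le_supportDim [Module.Finite R X] [Nontrivial X] {n : ℕ}
    (h : HasTensorExactResolution R n N X) :
    ∃ s : ℕ, HasTensorExactResolution R s N R ∧ (s : WithBot ℕ∞) ≤ Module.supportDim R X := by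
  have hdim (Y : Type v) [AddCommGroup Y] [Module R Y] [Nontrivial Y] :
      ((0 : ℕ) : WithBot ℕ∞) ≤ Module.supportDim R Y := by
    rw [← WithBot.coe_unbot _ (Module.supportDim_ne_bot_of_nontrivial R Y)]
    exact_mod_cast bot_le
  induction n generalizing N X with
  | zero => exact ⟨0, h, hdim X⟩
  | succ n ih =>
    by_cases hX : maximalIdeal R ∈ associatedPrimes R X
    · exact ⟨0, h.free_of_maximalIdeal_mem_associatedPrimes hX, hdim X⟩
    · obtain ⟨x, hx, hreg⟩ := exists_isSMulRegular_of_maximalIdeal_notMem_associatedPrimes hX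
      obtain ⟨k, f, hf, hinj, hker⟩ := h
      have := nontrivial_quotSMulTop_of_mem_maximalIdeal X hx
      obtain ⟨s, hs, hle⟩ := ih (hker.quotSMulTop hreg ((hreg.rTensor _).of_injective _ hinj))
      refine ⟨s + 1, ⟨k, f, hf, Module.Flat.lTensor_preserves_injective_linearMap _
        (Submodule.subtype_injective _), hs⟩, ?_⟩
      rw [← Module.supportDim_quotSMulTop_succ_eq_supportDim hreg hx]
      push_cast
      gcongr

end HasTensorExactResolution

theorem HasTensorExactSyzygies.hasTensorExactResolution_of_isWeaklyRegular [Module.Finite R N]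
    {rs : List R} (hrs : IsWeaklyRegular X rs)
    (e : (X ⧸ Ideal.ofList rs • (⊤ : Submodule R X)) ≃ₗ[R] ResidueField R)
    (h : HasTensorExactSyzygies R (rs.length + 1) N X) :
    HasTensorExactResolution R rs.length N R := by
  induction rs generalizing N X with
  | nil =>
    obtain ⟨k, f, hf⟩ := Module.Finite.exists_fin' R N
    let e' : X ≃ₗ[R] ResidueField R := (Submodule.quotEquivOfEqBot _ (by simp)).symm ≪≫ₗ e
    refine Module.free_of_lTensor_residueField_injective (LinearMap.ker f).subtype f hf
      f.exact_subtype_ker_map ?_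
    refine (injective_iff_of_comp_eq_comp (e'.rTensor _) (e'.rTensor _)
      (TensorProduct.ext' fun a b ↦ ?_)).1 (h k f hf).1
    simp
  | cons x rs ih =>
    rw [isWeaklyRegular_cons_iff] at hrs
    obtain ⟨k, f, hf⟩ := Module.Finite.exists_fin' R N
    obtain ⟨hinj, hker⟩ := h k f hf
    exact ⟨k, f, hf, Module.Flat.lTensor_preserves_injective_linearMap _
      (Submodule.subtype_injective _), ih hrs.2
        ((Submodule.quotOfListConsSMulTopEquivQuotSMulTopInner X x rs).symm ≪≫ₗ e)
        (hker.quotSMulTop hrs.1 ((hrs.1.rTensor _).of_injective _ hinj))⟩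

theorem hasTensorExactResolution_self_of_isWeaklyRegular (N : Type u) [AddCommGroup N] [Module R N]
    [Module.Finite R N] {rs : List R} (hrs : IsWeaklyRegular R rs)
    (hm : Ideal.ofList rs = maximalIdeal R) : HasTensorExactResolution R rs.length N R :=
  (HasTensorExactSyzygies.self (rs.length + 1) N).hasTensorExactResolution_of_isWeaklyRegular hrs
    (Submodule.quotEquivOfEq _ _ (by rw [← hm]; simp))

end LocalResolution

section TorVanishing

open Function

variable {R : Type u} [CommRing R]

theorem isZero_tor_succ_iff_exact {M N : ModuleCat.{u} R} (P : ProjectiveResolution N) (i : ℕ) :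
    IsZero (((Tor (ModuleCat.{u} R) (i + 1)).obj M).obj N) ↔
      Exact ((P.complex.d (i + 2) (i + 1)).hom.lTensor M)
        ((P.complex.d (i + 1) i).hom.lTensor M) := by
  have e := P.isoLeftDerivedObj ((MonoidalCategory.tensoringLeft (ModuleCat.{u} R)).obj M) (i + 1)
  refine (e.isZero_iff.trans (HomologicalComplex.exactAt_iff_isZero_homology _ _).symm).trans ?_
  rw [HomologicalComplex.exactAt_iff' _ (i + 2) (i + 1) i (by simp) (by simp),
    ShortComplex.ShortExact.moduleCat_exact_iff_function_exact]
  rfl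

theorem exists_projectiveResolution_of_exact {N : ModuleCat.{u} R}
    (C : ChainComplex (ModuleCat.{u} R) ℕ) (hproj : ∀ n, Projective (C.X n)) (f : C.X 0 ⟶ N)
    (h0 : C.d 1 0 ≫ f = 0) (hf : Surjective f.hom) (hex : Exact (C.d 1 0).hom f.hom)
    (hC : ∀ n, Exact (C.d (n + 2) (n + 1)).hom (C.d (n + 1) n).hom) :
    ∃ Q : ProjectiveResolution N, Q.complex = C := by
  refine ⟨{ complex := C
            projective := hproj
            π := (ChainComplex.toSingle₀Equiv _ _).symm ⟨f, h0⟩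
            quasiIso := ⟨fun n ↦ ?_⟩ }, rfl⟩
  cases n with
  | zero =>
    rw [ChainComplex.quasiIsoAt₀_iff,
      ShortComplex.quasiIso_iff_of_zeros' _ (C.shape _ _ (by simp)) rfl rfl]
    refine (ShortComplex.exact_and_epi_g_iff_of_iso (S₂ := ShortComplex.mk (C.d 1 0) f h0)
      (ShortComplex.isoMk (Iso.refl _) (Iso.refl _) (Iso.refl _) (by simp) (by simp))).2 ⟨?_, ?_⟩
    · exact (ShortComplex.ShortExact.moduleCat_exact_iff_function_exact _).2 hex
    · exact (ModuleCat.epi_iff_surjective _).2 hf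
  | succ n =>
    rw [quasiIsoAt_iff_exactAt' _ _ (ChainComplex.exactAt_succ_single_obj _ _),
      HomologicalComplex.exactAt_iff' _ (n + 2) (n + 1) n (by simp) (by simp),
      ShortComplex.ShortExact.moduleCat_exact_iff_function_exact]
    exact hC n

theorem exists_projectiveResolution_of_ker {F N : Type u} [AddCommGroup F] [Module R F]
    [AddCommGroup N] [Module R N] [Module.Projective R F] {f : F →ₗ[R] N}
    (hf : Surjective f) (P : ProjectiveResolution (ModuleCat.of R (LinearMap.ker f))) :
    ∃ (Q : ProjectiveResolution (ModuleCat.of R N)) (p : P.complex.X 0 →ₗ[R] LinearMap.ker f)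
      (w : P.complex.d 1 0 ≫ ModuleCat.ofHom ((LinearMap.ker f).subtype ∘ₗ p) = 0),
      Surjective p ∧ Exact (P.complex.d 1 0).hom p ∧
      Q.complex = P.complex.augment (ModuleCat.ofHom ((LinearMap.ker f).subtype ∘ₗ p)) w := by
  let p : P.complex.X 0 ⟶ ModuleCat.of R (LinearMap.ker f) :=
    (ChainComplex.toSingle₀Equiv P.complex _ P.π).1
  have hex : Exact (P.complex.d 1 0).hom p.hom :=
    (ShortComplex.ShortExact.moduleCat_exact_iff_function_exact _).1 P.exact₀
  have hp : Surjective p.hom :=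
    (ModuleCat.epi_iff_surjective _).1 (inferInstance : Epi (P.π.f 0))
  have w : P.complex.d 1 0 ≫ ModuleCat.ofHom ((LinearMap.ker f).subtype ∘ₗ p.hom) = 0 := by
    ext x
    exact congrArg Subtype.val (hex.apply_apply_eq_zero x)
  refine (exists_projectiveResolution_of_exact (N := ModuleCat.of R N)
    (P.complex.augment (ModuleCat.ofHom ((LinearMap.ker f).subtype ∘ₗ p.hom)) w) ?_
    (ModuleCat.ofHom f) ?_ hf ?_ ?_).imp fun Q hQ ↦ ⟨p.hom, w, hp, hex, hQ⟩
  · rintro (_ | n)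
    exacts [(IsProjective.iff_projective (R := R) F).1 inferInstance, P.projective n]
  · ext x
    exact (p.hom x).2
  · intro y
    refine ⟨fun hy ↦ ?_, ?_⟩
    · obtain ⟨z, hz⟩ := hp ⟨y, hy⟩
      exact ⟨z, congrArg Subtype.val hz⟩
    · rintro ⟨z, rfl⟩
      exact (p.hom z).2
  · rintro (_ | n)
    · exact fun y ↦ Subtype.ext_iff.symm.trans (hex y)
    · exact (ShortComplex.ShortExact.moduleCat_exact_iff_function_exact _).1 (P.exact_succ n)

theorem lTensor_ker_subtype_injective_and_isZero_tor_ker {M F N : Type u} [AddCommGroup M]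
    [Module R M] [AddCommGroup F] [Module R F] [AddCommGroup N] [Module R N] [Module.Projective R F]
    {f : F →ₗ[R] N} (hf : Surjective f) (htor : ∀ i : ℕ, 0 < i →
      IsZero (((Tor (ModuleCat.{u} R) i).obj (ModuleCat.of R M)).obj (ModuleCat.of R N))) :
    Injective ((LinearMap.ker f).subtype.lTensor M) ∧
    ∀ i : ℕ, 0 < i → IsZero (((Tor (ModuleCat.{u} R) i).obj (ModuleCat.of R M)).obj
      (ModuleCat.of R (LinearMap.ker f))) := by
  let P := ProjectiveResolution.of (ModuleCat.of R (LinearMap.ker f))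
  obtain ⟨Q, p, w, hp, hex, hQ⟩ := exists_projectiveResolution_of_ker hf P
  have key (i : ℕ) := (isZero_tor_succ_iff_exact Q i).1 (htor (i + 1) i.succ_pos)
  rw [hQ] at key
  refine ⟨(injective_iff_map_eq_zero _).2 fun z hz ↦ ?_, fun i hi ↦ ?_⟩
  · have h0 : Exact ((P.complex.d 1 0).hom.lTensor M)
      (((LinearMap.ker f).subtype ∘ₗ p).lTensor M) := key 0
    obtain ⟨y, rfl⟩ := LinearMap.lTensor_surjective M hp z
    rw [← LinearMap.comp_apply, ← LinearMap.lTensor_comp] at hz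
    exact (lTensor_exact M hex hp y).2 ((h0 y).1 hz)
  · obtain ⟨i, rfl⟩ := Nat.exists_eq_succ_of_ne_zero hi.ne'
    exact (isZero_tor_succ_iff_exact P i).2 (key (i + 1))

theorem hasTensorExactSyzygies_of_isZero_tor {M N : Type u} [AddCommGroup M] [Module R M]
    [AddCommGroup N] [Module R N] (n : ℕ) (h : ∀ i : ℕ, 0 < i →
      IsZero (((Tor (ModuleCat.{u} R) i).obj (ModuleCat.of R M)).obj (ModuleCat.of R N))) :
    HasTensorExactSyzygies R n N M := by
  induction n generalizing N with
  | zero => trivial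
  | succ n ih =>
    intro k f hf
    obtain ⟨hinj, hker⟩ := lTensor_ker_subtype_injective_and_isZero_tor_ker hf h
    exact ⟨hinj, ih hker⟩

end TorVanishing

section BaseChange

open Function TensorProduct.AlgebraTensorModule

variable {R : Type u} [CommRing R] {X : Type v} [AddCommGroup X] [Module R X]

namespace HasTensorExactResolution

theorem of_linearEquiv {n : ℕ} {N N' : Type u} [AddCommGroup N] [Module R N] [AddCommGroup N']
    [Module R N'] (e : N ≃ₗ[R] N') (h : HasTensorExactResolution R n N X) :
    HasTensorExactResolution R n N' X := by
  cases n with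
  | zero =>
    have : Module.Free R N := h
    exact Module.Free.of_equiv e
  | succ n =>
    obtain ⟨k, f, hf, hinj, hker⟩ := h
    refine ⟨k, e.toLinearMap ∘ₗ f, e.surjective.comp hf, ?_⟩
    rw [LinearEquiv.ker_comp]
    exact ⟨hinj, hker⟩

theorem of_exact {Z F N : Type u} [AddCommGroup Z] [Module R Z] [AddCommGroup F] [Module R F]
    [AddCommGroup N] [Module R N] {n k : ℕ} (e : (Fin k → R) ≃ₗ[R] F) {ι : Z →ₗ[R] F}
    {f : F →ₗ[R] N} (hι : Injective ι) (hex : Exact ι f) (hf : Surjective f)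
    (hinj : Injective (ι.lTensor X)) (h : HasTensorExactResolution R n Z X) :
    HasTensorExactResolution R (n + 1) N X := by
  have hexe : Exact (e.symm.toLinearMap ∘ₗ ι) (f ∘ₗ e.toLinearMap) := fun y ↦
    (hex (e y)).trans ⟨fun ⟨z, hz⟩ ↦ ⟨z, by simp [hz]⟩, fun ⟨z, hz⟩ ↦ ⟨z, by simp [← hz]⟩⟩
  let g : Z ≃ₗ[R] LinearMap.ker (f ∘ₗ e.toLinearMap) :=
    LinearEquiv.ofInjective (e.symm.toLinearMap ∘ₗ ι) (e.symm.injective.comp hι) ≪≫ₗ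
      LinearEquiv.ofEq _ _ hexe.linearMap_ker_eq.symm
  refine ⟨k, f ∘ₗ e.toLinearMap, hf.comp e.surjective, ?_, h.of_linearEquiv g⟩
  exact (injective_iff_of_comp_eq_comp (g.lTensor X) (e.symm.lTensor X)
    (TensorProduct.ext' fun a b ↦ by simp [g])).1 hinj

end HasTensorExactResolution

variable (S : Type u) [CommRing S] [Algebra R S] [Module.Flat R S]

theorem lTensor_baseChange_injective {Z F : Type*} [AddCommGroup Z] [Module R Z] [AddCommGroup F]
    [Module R F] {ι : Z →ₗ[R] F} (hinj : Injective (ι.lTensor X)) :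
    Injective ((ι.baseChange S).lTensor (S ⊗[R] X)) := by
  have hbase : Injective ((ι.lTensor X).baseChange S) :=
    Module.Flat.lTensor_preserves_injective_linearMap _ hinj
  refine (injective_iff_of_comp_eq_comp
    (N := (S ⊗[R] X) ⊗[S] (S ⊗[R] Z)) (N' := (S ⊗[R] X) ⊗[S] (S ⊗[R] F))
    (distribBaseChange R S X Z) (distribBaseChange R S X F) ?_).1 hbase
  ext x z
  simp

theorem HasTensorExactResolution.baseChange {n : ℕ} {N : Type u} [AddCommGroup N] [Module R N]
    (h : HasTensorExactResolution R n N X) :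
    HasTensorExactResolution S n (S ⊗[R] N) (S ⊗[R] X) := by
  induction n generalizing N with
  | zero =>
    have : Module.Free R N := h
    exact (inferInstance : Module.Free S (S ⊗[R] N))
  | succ n ih =>
    obtain ⟨k, f, hf, hinj, hker⟩ := h
    exact .of_exact (TensorProduct.piScalarRight R S S (Fin k)).symm
      (ι := (LinearMap.ker f).subtype.baseChange S) (f := f.baseChange S)
      (Module.Flat.lTensor_preserves_injective_linearMap _ (Submodule.subtype_injective _))
      (lTensor_exact S f.exact_subtype_ker_map hf) (LinearMap.lTensor_surjective S hf)
      (lTensor_baseChange_injective S hinj) (ih hker)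

end BaseChange

section Depth

open Function IsLocalRing RingTheory.Sequence Abelian Pointwise

variable (R : Type u) [CommRing R] [IsLocalRing R]

/-- `M` has depth at least `n`, in the cohomological form that `Extⁱ(k, M) = 0` for all `i < n`,
where `k = R ⧸ 𝔪` is the residue field of `R`. -/
def HasDepthGE (n : ℕ) (M : Type u) [AddCommGroup M] [Module R M] : Prop :=
  ∀ i < n, Subsingleton (Ext (ModuleCat.of R (R ⧸ maximalIdeal R)) (ModuleCat.of R M) i)

variable {R}

theorem HasDepthGE.of_exact {K F N : Type u} [AddCommGroup K] [Module R K] [AddCommGroup F]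
    [Module R F] [AddCommGroup N] [Module R N] {ι : K →ₗ[R] F} {f : F →ₗ[R] N} {n : ℕ}
    (hι : Injective ι) (hex : Exact ι f) (hf : Surjective f) (hF : HasDepthGE R n F)
    (hK : HasDepthGE R (n + 1) K) : HasDepthGE R n N := by
  intro i hi
  have hS := ModuleCat.shortComplex_shortExact
    (ModuleCat.shortComplexOfCompEqZero ι f hex.linearMap_comp_eq_zero) hex hι hf
  exact AddCommGrpCat.subsingleton_of_isZero <| ShortComplex.Exact.isZero_of_both_zeros
    (Ext.covariant_sequence_exact₃' (ModuleCat.of R (R ⧸ maximalIdeal R)) hS i (i + 1) rfl)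
    ((AddCommGrpCat.isZero_of_iff_subsingleton.2 (hF i hi)).eq_zero_of_src _)
    ((AddCommGrpCat.isZero_of_iff_subsingleton.2 (hK (i + 1) (by omega))).eq_zero_of_tgt _)

theorem HasDepthGE.quotSMulTop {M : Type u} [AddCommGroup M] [Module R M] {n : ℕ}
    (h : HasDepthGE R (n + 1) M) {x : R} (hx : IsSMulRegular M x) :
    HasDepthGE R n (QuotSMulTop x M) := by
  have hex : Exact (LinearMap.lsmul R M x) (Submodule.mkQ (x • (⊤ : Submodule R M))) := by
    rw [LinearMap.exact_iff, Submodule.ker_mkQ, ← Submodule.map_top]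
    rfl
  exact .of_exact (ι := LinearMap.lsmul R M x) hx hex (Submodule.mkQ_surjective _)
    (fun i hi ↦ h i (by omega)) h

theorem HasDepthGE.maximalIdeal_notMem_associatedPrimes {M : Type u} [AddCommGroup M] [Module R M]
    [IsNoetherianRing R] {n : ℕ} (h : HasDepthGE R (n + 1) M) :
    maximalIdeal R ∉ associatedPrimes R M := by
  intro hm
  obtain ⟨-, (g : R ⧸ maximalIdeal R →ₗ[R] M), hg⟩ :=
    (isAssociatedPrime_iff_exists_injective_linearMap _ _).1 hm
  have := h 0 n.succ_pos
  have : Subsingleton (R ⧸ maximalIdeal R →ₗ[R] M) :=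
    (Ext.addEquiv₀.trans (ModuleCat.homAddEquiv (M := ModuleCat.of R (R ⧸ maximalIdeal R))
      (N := ModuleCat.of R M))).symm.subsingleton
  have hg1 : g 1 = g 0 := by rw [Subsingleton.elim g 0, LinearMap.zero_apply, LinearMap.zero_apply]
  exact one_ne_zero (α := R ⧸ maximalIdeal R) (hg hg1)

variable [IsNoetherianRing R]

theorem hasDepthGE_of_isWeaklyRegular {M : Type u} [AddCommGroup M] [Module R M] [Module.Finite R M]
    {rs : List R} (hrs : IsWeaklyRegular M rs) (hm : ∀ r ∈ rs, r ∈ maximalIdeal R) :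
    HasDepthGE R rs.length M := by
  cases subsingleton_or_nontrivial M
  · have hM := ModuleCat.isZero_of_subsingleton (ModuleCat.of R M)
    refine fun i _ ↦ subsingleton_of_forall_eq 0 fun e ↦ ?_
    rw [← Ext.comp_mk₀_id e, hM.eq_of_src (𝟙 _) 0, Ext.mk₀_zero, Ext.comp_zero]
  · have hsupp : Module.support R (R ⧸ maximalIdeal R) ⊆
        PrimeSpectrum.zeroLocus (maximalIdeal R) := by
      rw [Module.support_eq_zeroLocus, Ideal.annihilator_quotient]
    exact ModuleCat.subsingleton_ext_of_exists_isRegular (maximalIdeal R)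
      (ModuleCat.of R (R ⧸ maximalIdeal R)) hsupp (ModuleCat.of R M)
      (Submodule.top_ne_ideal_smul_of_le_jacobson_annihilator
        (maximalIdeal_le_jacobson _)).symm.lt_top rs hm
      (IsRegular.of_isWeaklyRegular_of_mem_maximalIdeal M hm hrs)

theorem HasTensorExactResolution.hasDepthGE {N : Type u} {X : Type v} [AddCommGroup N] [Module R N]
    [AddCommGroup X] [Module R X] [Module.Finite R N] {n m : ℕ}
    (h : HasTensorExactResolution R n N X) {rs : List R} (hrs : IsWeaklyRegular R rs)
    (hm : ∀ r ∈ rs, r ∈ maximalIdeal R) (hle : m + n ≤ rs.length) : HasDepthGE R m N := by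
  have hfree (F : Type u) [AddCommGroup F] [Module R F] [Module.Finite R F] [Module.Free R F] :
      HasDepthGE R rs.length F := by
    refine hasDepthGE_of_isWeaklyRegular ?_ hm
    exact ((TensorProduct.rid R F).isWeaklyRegular_congr rs).1 hrs.isWeaklyRegular_lTensor
  induction n generalizing N m with
  | zero =>
    have : Module.Free R N := h
    exact fun i hi ↦ hfree N i (by omega)
  | succ n ih =>
    obtain ⟨k, f, hf, -, hker⟩ := h
    exact .of_exact (Submodule.subtype_injective _) f.exact_subtype_ker_map hf
      (fun i hi ↦ hfree (Fin k → R) i (by omega)) (ih hker (by omega))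

theorem exists_mem_associatedPrimes_quotSMulTop_ge {M : Type*} [AddCommGroup M] [Module R M]
    [Module.Finite R M] {x : R} (hx : IsSMulRegular M x) (hxm : x ∈ maximalIdeal R) {p : Ideal R}
    (hp : p ∈ associatedPrimes R M) :
    ∃ q ∈ associatedPrimes R (QuotSMulTop x M), p ⊔ Ideal.span {x} ≤ q := by
  obtain ⟨hprime, v, hv⟩ := isAssociatedPrime_iff.1 hp
  let U := Submodule.torsionBySet R M p
  have hvU : v ∈ U := by
    rw [Submodule.mem_torsionBySet_iff]
    exact fun y ↦ by simpa [Submodule.mem_colon_singleton] using hv.le y.2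
  obtain ⟨u, huU, hux⟩ : ∃ u ∈ U, u ∉ x • (⊤ : Submodule R M) := by
    by_contra! hc
    have hle : U ≤ Ideal.span {x} • U := by
      intro u hu
      obtain ⟨w, -, rfl⟩ := (Submodule.mem_smul_pointwise_iff_exists _ _ _).1 (hc u hu)
      rw [Submodule.ideal_span_singleton_smul]
      refine Submodule.smul_mem_pointwise_smul _ _ _ ((Submodule.mem_torsionBySet_iff _ _).2 ?_)
      intro y
      refine hx.right_eq_zero_of_smul ?_
      rw [smul_comm]
      exact (Submodule.mem_torsionBySet_iff _ _).1 hu y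
    have hU : U = ⊥ := Submodule.eq_bot_of_le_smul_of_le_jacobson_bot _ U
      (IsNoetherian.noetherian U) hle (by
        rw [jacobson_eq_maximalIdeal _ bot_ne_top]
        simpa [Ideal.span_le] using hxm)
    have hv0 : v = 0 := by simpa [hU] using hvU
    exact hprime.ne_top (hv.trans (by simp [hv0]))
  obtain ⟨q, hq, hle⟩ := exists_le_isAssociatedPrime_of_isNoetherianRing R
    (Submodule.Quotient.mk u : QuotSMulTop x M) (by rwa [Ne, Submodule.Quotient.mk_eq_zero])
  refine ⟨q, hq, sup_le (fun y hy ↦ hle ?_) ((Ideal.span_singleton_le_iff_mem _).2 (hle ?_))⟩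
  · rw [Submodule.mem_colon_singleton, ← Submodule.Quotient.mk_smul,
      (Submodule.mem_torsionBySet_iff _ _).1 huU ⟨y, hy⟩, Submodule.Quotient.mk_zero]
    exact zero_mem _
  · rw [Submodule.mem_colon_singleton, ← Submodule.Quotient.mk_smul, Submodule.mem_bot,
      Submodule.Quotient.mk_eq_zero]
    exact Submodule.smul_mem_pointwise_smul _ _ _ trivial

/-- Ischebeck's theorem. -/
theorem HasDepthGE.le_ringKrullDim_quotient {M : Type u} [AddCommGroup M] [Module R M]
    [Module.Finite R M] {n : ℕ} (h : HasDepthGE R n M) {p : Ideal R}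
    (hp : p ∈ associatedPrimes R M) : (n : WithBot ℕ∞) ≤ ringKrullDim (R ⧸ p) := by
  have hprime := hp.isPrime
  induction n generalizing M p with
  | zero => exact_mod_cast ringKrullDim_nonneg_of_nontrivial
  | succ n ih =>
    obtain ⟨x, hxm, hx⟩ := exists_isSMulRegular_of_maximalIdeal_notMem_associatedPrimes
      h.maximalIdeal_notMem_associatedPrimes
    have hxp : x ∉ p := fun hxp ↦
      (biUnion_associatedPrimes_eq_compl_regular R M).le (Set.mem_biUnion hp hxp) hx
    obtain ⟨q, hq, hle⟩ := exists_mem_associatedPrimes_quotSMulTop_ge hx hxm hp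
    obtain ⟨hpq, hxq⟩ := sup_le_iff.1 hle
    rw [Ideal.span_singleton_le_iff_mem] at hxq
    have hx0 : Ideal.Quotient.mk p x ∈ nonZeroDivisors (R ⧸ p) :=
      mem_nonZeroDivisors_of_ne_zero (by rwa [Ne, Ideal.Quotient.eq_zero_iff_mem])
    calc ((n + 1 : ℕ) : WithBot ℕ∞) ≤ ringKrullDim (R ⧸ q) + 1 := by
          push_cast
          gcongr
          exact ih (h.quotSMulTop hx) hq hq.isPrime
      _ ≤ ringKrullDim (R ⧸ p) := ringKrullDim_succ_le_of_surjective (Ideal.Quotient.factor hpq)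
          (Ideal.Quotient.factor_surjective hpq) hx0
          (by simpa using Ideal.Quotient.eq_zero_iff_mem.2 hxq)

theorem HasDepthGE.exists_isWeaklyRegular {M : Type u} [AddCommGroup M] [Module R M]
    [Module.Finite R M] {n : ℕ} (h : HasDepthGE R n M) (P : Ideal R) [P.IsPrime] :
    ∃ rs : List R, (∀ r ∈ rs, r ∈ P) ∧ IsWeaklyRegular M rs ∧
      (n : WithBot ℕ∞) ≤ rs.length + ringKrullDim (R ⧸ P) := by
  induction n generalizing M with
  | zero =>
    exact ⟨[], by simp, .nil R M, by simpa using ringKrullDim_nonneg_of_nontrivial (R := R ⧸ P)⟩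
  | succ n ih =>
    obtain ⟨x, hxP, hx⟩ | ⟨q, hq, hPq⟩ := exists_isSMulRegular_or_exists_associatedPrimes_ge M P
    · obtain ⟨rs, hmem, hrs, hle⟩ := ih (h.quotSMulTop hx)
      refine ⟨x :: rs, by simpa using ⟨hxP, hmem⟩, .cons hx hrs, ?_⟩
      rw [List.length_cons]
      push_cast
      rw [add_right_comm]
      gcongr
    · refine ⟨[], by simp, .nil R M, ?_⟩
      simpa using (h.le_ringKrullDim_quotient hq).trans
        (ringKrullDim_le_of_surjective _ (Ideal.Quotient.factor_surjective hPq))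

end Depth

section Height

open IsLocalRing RingTheory.Sequence

theorem length_le_height_of_isWeaklyRegular {R : Type*} [CommRing R] [IsNoetherianRing R]
    {P : Ideal R} [P.IsPrime] {rs : List R} (h : IsWeaklyRegular R rs) (hrs : ∀ r ∈ rs, r ∈ P) :
    (rs.length : WithBot ℕ∞) ≤ (P.height : WithBot ℕ∞) := by
  let A := Localization.AtPrime P
  have hreg := h.isRegular_of_isLocalization_of_mem A P hrs
  have : Nontrivial (A ⧸ Ideal.ofList (rs.map (algebraMap R A))) :=
    Ideal.Quotient.nontrivial_iff.2 fun htop ↦ hreg.2 (by simp [htop])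
  rw [← IsLocalization.AtPrime.ringKrullDim_eq_height P A,
    ← ringKrullDim_add_length_eq_ringKrullDim_of_isRegular _ hreg, List.length_map]
  exact le_add_of_nonneg_left ringKrullDim_nonneg_of_nontrivial

theorem HasDepthGE.le_height_add_ringKrullDim_quotient {R : Type u} [CommRing R] [IsLocalRing R]
    [IsNoetherianRing R] {n : ℕ} (h : HasDepthGE R n R) (P : Ideal R) [P.IsPrime] :
    (n : WithBot ℕ∞) ≤ P.height + ringKrullDim (R ⧸ P) := by
  obtain ⟨rs, hmem, hrs, hle⟩ := h.exists_isWeaklyRegular P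
  refine hle.trans ?_
  gcongr
  exact length_le_height_of_isWeaklyRegular hrs hmem

end Height

section RegularLocalRing

open IsLocalRing RingTheory.Sequence

variable {R : Type*} [CommRing R] [IsLocalRing R]

theorem isLocalRing_quotient {I : Ideal R} (hI : I ≠ ⊤) : IsLocalRing (R ⧸ I) :=
  have := Ideal.Quotient.nontrivial_iff.2 hI
  .of_surjective' _ Ideal.Quotient.mk_surjective

theorem isLocalRing_quotient_span_singleton {x : R} (hx : x ∈ maximalIdeal R) :
    IsLocalRing (R ⧸ Ideal.span {x}) :=
  isLocalRing_quotient (Ideal.span_singleton_ne_top ((mem_maximalIdeal x).1 hx))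

theorem map_mk_maximalIdeal (I : Ideal R) [IsLocalRing (R ⧸ I)] :
    (maximalIdeal R).map (Ideal.Quotient.mk I) = maximalIdeal (R ⧸ I) :=
  map_maximalIdeal_of_surjective _ Ideal.Quotient.mk_surjective

theorem exists_span_singleton_sup_span_erase_eq_maximalIdeal [DecidableEq R] {s : Finset R}
    (hs : Ideal.span (s : Set R) = maximalIdeal R) {x : R} (hx : x ∈ maximalIdeal R)
    (hx2 : x ∉ maximalIdeal R ^ 2) :
    ∃ y ∈ s, Ideal.span {x} ⊔ Ideal.span (s.erase y : Set R) = maximalIdeal R := by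
  obtain ⟨a, -, ha⟩ := Submodule.mem_span_finset.1 (hs ▸ hx : x ∈ Ideal.span (s : Set R))
  have hsub {z : R} (hz : z ∈ s) : z ∈ maximalIdeal R := hs ▸ Ideal.subset_span hz
  obtain ⟨y, hy, hunit⟩ : ∃ y ∈ s, IsUnit (a y) := by
    by_contra! hc
    refine hx2 (ha ▸ sum_mem fun y hy ↦ ?_)
    rw [pow_two]
    exact Ideal.mul_mem_mul (hc y hy) (hsub hy)
  refine ⟨y, hy, le_antisymm (sup_le ((Ideal.span_singleton_le_iff_mem _).2 hx) ?_) ?_⟩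
  · exact Ideal.span_le.2 fun z hz ↦ hsub (Finset.mem_of_mem_erase hz)
  set J := Ideal.span {x} ⊔ Ideal.span (s.erase y : Set R)
  have hmem {z : R} (hz : z ∈ s.erase y) : z ∈ J :=
    Ideal.mem_sup_right (Ideal.subset_span hz)
  have hyJ : y ∈ J := by
    rw [← Ideal.unit_mul_mem_iff_mem J hunit]
    rw [← Finset.add_sum_erase s _ hy] at ha
    rw [← smul_eq_mul, eq_sub_of_add_eq ha]
    exact sub_mem (Ideal.mem_sup_left (Ideal.mem_span_singleton_self x))
      (sum_mem fun z hz ↦ J.mul_mem_left _ (hmem hz))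
  rw [← hs, Ideal.span_le]
  intro z hz
  obtain rfl | hne := eq_or_ne z y
  exacts [hyJ, hmem (Finset.mem_erase.2 ⟨hne, hz⟩)]

variable [IsNoetherianRing R]

theorem ringKrullDim_le_ringKrullDim_quotient_span_singleton_add_one {x : R}
    (hx : x ∈ maximalIdeal R) : ringKrullDim R ≤ ringKrullDim (R ⧸ Ideal.span {x}) + 1 := by
  have h := ringKrullDim_le_ringKrullDim_quotient_add_card {x}
    (by simpa [ringJacobson_eq_maximalIdeal] using hx)
  rwa [Finset.coe_singleton, Finset.card_singleton, Nat.cast_one] at h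

theorem spanFinrank_maximalIdeal_quotient_add_one_le {x : R} (hx : x ∈ maximalIdeal R)
    (hx2 : x ∉ maximalIdeal R ^ 2) [IsLocalRing (R ⧸ Ideal.span {x})] :
    (maximalIdeal (R ⧸ Ideal.span {x})).spanFinrank + 1 ≤ (maximalIdeal R).spanFinrank := by
  classical
  obtain ⟨s, hcard, hs⟩ :=
    (IsNoetherian.noetherian (maximalIdeal R)).exists_span_finset_card_eq_spanFinrank
  obtain ⟨y, hy, hxy⟩ := exists_span_singleton_sup_span_erase_eq_maximalIdeal hs hx hx2
  have hgen : maximalIdeal (R ⧸ Ideal.span {x}) =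
      Ideal.span (((s.erase y).image (Ideal.Quotient.mk (Ideal.span {x})) : Finset _) : Set _) := by
    rw [← map_mk_maximalIdeal, ← hxy, Ideal.map_sup, Ideal.map_quotient_self, bot_sup_eq,
      Ideal.map_span, Finset.coe_image]
  calc (maximalIdeal (R ⧸ Ideal.span {x})).spanFinrank + 1 ≤ (s.erase y).card + 1 := by
        rw [hgen, Ideal.span]
        grw [Submodule.spanFinrank_span_le_ncard_of_finite (Finset.finite_toSet _),
          Set.ncard_coe_finset, Finset.card_image_le]
    _ = (maximalIdeal R).spanFinrank := by rw [Finset.card_erase_add_one hy, hcard]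

theorem isRegularLocalRing_quotient_span_singleton {R : Type*} [CommRing R] [IsRegularLocalRing R]
    {x : R} (hx : x ∈ maximalIdeal R) (hx2 : x ∉ maximalIdeal R ^ 2) :
    IsRegularLocalRing (R ⧸ Ideal.span {x}) := by
  have := isLocalRing_quotient_span_singleton hx
  refine .of_spanFinrank_maximalIdeal_le _ (ENat.WithBot.add_le_add_one_right_iff.1 ?_)
  calc _ ≤ ((maximalIdeal R).spanFinrank : WithBot ℕ∞) :=
        mod_cast spanFinrank_maximalIdeal_quotient_add_one_le hx hx2
    _ = ringKrullDim R := IsRegularLocalRing.spanFinrank_maximalIdeal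
    _ ≤ _ := ringKrullDim_le_ringKrullDim_quotient_span_singleton_add_one hx

theorem exists_mem_maximalIdeal_notMem_sq_notMem_minimalPrimes (h : ringKrullDim R ≠ 0) :
    ∃ x ∈ maximalIdeal R, x ∉ maximalIdeal R ^ 2 ∧ ∀ q ∈ minimalPrimes R, x ∉ q := by
  have hmin : ∀ q ∈ minimalPrimes R, ¬ maximalIdeal R ≤ q := by
    intro q hq hle
    obtain rfl := le_antisymm hle (le_maximalIdeal hq.1.1.ne_top)
    rw [← maximalIdeal_height_eq_ringKrullDim, Ideal.height_eq_zero_iff.2 hq] at h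
    exact h rfl
  have hsq : ¬ maximalIdeal R ≤ maximalIdeal R ^ 2 := by
    intro hle
    have hbot : maximalIdeal R = ⊥ := Submodule.eq_bot_of_le_smul_of_le_jacobson_bot _ _
      (IsNoetherian.noetherian _) (by simpa [pow_two] using hle)
      (jacobson_eq_maximalIdeal _ bot_ne_top).ge
    obtain ⟨q, hq, -⟩ := Ideal.exists_minimalPrimes_le (bot_le : ⊥ ≤ maximalIdeal R)
    exact hmin q hq (hbot ▸ bot_le)
  classical
  have hfin := minimalPrimes.finite_of_isNoetherianRing R
  have havoid := (Ideal.subset_union_prime (s := insert (maximalIdeal R ^ 2) hfin.toFinset)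
    (f := id) (I := maximalIdeal R) (maximalIdeal R ^ 2) (maximalIdeal R ^ 2)
    fun i hi hne _ ↦ (hfin.mem_toFinset.1 (Finset.mem_of_mem_insert_of_ne hi hne)).1.1).not.2 <| by
      simpa [hsq] using hmin
  obtain ⟨x, hx, hx'⟩ := Set.not_subset.1 havoid
  simp only [Finset.coe_insert, Set.Finite.coe_toFinset, Set.mem_insert_iff, id_eq,
    Set.iUnion_iUnion_eq_or_left, Set.mem_union, SetLike.mem_coe, Set.mem_iUnion, not_or,
    not_exists] at hx'
  exact ⟨x, hx, hx'⟩

theorem isDomain_of_isPrime_span_singleton {x : R} (hx : x ∈ maximalIdeal R)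
    [hprime : (Ideal.span {x}).IsPrime] (hmin : ∀ q ∈ minimalPrimes R, x ∉ q) : IsDomain R := by
  obtain ⟨q, hq, hqx⟩ := Ideal.exists_minimalPrimes_le (bot_le : ⊥ ≤ Ideal.span {x})
  have hqp : q.IsPrime := hq.1.1
  have hle : q ≤ maximalIdeal R • q := by
    intro y hy
    obtain ⟨a, rfl⟩ := Ideal.mem_span_singleton.1 (hqx hy)
    exact Submodule.smul_mem_smul hx ((hqp.mem_or_mem hy).resolve_left (hmin q hq))
  have hbot : q = ⊥ := Submodule.eq_bot_of_le_smul_of_le_jacobson_bot _ _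
    (IsNoetherian.noetherian _) hle (jacobson_eq_maximalIdeal _ bot_ne_top).ge
  exact IsDomain.of_bot_isPrime R (hbp := hbot ▸ hqp)

theorem isDomain_of_isRegularLocalRing (R : Type*) [CommRing R] [IsRegularLocalRing R] :
    IsDomain R := by
  induction hn : (maximalIdeal R).spanFinrank using Nat.strong_induction_on generalizing R with
  | _ n ih
  obtain h0 | h0 := eq_or_ne (ringKrullDim R) 0
  · have hm := IsRegularLocalRing.spanFinrank_maximalIdeal (R := R)
    rw [h0, Nat.cast_eq_zero,
      Submodule.spanFinrank_eq_zero_iff_eq_bot (IsNoetherian.noetherian _)] at hm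
    exact (isField_iff_maximalIdeal_eq.2 hm).isDomain
  · obtain ⟨x, hx, hx2, hmin⟩ := exists_mem_maximalIdeal_notMem_sq_notMem_minimalPrimes h0
    have := isRegularLocalRing_quotient_span_singleton hx hx2
    have hlt := spanFinrank_maximalIdeal_quotient_add_one_le hx hx2
    have hprime := (Ideal.Quotient.isDomain_iff_prime _).1
      (ih _ (by omega) (R ⧸ Ideal.span {x}) rfl)
    exact isDomain_of_isPrime_span_singleton hx hmin

theorem spanFinrank_ofList_le {R : Type*} [CommRing R] (rs : List R) :
    (Ideal.ofList rs).spanFinrank ≤ rs.length := by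
  classical
  have hspan : Ideal.ofList rs = Ideal.span (rs.toFinset : Set R) := by
    simp [Ideal.ofList]
  rw [hspan, Ideal.span]
  grw [Submodule.spanFinrank_span_le_ncard_of_finite (Finset.finite_toSet _),
    Set.ncard_coe_finset, List.toFinset_card_le]

theorem isRegularLocalRing_of_ofList_eq_maximalIdeal {rs : List R}
    (hm : Ideal.ofList rs = maximalIdeal R) (hd : rs.length ≤ ringKrullDim R) :
    IsRegularLocalRing R :=
  .of_spanFinrank_maximalIdeal_le _ <| le_trans (mod_cast hm ▸ spanFinrank_ofList_le rs) hd

theorem isWeaklyRegular_of_ofList_eq_maximalIdeal {rs : List R}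
    (hm : Ideal.ofList rs = maximalIdeal R) (hd : rs.length ≤ ringKrullDim R) :
    IsWeaklyRegular R rs := by
  induction hn : rs.length generalizing R rs with
  | zero => rw [List.length_eq_zero_iff.1 hn]; exact .nil R R
  | succ n ih =>
    obtain ⟨x, rs, rfl⟩ := List.exists_cons_of_length_eq_add_one hn
    have := isRegularLocalRing_of_ofList_eq_maximalIdeal hm hd
    have := isDomain_of_isRegularLocalRing R
    have hx : x ∈ maximalIdeal R := hm ▸ Ideal.subset_span List.mem_cons_self
    have hx0 : x ≠ 0 := by
      rintro rfl
      have hle : ringKrullDim R ≤ rs.length :=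
        (ringKrullDim_le_spanFinrank_maximalIdeal R).trans <| by
          rw [← hm, Ideal.ofList_cons, Ideal.span_singleton_zero, bot_sup_eq]
          exact_mod_cast spanFinrank_ofList_le rs
      have := hd.trans hle
      norm_cast at this
      simp at this
    have := isLocalRing_quotient_span_singleton hx
    have hm' : Ideal.ofList (rs.map (Ideal.Quotient.mk (Ideal.span {x}))) =
        maximalIdeal (R ⧸ Ideal.span {x}) := by
      rw [← map_mk_maximalIdeal, ← hm, Ideal.ofList_cons, Ideal.map_sup, Ideal.map_quotient_self,
        bot_sup_eq, Ideal.map_ofList]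
    have hd' : ((rs.map (Ideal.Quotient.mk (Ideal.span {x}))).length : WithBot ℕ∞) ≤
        ringKrullDim (R ⧸ Ideal.span {x}) := by
      rw [← ENat.WithBot.add_le_add_one_right_iff, List.length_map]
      exact le_trans (by simp)
        (hd.trans (ringKrullDim_le_ringKrullDim_quotient_span_singleton_add_one hx))
    have e : (R ⧸ Ideal.span {x}) ≃ₗ[R] QuotSMulTop x R :=
      Submodule.quotEquivOfEq _ _ (by simp [← Submodule.ideal_span_singleton_smul])
    refine (isWeaklyRegular_cons_iff _ _ _).2 ⟨IsSMulRegular.of_ne_zero hx0, ?_⟩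
    rw [← e.isWeaklyRegular_congr, ← isWeaklyRegular_map_algebraMap_iff (R ⧸ Ideal.span {x})]
    exact ih hm' hd' (by simpa using hn)

theorem exists_isWeaklyRegular_ofList_eq_maximalIdeal (R : Type*) [CommRing R]
    [IsRegularLocalRing R] : ∃ rs : List R, IsWeaklyRegular R rs ∧
      Ideal.ofList rs = maximalIdeal R ∧ rs.length = ringKrullDim R := by
  obtain ⟨s, hcard, hs⟩ :=
    (IsNoetherian.noetherian (maximalIdeal R)).exists_span_finset_card_eq_spanFinrank
  have hm : Ideal.ofList s.toList = maximalIdeal R := by simpa [Ideal.ofList] using hs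
  have hd : (s.toList.length : WithBot ℕ∞) = ringKrullDim R := by
    rw [Finset.length_toList, hcard, IsRegularLocalRing.spanFinrank_maximalIdeal]
  exact ⟨s.toList, isWeaklyRegular_of_ofList_eq_maximalIdeal hm hd.le, hm, hd⟩

end RegularLocalRing

section SupportDimension

theorem height_add_coheight_le_krullDim {α : Type*} [Preorder α] (a : α) :
    (Order.height a : WithBot ℕ∞) + Order.coheight a ≤ Order.krullDim α := by
  have : Nonempty α := ⟨a⟩
  rw [Order.krullDim_eq_iSup_height_add_coheight_of_nonempty]
  exact_mod_cast le_iSup (fun a : α ↦ Order.height a + Order.coheight a) a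

variable {R : Type*} [CommRing R]

theorem ringKrullDim_quotient_eq_coheight (P : PrimeSpectrum R) :
    ringKrullDim (R ⧸ P.asIdeal) = Order.coheight P := by
  rw [ringKrullDim_quotient, Order.coheight_eq_krullDim_Ici]
  congr 1

theorem height_add_ringKrullDim_quotient_le (P : Ideal R) [hP : P.IsPrime] :
    (P.height : WithBot ℕ∞) + ringKrullDim (R ⧸ P) ≤ ringKrullDim R := by
  have h := height_add_coheight_le_krullDim (⟨P, hP⟩ : PrimeSpectrum R)
  rwa [← ringKrullDim_quotient_eq_coheight, ← PrimeSpectrum.height_eq_orderHeight] at h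

variable {M : Type*} [AddCommGroup M] [Module R M]

theorem coheight_mem_support (P : Module.support R M) :
    Order.coheight P = Order.coheight P.1 := by
  have : {Q : Module.support R M | P ≤ Q} ≃o Set.Ici P.1 :=
    { toFun Q := ⟨Q.1.1, Q.2⟩
      invFun Q := ⟨⟨Q.1, Module.mem_support_mono Q.2 P.2⟩, Q.2⟩
      left_inv _ := rfl
      right_inv _ := rfl
      map_rel_iff' := .rfl }
  apply WithBot.coe_injective
  rw [Order.coheight_eq_krullDim_Ici, Order.coheight_eq_krullDim_Ici]
  exact Order.krullDim_eq_of_orderIso this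

theorem exists_mem_support_supportDim_eq [IsNoetherianRing R] [IsLocalRing R] (M : Type*)
    [AddCommGroup M] [Module R M] [Nontrivial M] :
    ∃ P ∈ Module.support R M, Module.supportDim R M = ringKrullDim (R ⧸ P.asIdeal) := by
  have : Nonempty (Module.support R M) :=
    Set.nonempty_coe_sort.2 Module.nonempty_support_of_nontrivial
  have : FiniteDimensionalOrder (Module.support R M) :=
    Order.finiteDimensionalOrder_iff_krullDim_ne_bot_and_top.2
      ⟨Module.supportDim_ne_bot_of_nontrivial R M,
        ((Module.supportDim_le_ringKrullDim R M).trans_lt ringKrullDim_lt_top).ne⟩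
  let p := LTSeries.longestOf (Module.support R M)
  refine ⟨p.head.1, p.head.2, ?_⟩
  rw [ringKrullDim_quotient_eq_coheight, ← coheight_mem_support]
  refine le_antisymm ?_ (Order.coheight_le_krullDim _)
  rw [Module.supportDim, Order.krullDim_eq_length_of_finiteDimensionalOrder]
  exact_mod_cast Order.length_le_coheight_head

theorem nontrivial_localization_tensorProduct {P : PrimeSpectrum R}
    (hP : P ∈ Module.support R M) : Nontrivial (Localization.AtPrime P.asIdeal ⊗[R] M) := by
  rw [Module.mem_support_iff] at hP
  exact (LocalizedModule.equivTensorProduct P.asIdeal.primeCompl M).symm.toEquiv.nontrivial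

variable [Module.Finite R M]

theorem ringKrullDim_quotient_le_supportDim {P : PrimeSpectrum R} (hP : P ∈ Module.support R M) :
    ringKrullDim (R ⧸ P.asIdeal) ≤ Module.supportDim R M := by
  rw [Module.supportDim_eq_ringKrullDim_quotient_annihilator]
  exact ringKrullDim_le_of_surjective _
    (Ideal.Quotient.factor_surjective (Module.mem_support_iff_of_finite.1 hP))

theorem comap_mem_support_of_mem_support_tensorProduct {S : Type*} [CommRing S] [Algebra R S]
    {Q : PrimeSpectrum S} (hQ : Q ∈ Module.support S (S ⊗[R] M)) :
    PrimeSpectrum.comap (algebraMap R S) Q ∈ Module.support R M := by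
  rw [Module.mem_support_iff_of_finite] at hQ ⊢
  intro r hr
  rw [Module.mem_annihilator] at hr
  refine hQ (Module.mem_annihilator.2 fun z ↦ ?_)
  induction z with
  | zero => simp
  | add a b ha hb => rw [smul_add, ha, hb, add_zero]
  | tmul s m => rw [algebraMap_smul, ← TensorProduct.tmul_smul, hr, TensorProduct.tmul_zero]

theorem supportDim_localization_le_height (P : Module.support R M) :
    Module.supportDim (Localization.AtPrime P.1.asIdeal)
      (Localization.AtPrime P.1.asIdeal ⊗[R] M) ≤ Order.height P := by
  let A := Localization.AtPrime P.1.asIdeal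
  let g (Q : Module.support A (A ⊗[R] M)) : Module.support R M :=
    ⟨_, comap_mem_support_of_mem_support_tensorProduct Q.2⟩
  have hg : StrictMono g := Monotone.strictMono_of_injective
    (fun _ _ h ↦ Ideal.comap_mono (Subtype.coe_le_coe.2 h)) fun Q Q' h ↦ Subtype.ext <|
      PrimeSpectrum.localization_comap_injective A P.1.asIdeal.primeCompl (congrArg Subtype.val h)
  have hgP (Q) : g Q ≤ P :=
    (Ideal.comap_mono (IsLocalRing.le_maximalIdeal Q.1.2.ne_top)).trans
      Localization.AtPrime.under_maximalIdeal.le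
  exact (Order.krullDim_le_of_strictMono _ (hg.codRestrict hgP)).trans_eq
    (Order.height_eq_krullDim_Iic P).symm

theorem supportDim_localization_add_ringKrullDim_quotient_le {P : PrimeSpectrum R}
    (hP : P ∈ Module.support R M) :
    Module.supportDim (Localization.AtPrime P.asIdeal) (Localization.AtPrime P.asIdeal ⊗[R] M) +
      ringKrullDim (R ⧸ P.asIdeal) ≤ Module.supportDim R M :=
  calc _ ≤ (Order.height (⟨P, hP⟩ : Module.support R M) : WithBot ℕ∞) +
        Order.coheight (⟨P, hP⟩ : Module.support R M) := by
        rw [coheight_mem_support, ringKrullDim_quotient_eq_coheight]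
        gcongr
        exact supportDim_localization_le_height ⟨P, hP⟩
    _ ≤ _ := height_add_coheight_le_krullDim _

end SupportDimension

section TorIndependent

open IsLocalRing RingTheory.Sequence

variable {R : Type u} [CommRing R]

theorem HasDepthGE.le_supportDim [IsLocalRing R] [IsNoetherianRing R] {M : Type u}
    [AddCommGroup M] [Module R M] [Module.Finite R M] [Nontrivial M] {n : ℕ}
    (h : HasDepthGE R n M) : (n : WithBot ℕ∞) ≤ Module.supportDim R M := by
  obtain ⟨p, hp⟩ := associatedPrimes.nonempty R M
  have hle : Module.annihilator R M ≤ p := by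
    rw [← Submodule.annihilator_top]
    exact IsAssociatedPrime.annihilator_le hp
  exact (h.le_ringKrullDim_quotient hp).trans
    (ringKrullDim_quotient_le_supportDim (P := ⟨p, hp.isPrime⟩)
      (Module.mem_support_iff_of_finite.2 hle))

theorem HasTensorExactResolution.length_le_supportDim_add_supportDim [IsLocalRing R]
    [IsNoetherianRing R] {M N : Type u} [AddCommGroup M] [Module R M] [AddCommGroup N] [Module R N]
    [Module.Finite R M] [Module.Finite R N] [Nontrivial M] [Nontrivial N] {n : ℕ}
    (h : HasTensorExactResolution R n N M) {rs : List R} (hrs : IsWeaklyRegular R rs)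
    (hm : ∀ r ∈ rs, r ∈ maximalIdeal R) :
    (rs.length : WithBot ℕ∞) ≤ Module.supportDim R M + Module.supportDim R N := by
  obtain ⟨s, hs, hsM⟩ := h.exists_le_supportDim
  have hN : HasDepthGE R (rs.length - s) N := by
    obtain hle | hlt := le_or_gt s rs.length
    · exact hs.hasDepthGE hrs hm (by omega)
    · exact fun i hi ↦ by omega
  calc (rs.length : WithBot ℕ∞) ≤ s + (rs.length - s : ℕ) := by norm_cast; omega
    _ ≤ _ := add_le_add hsM hN.le_supportDim

theorem ringKrullDim_add_ringKrullDim_quotient_le_of_isZero_tor [IsRegularLocalRing R]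
    {M N : Type u} [AddCommGroup M] [Module R M] [AddCommGroup N] [Module R N]
    [Module.Finite R M] [Module.Finite R N] (htor : ∀ i : ℕ, 0 < i →
      IsZero (((Tor (ModuleCat.{u} R) i).obj (ModuleCat.of R M)).obj (ModuleCat.of R N)))
    {P : PrimeSpectrum R} (hPM : P ∈ Module.support R M) (hPN : P ∈ Module.support R N) :
    ringKrullDim R + ringKrullDim (R ⧸ P.asIdeal) ≤
      Module.supportDim R M + Module.supportDim R N := by
  let A := Localization.AtPrime P.asIdeal
  have := IsLocalization.flat A P.asIdeal.primeCompl
  have := nontrivial_localization_tensorProduct hPM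
  have := nontrivial_localization_tensorProduct hPN
  obtain ⟨xs, hxs, hxm, hdim⟩ := exists_isWeaklyRegular_ofList_eq_maximalIdeal R
  obtain ⟨rs, hrsP, hrs, hle⟩ := (hasDepthGE_of_isWeaklyRegular hxs
    fun x hx ↦ hxm ▸ Ideal.subset_span hx).exists_isWeaklyRegular P.asIdeal
  have hres : HasTensorExactResolution A xs.length (A ⊗[R] N) (A ⊗[R] M) :=
    ((hasTensorExactResolution_self_of_isWeaklyRegular N hxs hxm).of_hasTensorExactSyzygies
      (hasTensorExactSyzygies_of_isZero_tor _ htor)).baseChange A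
  have hlen : (rs.length : WithBot ℕ∞) ≤
      Module.supportDim A (A ⊗[R] M) + Module.supportDim A (A ⊗[R] N) := by
    rw [← List.length_map (as := rs) (algebraMap R A)]
    refine hres.length_le_supportDim_add_supportDim (hrs.of_flat (S := A)) ?_
    simpa only [List.forall_mem_map,
      IsLocalization.AtPrime.to_map_mem_maximal_iff A P.asIdeal] using hrsP
  calc ringKrullDim R + ringKrullDim (R ⧸ P.asIdeal)
      ≤ Module.supportDim A (A ⊗[R] M) + Module.supportDim A (A ⊗[R] N) +
          ringKrullDim (R ⧸ P.asIdeal) + ringKrullDim (R ⧸ P.asIdeal) := by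
        grw [← hdim, hle, hlen]
    _ = (Module.supportDim A (A ⊗[R] M) + ringKrullDim (R ⧸ P.asIdeal)) +
          (Module.supportDim A (A ⊗[R] N) + ringKrullDim (R ⧸ P.asIdeal)) := by abel
    _ ≤ _ := add_le_add (supportDim_localization_add_ringKrullDim_quotient_le hPM)
        (supportDim_localization_add_ringKrullDim_quotient_le hPN)

end TorIndependent

section PowerSeries

open IsLocalRing MvPowerSeries

variable {σ W : Type*} [CommRing W]

theorem map_coeToMvPowerSeries_idealOfVars :
    (MvPolynomial.idealOfVars σ W).map (algebraMap (MvPolynomial σ W) (MvPowerSeries σ W)) =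
      Ideal.span (Set.range X) := by
  rw [MvPolynomial.idealOfVars, Ideal.map_span, ← Set.range_comp]
  congr 2
  ext1 s
  simp [MvPowerSeries.algebraMap_apply']

theorem mem_maximalIdeal_mvPowerSeries_iff [IsLocalRing W] {f : MvPowerSeries σ W} :
    f ∈ maximalIdeal (MvPowerSeries σ W) ↔ constantCoeff f ∈ maximalIdeal W := by
  rw [mem_maximalIdeal, mem_maximalIdeal, mem_nonunits_iff, mem_nonunits_iff,
    isUnit_iff_constantCoeff]

variable [Finite σ]

theorem sub_truncTotal_mem_span_range_X_pow (n : ℕ) (f : MvPowerSeries σ W) :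
    f - (f.truncTotal n : MvPolynomial σ W) ∈ Ideal.span (Set.range (X (σ := σ) (R := W))) ^ n := by
  let I := MvPolynomial.idealOfVars σ W
  have hmem : toAdicCompletionAlgEquiv σ W (f - (f.truncTotal n : MvPolynomial σ W)) ∈
      (I ^ n • ⊤ : Submodule (MvPolynomial σ W) (AdicCompletion I (MvPolynomial σ W))) := by
    rw [AdicCompletion.pow_smul_top_eq_ker_eval (MvPolynomial.idealOfVars_fg σ W),
      LinearMap.mem_ker, toAdicCompletionAlgEquiv_apply, map_sub, toAdicCompletion_coe, map_sub,
      sub_eq_zero]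
    rfl
  have hmem' := Submodule.mem_map_of_mem
    (f := (toAdicCompletionAlgEquiv σ W).symm.toLinearEquiv.toLinearMap) hmem
  rw [Submodule.map_smul'', AlgEquiv.toLinearEquiv_toLinearMap, AlgEquiv.toLinearMap_apply,
    AlgEquiv.symm_apply_apply] at hmem'
  rw [← map_coeToMvPowerSeries_idealOfVars, ← Ideal.map_pow]
  have hmem_top := Submodule.smul_mono le_rfl le_top hmem'
  rwa [Ideal.smul_top_eq_map] at hmem_top

theorem sub_C_constantCoeff_mem_span_range_X (f : MvPowerSeries σ W) :
    f - C (constantCoeff f) ∈ Ideal.span (Set.range (X (σ := σ) (R := W))) := by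
  classical
  have htrunc :
      (f.truncTotal 1 : MvPolynomial σ W) = (C (constantCoeff f) : MvPowerSeries σ W) := by
    ext n
    obtain rfl | hn := eq_or_ne n 0
    · simp [coeff_truncTotal_eq_ite]
    · simp [coeff_truncTotal_eq_ite, coeff_C, hn, (Finsupp.degree_eq_zero_iff n).not.2 hn]
  simpa only [htrunc, pow_one] using sub_truncTotal_mem_span_range_X_pow 1 f

theorem ringKrullDim_add_card_le_ringKrullDim_mvPowerSeries :
    ringKrullDim W + Nat.card σ ≤ ringKrullDim (MvPowerSeries σ W) := by
  rw [ringKrullDim_eq_of_ringEquiv (renameEquiv W (Finite.equivFin σ)).toRingEquiv]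
  induction Nat.card σ with
  | zero => rw [ringKrullDim_eq_of_ringEquiv (isEmptyEquiv (σ := Fin 0) (R := W)).toRingEquiv,
      Nat.cast_zero, add_zero]
  | succ r ih =>
    rw [ringKrullDim_eq_of_ringEquiv (finSuccEquiv (R := W) (n := r)).toRingEquiv, Nat.cast_succ,
      ← add_assoc]
    exact (add_le_add_left ih 1).trans ringKrullDim_succ_le_ringKrullDim_powerseries

variable [IsLocalRing W]

theorem maximalIdeal_mvPowerSeries : maximalIdeal (MvPowerSeries σ W) =
    (maximalIdeal W).map C ⊔ Ideal.span (Set.range (X (σ := σ) (R := W))) := by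
  apply le_antisymm
  · intro f hf
    rw [← add_sub_cancel (C (constantCoeff f)) f]
    exact Submodule.add_mem_sup
      (Ideal.mem_map_of_mem _ (mem_maximalIdeal_mvPowerSeries_iff.1 hf))
      (sub_C_constantCoeff_mem_span_range_X f)
  · rw [sup_le_iff, Ideal.map_le_iff_le_comap, Ideal.span_le, Set.range_subset_iff]
    refine ⟨fun w hw ↦ ?_, fun s ↦ ?_⟩
    · rwa [Ideal.mem_comap, mem_maximalIdeal_mvPowerSeries_iff, constantCoeff_C]
    · rw [SetLike.mem_coe, mem_maximalIdeal_mvPowerSeries_iff, constantCoeff_X]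
      exact zero_mem _

theorem spanFinrank_maximalIdeal_mvPowerSeries_le [IsNoetherianRing W] :
    (maximalIdeal (MvPowerSeries σ W)).spanFinrank ≤
      (maximalIdeal W).spanFinrank + Nat.card σ := by
  obtain ⟨s, hcard, hs⟩ :=
    (IsNoetherian.noetherian (maximalIdeal W)).exists_span_finset_card_eq_spanFinrank
  have hspan : Ideal.span (s : Set W) = maximalIdeal W := hs
  have hfin : (C '' (s : Set W) ∪ Set.range (X (σ := σ))).Finite :=
    (s.finite_toSet.image _).union (Set.finite_range _)
  rw [maximalIdeal_mvPowerSeries, ← hcard, ← hspan, Ideal.map_span, ← Ideal.span_union,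
    Ideal.span]
  grw [Submodule.spanFinrank_span_le_ncard_of_finite hfin, Set.ncard_union_le,
    Set.ncard_image_le s.finite_toSet, Set.ncard_coe_finset]
  rw [← Set.image_univ, ← Set.ncard_univ]
  grw [Set.ncard_image_le Set.finite_univ]

theorem isRegularLocalRing_mvPowerSeries {σ W : Type*} [Finite σ] [CommRing W]
    [IsRegularLocalRing W] : IsRegularLocalRing (MvPowerSeries σ W) := by
  refine .of_spanFinrank_maximalIdeal_le _ ?_
  grw [spanFinrank_maximalIdeal_mvPowerSeries_le,
    ← ringKrullDim_add_card_le_ringKrullDim_mvPowerSeries]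
  rw [← IsRegularLocalRing.spanFinrank_maximalIdeal, Nat.cast_add]

theorem ringKrullDim_mvPowerSeries {σ W : Type*} [Finite σ] [CommRing W] [IsRegularLocalRing W] :
    ringKrullDim (MvPowerSeries σ W) = ringKrullDim W + Nat.card σ := by
  refine le_antisymm ?_ ringKrullDim_add_card_le_ringKrullDim_mvPowerSeries
  grw [ringKrullDim_le_spanFinrank_maximalIdeal, spanFinrank_maximalIdeal_mvPowerSeries_le]
  rw [← IsRegularLocalRing.spanFinrank_maximalIdeal, Nat.cast_add]

end PowerSeries

section HeightFormula

open IsLocalRing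

theorem height_add_ringKrullDim_quotient {R : Type u} [CommRing R] [IsRegularLocalRing R]
    (P : Ideal R) [P.IsPrime] :
    (P.height : WithBot ℕ∞) + ringKrullDim (R ⧸ P) = ringKrullDim R := by
  refine le_antisymm (height_add_ringKrullDim_quotient_le P) ?_
  obtain ⟨rs, hrs, hrsm, hdim⟩ := exists_isWeaklyRegular_ofList_eq_maximalIdeal R
  exact hdim ▸ HasDepthGE.le_height_add_ringKrullDim_quotient (hasDepthGE_of_isWeaklyRegular hrs
    fun x hx ↦ hrsm ▸ Ideal.subset_span hx) P

end HeightFormula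

section Height

theorem height_map_mk_eq_zero_of_mem_minimalPrimes {S : Type*} [CommRing S] {I Q : Ideal S}
    (hQ : Q ∈ I.minimalPrimes) : (Q.map (Ideal.Quotient.mk I)).height = 0 := by
  have := hQ.1.1
  have : (Q.map (Ideal.Quotient.mk I)).IsPrime :=
    Ideal.map_isPrime_of_surjective Ideal.Quotient.mk_surjective (by simpa using hQ.1.2)
  have hmin := Ideal.minimalPrimes_map_of_surjective (f := Ideal.Quotient.mk I)
    Ideal.Quotient.mk_surjective I
  rw [Ideal.map_quotient_self, Ideal.mk_ker, sup_idem] at hmin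
  have hmem : Q.map (Ideal.Quotient.mk I) ∈ (⊥ : Ideal (S ⧸ I)).minimalPrimes :=
    hmin ▸ ⟨Q, hQ, rfl⟩
  exact Ideal.height_eq_zero_iff.2 (by simpa using hmem)

variable {T₁ T₂ S : Type*} [CommRing T₁] [CommRing T₂] [CommRing S]
  (i : T₁ →+* S) (j : T₂ →+* S)

theorem exists_mem_minimalPrimes_comap_eq_comap_eq {P : Ideal T₁} {Q : Ideal T₂} [P.IsPrime]
    [Q.IsPrime] (h : ∀ a ∉ P, ∀ c ∉ Q, i a * j c ∉ P.map i ⊔ Q.map j) :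
    ∃ L ∈ (P.map i ⊔ Q.map j).minimalPrimes, L.comap i = P ∧ L.comap j = Q := by
  let M : Submonoid S := P.primeCompl.map i ⊔ Q.primeCompl.map j
  have hdisj : Disjoint ((P.map i ⊔ Q.map j : Ideal S) : Set S) M := by
    rw [Set.disjoint_left]
    intro s hs hM
    obtain ⟨_, ⟨a, ha, rfl⟩, _, ⟨c, hc, rfl⟩, rfl⟩ := Submonoid.mem_sup.1 hM
    exact h a ha c hc hs
  obtain ⟨L₀, hL₀, hle, hL₀M⟩ := Ideal.exists_le_prime_disjoint _ M hdisj
  obtain ⟨L, hL, hLL₀⟩ := Ideal.exists_minimalPrimes_le hle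
  have hLM {s : S} (hs : s ∈ M) : s ∉ L := fun hsL ↦ Set.disjoint_left.1 hL₀M (hLL₀ hsL) hs
  refine ⟨L, hL, le_antisymm (fun a haL ↦ ?_) ?_, le_antisymm (fun c hcL ↦ ?_) ?_⟩
  · by_contra ha
    exact hLM (Submonoid.mem_sup_left ⟨a, ha, rfl⟩) haL
  · exact Ideal.map_le_iff_le_comap.1 (le_sup_left.trans hL.1.2)
  · by_contra hc
    exact hLM (Submonoid.mem_sup_right ⟨c, hc, rfl⟩) hcL
  · exact Ideal.map_le_iff_le_comap.1 (le_sup_right.trans hL.1.2)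

variable [IsNoetherianRing S]

theorem height_le_height_comap_add [IsNoetherianRing T₁] (L : Ideal S)
    [L.IsPrime] : L.height ≤ (L.comap i).height +
      (L.map (Ideal.Quotient.mk ((L.comap i).map i))).height := by
  let _ := i.toAlgebra
  have : L.LiesOver (L.comap i) := ⟨rfl⟩
  exact Ideal.height_le_height_add_of_liesOver (L.comap i) L

theorem height_le_height_comap_add_height_comap [IsNoetherianRing T₁] [IsNoetherianRing T₂]
    {L : Ideal S} (hL : L ∈ ((L.comap i).map i ⊔ (L.comap j).map j).minimalPrimes) :
    L.height ≤ (L.comap i).height + (L.comap j).height := by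
  have := hL.1.1
  let π := Ideal.Quotient.mk ((L.comap i).map i)
  have hker : RingHom.ker π ≤ L := Ideal.mk_ker.trans_le (le_sup_left.trans hL.1.2)
  have : (L.map π).IsPrime := Ideal.map_isPrime_of_surjective Ideal.Quotient.mk_surjective hker
  have hcomap : (L.map π).comap (π.comp j) = L.comap j := by
    rw [← Ideal.comap_comap, Ideal.comap_map_of_surjective' _ Ideal.Quotient.mk_surjective,
      sup_eq_left.2 hker]
  have hmin : L.map π ∈ ((L.comap j).map (π.comp j)).minimalPrimes := by
    have h := Ideal.minimalPrimes_map_of_surjective (f := π) Ideal.Quotient.mk_surjective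
      ((L.comap j).map j)
    rw [Ideal.mk_ker, Ideal.map_map, sup_comm] at h
    exact h ▸ ⟨L, hL, rfl⟩
  calc L.height ≤ (L.comap i).height + (L.map π).height := height_le_height_comap_add i L
    _ ≤ (L.comap i).height + ((L.comap j).height + 0) := by
        have h := height_le_height_comap_add (π.comp j) (L.map π)
        rw [hcomap, height_map_mk_eq_zero_of_mem_minimalPrimes hmin] at h
        gcongr
    _ = (L.comap i).height + (L.comap j).height := by rw [add_zero]

theorem exists_isPrime_le_height_le_height_add_height [IsNoetherianRing T₁] [IsNoetherianRing T₂]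
    {P : Ideal T₁} {Q : Ideal T₂} [P.IsPrime] [Q.IsPrime]
    (h : ∀ a ∉ P, ∀ c ∉ Q, i a * j c ∉ P.map i ⊔ Q.map j) :
    ∃ L : Ideal S, L.IsPrime ∧ P.map i ⊔ Q.map j ≤ L ∧ L.height ≤ P.height + Q.height := by
  obtain ⟨L, hL, rfl, rfl⟩ := exists_mem_minimalPrimes_comap_eq_comap_eq i j h
  exact ⟨L, hL.1.1, hL.1.2, height_le_height_comap_add_height_comap i j hL⟩

end Height

section ClosedFiber

open IsLocalRing

variable {A B : Type*} [CommRing A] [CommRing B] [IsLocalRing A] [IsLocalRing B]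

theorem comap_maximalIdeal_of_map_maximalIdeal_eq {f : A →+* B}
    (h : (maximalIdeal A).map f = maximalIdeal B) : (maximalIdeal B).comap f = maximalIdeal A :=
  ((maximalIdeal.isMaximal A).eq_of_le (Ideal.comap_ne_top _ (maximalIdeal.isMaximal B).ne_top)
    (Ideal.map_le_iff_le_comap.1 h.le)).symm

theorem height_map_mk_maximalIdeal_of_map_maximalIdeal_eq {f : A →+* B}
    (h : (maximalIdeal A).map f = maximalIdeal B) :
    ((maximalIdeal B).map (Ideal.Quotient.mk ((maximalIdeal A).map f))).height = 0 := by
  refine height_map_mk_eq_zero_of_mem_minimalPrimes ?_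
  rw [h, Ideal.minimalPrimes_eq_subsingleton_self]
  rfl

variable [IsNoetherianRing A] [IsNoetherianRing B]

theorem ringKrullDim_le_of_map_maximalIdeal_eq (f : A →+* B)
    (h : (maximalIdeal A).map f = maximalIdeal B) : ringKrullDim B ≤ ringKrullDim A := by
  have hht := height_le_height_comap_add f (maximalIdeal B)
  rw [comap_maximalIdeal_of_map_maximalIdeal_eq h,
    height_map_mk_maximalIdeal_of_map_maximalIdeal_eq h, add_zero] at hht
  rw [← maximalIdeal_height_eq_ringKrullDim, ← maximalIdeal_height_eq_ringKrullDim]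
  exact_mod_cast hht

theorem ringKrullDim_eq_of_flat_of_map_maximalIdeal_eq [Algebra A B] [Module.Flat A B]
    (h : (maximalIdeal A).map (algebraMap A B) = maximalIdeal B) :
    ringKrullDim B = ringKrullDim A := by
  have : (maximalIdeal B).LiesOver (maximalIdeal A) :=
    ⟨(comap_maximalIdeal_of_map_maximalIdeal_eq h).symm⟩
  rw [← maximalIdeal_height_eq_ringKrullDim, ← maximalIdeal_height_eq_ringKrullDim,
    Ideal.height_eq_height_add_of_liesOver_of_hasGoingDown (maximalIdeal A) (maximalIdeal B),
    height_map_mk_maximalIdeal_of_map_maximalIdeal_eq h, add_zero]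

end ClosedFiber

section Diagonal

open IsLocalRing MvPowerSeries

theorem mem_of_forall_mem_sup_pow {A : Type*} [CommRing A] [IsLocalRing A] [IsNoetherianRing A]
    {I J : Ideal A} (hJ : J ≠ ⊤) {x : A} (h : ∀ n, x ∈ I ⊔ J ^ n) : x ∈ I := by
  have hinf := J.iInf_pow_smul_eq_bot_of_isLocalRing (M := A ⧸ I) hJ
  rw [← Ideal.Quotient.eq_zero_iff_mem, ← Submodule.mem_bot A, ← hinf, Submodule.mem_iInf]
  intro n
  obtain ⟨y, hy, z, hz, rfl⟩ := Submodule.mem_sup.1 (h n)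
  rw [map_add, Ideal.Quotient.eq_zero_iff_mem.2 hy, zero_add, ← mul_one z]
  exact Submodule.smul_mem_smul hz (Submodule.mem_top (x := (1 : A ⧸ I)))

variable {σ W : Type*} [CommRing W]

variable (σ W) in
/-- The ideal of the diagonal of `Spec W⟦X⟧ × Spec W⟦X⟧`, where the completed tensor product
`W⟦X⟧ ⊗ W⟦X⟧` is realised as the ring `W⟦X⟧⟦Y⟧` of power series over power series, the two factors
embedding through `C` and `map C`. -/
noncomputable def diagonalIdeal : Ideal (MvPowerSeries σ (MvPowerSeries σ W)) :=
  Ideal.span (Set.range fun s ↦ C (X s) - X s)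

/-- The ideal of `W⟦X⟧⟦Y⟧` whose quotient is the completed tensor product of `W⟦X⟧ ⧸ P` and
`W⟦X⟧ ⧸ Q` over `W`. -/
noncomputable def completedTensorIdeal (P Q : Ideal (MvPowerSeries σ W)) :
    Ideal (MvPowerSeries σ (MvPowerSeries σ W)) :=
  P.map C ⊔ Q.map (map C)

theorem C_X_sub_X_mem_diagonalIdeal (s : σ) :
    (C (X s) - X s : MvPowerSeries σ (MvPowerSeries σ W)) ∈ diagonalIdeal σ W :=
  Ideal.subset_span ⟨s, rfl⟩

theorem C_sub_map_C_coe_mem_diagonalIdeal (p : MvPolynomial σ W) :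
    C (p : MvPowerSeries σ W) - map C (p : MvPowerSeries σ W) ∈ diagonalIdeal σ W := by
  let π := Ideal.Quotient.mk (diagonalIdeal σ W)
  have hcomp : (π.comp C).comp MvPolynomial.coeToMvPowerSeries.ringHom =
      (π.comp (map C)).comp MvPolynomial.coeToMvPowerSeries.ringHom := by
    refine MvPolynomial.ringHom_ext (fun w ↦ by simp) fun s ↦ ?_
    simp only [RingHom.comp_apply, MvPolynomial.coeToMvPowerSeries.ringHom_apply,
      MvPolynomial.coe_X, map_X]
    exact Ideal.Quotient.eq.2 (C_X_sub_X_mem_diagonalIdeal s)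
  exact Ideal.Quotient.eq.1 (RingHom.congr_fun hcomp p)

variable [IsLocalRing W]

theorem X_mem_maximalIdeal (s : σ) : (X s : MvPowerSeries σ W) ∈ maximalIdeal _ := by
  rw [mem_maximalIdeal_mvPowerSeries_iff, constantCoeff_X]
  exact zero_mem _

theorem C_X_mem_maximalIdeal (s : σ) :
    (C (X s) : MvPowerSeries σ (MvPowerSeries σ W)) ∈ maximalIdeal _ := by
  rw [mem_maximalIdeal_mvPowerSeries_iff, constantCoeff_C]
  exact X_mem_maximalIdeal s

theorem diagonalIdeal_le_maximalIdeal : diagonalIdeal σ W ≤ maximalIdeal _ := by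
  rw [diagonalIdeal, Ideal.span_le, Set.range_subset_iff]
  exact fun s ↦ sub_mem (C_X_mem_maximalIdeal s) (X_mem_maximalIdeal s)

theorem C_sub_map_C_mem_maximalIdeal_pow {n : ℕ} {g : MvPowerSeries σ W}
    (hg : g ∈ Ideal.span (Set.range X) ^ n) :
    C g - map C g ∈ maximalIdeal (MvPowerSeries σ (MvPowerSeries σ W)) ^ n := by
  have hmap (f : MvPowerSeries σ W →+* MvPowerSeries σ (MvPowerSeries σ W))
      (hf : ∀ s, f (X s) ∈ maximalIdeal _) : f g ∈ maximalIdeal _ ^ n := by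
    have hle : (Ideal.span (Set.range X)).map f ≤ maximalIdeal _ := by
      rwa [Ideal.map_le_iff_le_comap, Ideal.span_le, Set.range_subset_iff]
    refine Ideal.pow_right_mono hle n ?_
    rw [← Ideal.map_pow]
    exact Ideal.mem_map_of_mem f hg
  exact sub_mem (hmap C C_X_mem_maximalIdeal)
    (hmap (map C) fun s ↦ by rw [map_X]; exact X_mem_maximalIdeal s)

variable [Finite σ] [IsNoetherianRing W]

theorem C_sub_map_C_mem_diagonalIdeal (f : MvPowerSeries σ W) :
    C f - map C f ∈ diagonalIdeal σ W := by
  refine mem_of_forall_mem_sup_pow (maximalIdeal.isMaximal _).ne_top fun n ↦ ?_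
  obtain ⟨p, g, hg, rfl⟩ : ∃ p : MvPolynomial σ W,
      ∃ g ∈ Ideal.span (Set.range (X (σ := σ) (R := W))) ^ n, f = (p : MvPowerSeries σ W) + g :=
    ⟨_, _, sub_truncTotal_mem_span_range_X_pow n f, (add_sub_cancel _ f).symm⟩
  rw [map_add, map_add, add_sub_add_comm]
  exact Submodule.add_mem_sup (C_sub_map_C_coe_mem_diagonalIdeal p)
    (C_sub_map_C_mem_maximalIdeal_pow hg)

theorem ringKrullDim_quotient_le_ringKrullDim_quotient_sup_span_range_add {A : Type*} [CommRing A]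
    [IsLocalRing A] [IsNoetherianRing A] {L : Ideal A} (hL : L ≠ ⊤) {f : σ → A}
    (hf : ∀ s, f s ∈ maximalIdeal A) :
    ringKrullDim (A ⧸ L) ≤ ringKrullDim (A ⧸ (L ⊔ Ideal.span (Set.range f))) + Nat.card σ := by
  have := isLocalRing_quotient hL
  let π := Ideal.Quotient.mk L
  have hspan : Ideal.span (Set.range (π ∘ f)) = (Ideal.span (Set.range f)).map π := by
    rw [Ideal.map_span, Set.range_comp]
  have hdim := ringKrullDim_le_ringKrullDim_quotient_add_encard (Set.range (π ∘ f)) (by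
    rw [ringJacobson_eq_maximalIdeal, ← map_mk_maximalIdeal]
    rintro _ ⟨s, rfl⟩
    exact Ideal.mem_map_of_mem π (hf s))
  rw [hspan, ringKrullDim_eq_of_ringEquiv (DoubleQuot.quotQuotEquivQuotSup _ _)] at hdim
  have hcard : (Set.range (π ∘ f)).encard ≤ Nat.card σ := by
    rw [← Set.image_univ, ← Set.ncard_univ, (Set.finite_univ).cast_ncard_eq]
    exact Set.encard_image_le _ _
  exact hdim.trans (by gcongr; exact_mod_cast hcard)

theorem sup_le_comap_C_sup_diagonalIdeal {P Q : Ideal (MvPowerSeries σ W)}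
    {L : Ideal (MvPowerSeries σ (MvPowerSeries σ W))} (h : completedTensorIdeal P Q ≤ L) :
    P ⊔ Q ≤ (L ⊔ diagonalIdeal σ W).comap C := by
  obtain ⟨hP, hQ⟩ := sup_le_iff.1 h
  refine sup_le ((Ideal.map_le_iff_le_comap.1 hP).trans (Ideal.comap_mono le_sup_left))
    fun c hc ↦ ?_
  rw [Ideal.mem_comap, ← sub_add_cancel (C c) (map C c)]
  exact add_mem (Ideal.mem_sup_right (C_sub_map_C_mem_diagonalIdeal c))
    (Ideal.mem_sup_left (hQ (Ideal.mem_map_of_mem _ hc)))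

theorem ringKrullDim_quotient_sup_diagonalIdeal_le {P Q : Ideal (MvPowerSeries σ W)}
    {L : Ideal (MvPowerSeries σ (MvPowerSeries σ W))} (h : completedTensorIdeal P Q ≤ L)
    (hL : L ≠ ⊤) :
    ringKrullDim (_ ⧸ (L ⊔ diagonalIdeal σ W)) ≤ ringKrullDim (_ ⧸ (P ⊔ Q)) := by
  set K := L ⊔ diagonalIdeal σ W
  have hPQ : P ⊔ Q ≤ K.comap C := sup_le_comap_C_sup_diagonalIdeal h
  have hK_ne : K ≠ ⊤ := ne_top_of_le_ne_top (maximalIdeal.isMaximal _).ne_top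
    (sup_le (le_maximalIdeal hL) diagonalIdeal_le_maximalIdeal)
  have := isLocalRing_quotient hK_ne
  have := isLocalRing_quotient (ne_top_of_le_ne_top (Ideal.comap_ne_top _ hK_ne) hPQ)
  refine ringKrullDim_le_of_map_maximalIdeal_eq (Ideal.quotientMap K C hPQ) ?_
  rw [← map_mk_maximalIdeal, ← map_mk_maximalIdeal, Ideal.map_map, Ideal.quotientMap_comp_mk,
    ← Ideal.map_map, maximalIdeal_mvPowerSeries (W := MvPowerSeries σ W), Ideal.map_sup, eq_comm,
    sup_eq_left, Ideal.map_le_iff_le_comap, Ideal.span_le, Set.range_subset_iff]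
  intro s
  have hs : Ideal.Quotient.mk K (X s) = Ideal.Quotient.mk K (C (X s)) :=
    (Ideal.Quotient.eq.2 (Ideal.mem_sup_right (C_X_sub_X_mem_diagonalIdeal s))).symm
  rw [SetLike.mem_coe, Ideal.mem_comap, hs]
  exact Ideal.mem_map_of_mem _ (Ideal.mem_map_of_mem _ (X_mem_maximalIdeal s))

end Diagonal

section DiagonalReduction

open IsLocalRing MvPowerSeries

theorem ringKrullDim_quotient_add_le_of_notMem_completedTensorIdeal {σ : Type*} [Finite σ]
    {W : Type u} [CommRing W] [IsRegularLocalRing W] {P Q : Ideal (MvPowerSeries σ W)}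
    [P.IsPrime] [Q.IsPrime]
    (h : ∀ a ∉ P, ∀ c ∉ Q, C a * map C c ∉ completedTensorIdeal P Q) :
    ringKrullDim (_ ⧸ P) + ringKrullDim (_ ⧸ Q) ≤
      ringKrullDim W + Nat.card σ + ringKrullDim (_ ⧸ (P ⊔ Q)) := by
  let T := MvPowerSeries σ W
  have : IsRegularLocalRing T := isRegularLocalRing_mvPowerSeries
  have : IsRegularLocalRing (MvPowerSeries σ T) := isRegularLocalRing_mvPowerSeries
  obtain ⟨L, hL, hPQL, hht⟩ := exists_isPrime_le_height_le_height_add_height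
    (C (σ := σ) (R := T)) (map C) h
  have hdimT : ringKrullDim T = ((maximalIdeal T).spanFinrank : ℕ) :=
    IsRegularLocalRing.spanFinrank_maximalIdeal.symm
  have hS : ringKrullDim T + Nat.card σ ≤
      P.height + Q.height + ringKrullDim (T ⧸ (P ⊔ Q)) + Nat.card σ :=
    calc ringKrullDim T + Nat.card σ = L.height + ringKrullDim (_ ⧸ L) := by
          rw [height_add_ringKrullDim_quotient]
          exact ringKrullDim_mvPowerSeries.symm
      _ ≤ L.height + (ringKrullDim (_ ⧸ (L ⊔ diagonalIdeal σ W)) + Nat.card σ) := by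
          gcongr
          exact ringKrullDim_quotient_le_ringKrullDim_quotient_sup_span_range_add hL.ne_top
            fun s ↦ sub_mem (C_X_mem_maximalIdeal s) (X_mem_maximalIdeal s)
      _ ≤ (P.height + Q.height : ℕ∞) + (ringKrullDim (T ⧸ (P ⊔ Q)) + Nat.card σ) := by
          gcongr
          · exact WithBot.coe_le_coe.2 hht
          · exact ringKrullDim_quotient_sup_diagonalIdeal_le hPQL hL.ne_top
      _ = _ := by push_cast; abel
  rw [ENat.WithBot.add_le_add_natCast_right_iff] at hS
  rw [← ringKrullDim_mvPowerSeries, ← ENat.WithBot.add_le_add_natCast_right_iff, ← hdimT]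
  calc ringKrullDim (T ⧸ P) + ringKrullDim (T ⧸ Q) + ringKrullDim T
      ≤ ringKrullDim (T ⧸ P) + ringKrullDim (T ⧸ Q) +
          (P.height + Q.height + ringKrullDim (T ⧸ (P ⊔ Q))) := by gcongr
    _ = P.height + ringKrullDim (T ⧸ P) + (Q.height + ringKrullDim (T ⧸ Q)) +
          ringKrullDim (T ⧸ (P ⊔ Q)) := by abel
    _ = ringKrullDim T + ringKrullDim (T ⧸ (P ⊔ Q)) + ringKrullDim T := by
        rw [height_add_ringKrullDim_quotient, height_add_ringKrullDim_quotient]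
        abel

end DiagonalReduction

section Functional

open MvPowerSeries

variable {σ : Type*}

theorem map_mk_eq_zero_iff {T : Type*} [CommRing T] {P : Ideal T} {g : MvPowerSeries σ T} :
    map (Ideal.Quotient.mk P) g = 0 ↔ ∀ n, coeff n g ∈ P := by
  simp only [MvPowerSeries.ext_iff, coeff_map, map_zero, Ideal.Quotient.eq_zero_iff_mem]

theorem coeff_mem_of_mem_map_C {T : Type*} [CommRing T] {P : Ideal T} {g : MvPowerSeries σ T}
    (hg : g ∈ P.map C) (n : σ →₀ ℕ) : coeff n g ∈ P := by
  have hle : P.map C ≤ RingHom.ker (map (σ := σ) (Ideal.Quotient.mk P)) := by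
    rw [Ideal.map_le_iff_le_comap]
    intro t ht
    rw [Ideal.mem_comap, RingHom.mem_ker, map_C, Ideal.Quotient.eq_zero_iff_mem.2 ht, map_zero]
  exact map_mk_eq_zero_iff.1 (hle hg) n

theorem ker_map_mk_span_singleton {W : Type*} [CommRing W] (w : W) :
    RingHom.ker (map (σ := σ) (Ideal.Quotient.mk (Ideal.span {w}))) = Ideal.span {C w} := by
  ext f
  rw [RingHom.mem_ker, Ideal.mem_span_singleton, map_mk_eq_zero_iff]
  refine ⟨fun h ↦ ?_, ?_⟩
  · choose g hg using fun n ↦ Ideal.mem_span_singleton.1 (h n)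
    exact ⟨fun n ↦ g n, MvPowerSeries.ext fun n ↦ (hg n).trans (coeff_C_mul ..).symm⟩
  · rintro ⟨g, rfl⟩ n
    rw [coeff_C_mul]
    exact Ideal.mul_mem_right _ _ (Ideal.mem_span_singleton_self w)

theorem mvPowerSeries_map_surjective {W W' : Type*} [CommRing W] [CommRing W'] {φ : W →+* W'}
    (hφ : Function.Surjective φ) : Function.Surjective (map (σ := σ) φ) := by
  intro f
  choose g hg using fun n ↦ hφ (coeff n f)
  exact ⟨fun n ↦ g n, MvPowerSeries.ext hg⟩

section Coeffwise

variable {W T W' : Type*} [CommRing W] [CommRing T] [CommRing W'] [Algebra W T] [Algebra W W']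

/-- The linear map on power series applying a linear map `l` to every coefficient. -/
def mapCoeff (l : T →ₗ[W] W') : MvPowerSeries σ T →ₗ[W] MvPowerSeries σ W' :=
  l.compLeft (σ →₀ ℕ)

theorem coeff_mapCoeff (l : T →ₗ[W] W') (g : MvPowerSeries σ T) (n : σ →₀ ℕ) :
    coeff n (mapCoeff l g) = l (coeff n g) :=
  rfl

theorem mapCoeff_C (l : T →ₗ[W] W') (t : T) :
    mapCoeff l (C t) = (C (l t) : MvPowerSeries σ W') := by
  classical
  ext n
  rw [coeff_mapCoeff, coeff_C, coeff_C, apply_ite l, map_zero]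

theorem mapCoeff_mul_map_algebraMap (l : T →ₗ[W] W') (g : MvPowerSeries σ T)
    (c : MvPowerSeries σ W) :
    mapCoeff l (g * map (algebraMap W T) c) = mapCoeff l g * map (algebraMap W W') c := by
  classical
  ext n
  simp only [coeff_mapCoeff, coeff_mul, map_sum, coeff_map, ← Algebra.commutes (R := W),
    ← Algebra.smul_def, map_smul]

theorem mapCoeff_mem_map (l : T →ₗ[W] W') {Q : Ideal (MvPowerSeries σ W)} {g : MvPowerSeries σ T}
    (hg : g ∈ Q.map (map (algebraMap W T))) :
    mapCoeff l g ∈ Q.map (map (algebraMap W W')) := by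
  induction hg using Submodule.closure_induction with
  | zero => rw [map_zero]; exact zero_mem _
  | add x y _ _ hx hy => rw [map_add]; exact add_mem hx hy
  | smul_mem t x hx =>
    obtain ⟨q, hq, rfl⟩ := hx
    rw [smul_eq_mul]
    exact (mapCoeff_mul_map_algebraMap l t q).symm ▸
      Ideal.mul_mem_left _ _ (Ideal.mem_map_of_mem _ hq)

theorem C_mul_map_mem_map_of_mem_completedTensorIdeal {P Q : Ideal (MvPowerSeries σ W)}
    (l : MvPowerSeries σ W →ₗ[W] W') (hP : ∀ t ∈ P, l t = 0) {a c : MvPowerSeries σ W}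
    (h : C a * map C c ∈ completedTensorIdeal P Q) :
    C (l a) * map (algebraMap W W') c ∈ Q.map (map (algebraMap W W')) := by
  rw [completedTensorIdeal, c_eq_algebraMap (σ := σ) (R := W)] at h
  obtain ⟨y, hy, z, hz, hyz⟩ := Submodule.mem_sup.1 h
  have hy0 : mapCoeff l y = 0 := by
    ext n
    rw [coeff_mapCoeff, hP _ (coeff_mem_of_mem_map_C hy n), map_zero]
  rw [← mapCoeff_C, ← mapCoeff_mul_map_algebraMap, ← hyz, map_add, hy0, zero_add]
  exact mapCoeff_mem_map l hz

end Coeffwise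

theorem C_mul_map_C_notMem_completedTensorIdeal_of_field {k : Type*} [Field k]
    {P Q : Ideal (MvPowerSeries σ k)} {a c : MvPowerSeries σ k} (ha : a ∉ P) (hc : c ∉ Q) :
    C a * map C c ∉ completedTensorIdeal P Q := by
  intro h
  obtain ⟨l, hla, hlP⟩ := Submodule.exists_le_ker_of_notMem (K := k)
    (p := P.restrictScalars k) (v := a) ha
  have hmem := C_mul_map_mem_map_of_mem_completedTensorIdeal l (fun t ht ↦ hlP ht) h
  rw [Algebra.algebraMap_self, map_id, Ideal.map_id, RingHom.id_apply] at hmem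
  exact hc ((Ideal.unit_mul_mem_iff_mem Q ((IsUnit.mk0 _ hla).map C)).1 hmem)

end Functional

section FunctionalDiscreteValuationRing

open IsLocalRing MvPowerSeries

theorem exists_notMem_sup_span_singleton_sub_pow_mul_mem {A : Type*} [CommRing A] [IsLocalRing A]
    [IsNoetherianRing A] {P : Ideal A} {x a : A} (hx : x ∈ maximalIdeal A) (ha : a ∉ P) :
    ∃ (s : ℕ) (b : A), b ∉ P ⊔ Ideal.span {x} ∧ a - x ^ s * b ∈ P := by
  classical
  have hex : ∃ n : ℕ, a ∉ P ⊔ Ideal.span {x ^ n} := by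
    by_contra! hex
    refine ha (mem_of_forall_mem_sup_pow (J := Ideal.span {x}) ?_ fun n ↦ ?_)
    · exact ne_top_of_le_ne_top (maximalIdeal.isMaximal A).ne_top
        ((Ideal.span_singleton_le_iff_mem _).2 hx)
    · rw [Ideal.span_singleton_pow]
      exact hex n
  obtain ⟨s, hs⟩ : ∃ s, Nat.find hex = s + 1 :=
    Nat.exists_eq_succ_of_ne_zero fun h0 ↦ Nat.find_spec hex (by simp [h0])
  have hlast : a ∈ P ⊔ Ideal.span {x ^ s} := not_not.1 (Nat.find_min hex (by lia))
  obtain ⟨y, hy, z, hz, rfl⟩ := Submodule.mem_sup.1 hlast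
  obtain ⟨b, rfl⟩ := Ideal.mem_span_singleton.1 hz
  refine ⟨s, b, fun hb ↦ Nat.find_spec hex ?_, by rwa [add_sub_cancel_right]⟩
  obtain ⟨y', hy', z', hz', rfl⟩ := Submodule.mem_sup.1 hb
  obtain ⟨c, rfl⟩ := Ideal.mem_span_singleton.1 hz'
  rw [hs, mul_add, ← add_assoc]
  refine Submodule.add_mem_sup (add_mem hy (Ideal.mul_mem_left _ _ hy')) ?_
  exact Ideal.mem_span_singleton.2 ⟨c, by ring⟩

variable {W : Type*} [CommRing W] [IsDomain W] [IsDiscreteValuationRing W] {π : W}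

theorem exists_le_eq_span_mk_pow (hπ : Irreducible π) {n : ℕ}
    (I : Ideal (W ⧸ Ideal.span {π ^ n})) :
    ∃ k ≤ n, I = Ideal.span {Ideal.Quotient.mk (Ideal.span {π ^ n}) (π ^ k)} := by
  set q := Ideal.Quotient.mk (Ideal.span {π ^ n})
  have hle : Ideal.span {π ^ n} ≤ I.comap q := by
    conv_lhs => rw [← Ideal.mk_ker (I := Ideal.span {π ^ n})]
    exact Ideal.ker_le_comap q
  have hne : I.comap q ≠ ⊥ := by
    refine ne_bot_of_le_ne_bot ?_ hle
    rw [Ne, Ideal.span_singleton_eq_bot]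
    exact pow_ne_zero n hπ.ne_zero
  obtain ⟨k, hk⟩ := IsDiscreteValuationRing.ideal_eq_span_pow_irreducible hne hπ
  refine ⟨k, ?_, ?_⟩
  · rw [hk, Ideal.span_singleton_le_span_singleton] at hle
    exact (pow_dvd_pow_iff hπ.ne_zero hπ.not_isUnit).1 hle
  · rw [← Ideal.map_comap_of_surjective q Ideal.Quotient.mk_surjective I, hk, Ideal.map_span,
      Set.image_singleton]

theorem baer_quotient_span_pow (hπ : Irreducible π) (n : ℕ) :
    Module.Baer (W ⧸ Ideal.span {π ^ n}) (W ⧸ Ideal.span {π ^ n}) := by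
  intro I g
  set q := Ideal.Quotient.mk (Ideal.span {π ^ n})
  obtain ⟨k, hkn, hk⟩ := exists_le_eq_span_mk_pow hπ I
  let e : I := ⟨q (π ^ k), hk ▸ Ideal.mem_span_singleton_self _⟩
  obtain ⟨y, hy⟩ := Ideal.Quotient.mk_surjective (g e)
  have hmul : q (π ^ (n - k)) * g e = 0 := by
    rw [← smul_eq_mul, ← map_smul]
    convert map_zero g
    refine Subtype.ext ?_
    change q (π ^ (n - k)) * q (π ^ k) = 0
    rw [← map_mul, ← pow_add, Nat.sub_add_cancel hkn]
    exact Ideal.Quotient.eq_zero_iff_mem.2 (Ideal.mem_span_singleton_self _)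
  obtain ⟨z, rfl⟩ : π ^ k ∣ y := by
    rwa [← hy, ← map_mul, Ideal.Quotient.eq_zero_iff_mem, Ideal.mem_span_singleton,
      ← Nat.sub_add_cancel hkn, pow_add, Nat.add_sub_cancel,
      mul_dvd_mul_iff_left (pow_ne_zero _ hπ.ne_zero)] at hmul
  refine ⟨LinearMap.toSpanSingleton _ _ (q z), fun x hx ↦ ?_⟩
  obtain ⟨u, rfl⟩ := Ideal.mem_span_singleton'.1 (hk ▸ hx)
  have hu : (⟨u * q (π ^ k), hx⟩ : I) = u • e := rfl
  rw [hu, map_smul, ← hy, LinearMap.toSpanSingleton_apply, smul_eq_mul, smul_eq_mul, map_mul,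
    mul_assoc]

section Algebra

variable {A : Type*} [CommRing A] [Algebra W A] {P : Ideal A} [P.IsPrime] {a : A}

theorem mem_span_pow_of_algebraMap_mul_mem (hπ : Irreducible π) (hP : algebraMap W A π ∉ P)
    (ha : a ∉ P ⊔ Ideal.span {algebraMap W A π}) {n : ℕ} {w : W}
    (h : algebraMap W A w * a ∈ P ⊔ Ideal.span {algebraMap W A π ^ n}) :
    w ∈ Ideal.span {π ^ n} := by
  set x := algebraMap W A π
  rcases eq_or_ne w 0 with rfl | hw
  · exact zero_mem _
  obtain ⟨k, u, rfl⟩ := IsDiscreteValuationRing.eq_unit_mul_pow_irreducible hw hπ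
  rcases le_or_gt n k with hnk | hkn
  · exact Ideal.mem_span_singleton.2 (Dvd.dvd.mul_left (pow_dvd_pow _ hnk) _)
  obtain ⟨m, rfl⟩ := Nat.exists_eq_add_of_lt hkn
  obtain ⟨y, hy, z, hz, hyz⟩ := Submodule.mem_sup.1 h
  obtain ⟨t, rfl⟩ := Ideal.mem_span_singleton.1 hz
  have hmul : x ^ k * (algebraMap W A u * a - x * (x ^ m * t)) ∈ P := by
    convert hy using 1
    rw [eq_sub_of_add_eq hyz, map_mul, map_pow]
    ring
  have hsub := (Ideal.IsPrime.mem_or_mem ‹_› hmul).resolve_left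
    fun hk ↦ hP (Ideal.IsPrime.mem_of_pow_mem ‹_› k hk)
  refine absurd ((Ideal.unit_mul_mem_iff_mem _ (u.isUnit.map (algebraMap W A))).1 ?_) ha
  rw [← sub_add_cancel (algebraMap W A u * a) (x * (x ^ m * t))]
  exact Submodule.add_mem_sup hsub (Ideal.mem_span_singleton.2 ⟨_, rfl⟩)

/-- The functional extends `w • a ↦ w` from the span of `a`, using that `W ⧸ π ^ n` is
self-injective. -/
theorem exists_linearMap_apply_eq_one (hπ : Irreducible π) (hP : algebraMap W A π ∉ P)
    (ha : a ∉ P ⊔ Ideal.span {algebraMap W A π}) (n : ℕ) :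
    ∃ l : A →ₗ[W] W ⧸ Ideal.span {π ^ n}, (∀ t ∈ P, l t = 0) ∧ l a = 1 := by
  set J := P ⊔ Ideal.span {algebraMap W A π ^ n}
  let ψ : W ⧸ Ideal.span {π ^ n} →+* A ⧸ J := Ideal.quotientMap J (algebraMap W A) (by
    rw [Ideal.span_singleton_le_iff_mem, Ideal.mem_comap, map_pow]
    exact Ideal.mem_sup_right (Ideal.mem_span_singleton_self _))
  algebraize [ψ]
  have : IsScalarTower W (W ⧸ Ideal.span {π ^ n}) (A ⧸ J) :=
    IsScalarTower.of_algebraMap_eq fun _ ↦ rfl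
  have hinj : Function.Injective (LinearMap.toSpanSingleton (W ⧸ Ideal.span {π ^ n}) _
      (Ideal.Quotient.mk J a)) := by
    rw [injective_iff_map_eq_zero]
    intro b hb
    obtain ⟨w, rfl⟩ := Ideal.Quotient.mk_surjective b
    rw [LinearMap.toSpanSingleton_apply, Algebra.smul_def] at hb
    exact Ideal.Quotient.eq_zero_iff_mem.2 (mem_span_pow_of_algebraMap_mul_mem hπ hP ha
      (Ideal.Quotient.eq_zero_iff_mem.1 hb))
  obtain ⟨h, hh⟩ := Module.Baer.extension_property (baer_quotient_span_pow hπ n) _ hinj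
    LinearMap.id
  refine ⟨h.restrictScalars W ∘ₗ (Ideal.Quotient.mkₐ W J).toLinearMap, fun t ht ↦ ?_, ?_⟩
  · change h (Ideal.Quotient.mk J t) = 0
    rw [Ideal.Quotient.eq_zero_iff_mem.2 (Ideal.mem_sup_left ht), map_zero]
  · simpa using LinearMap.congr_fun hh 1

end Algebra

theorem C_mul_map_C_notMem_completedTensorIdeal_of_isDiscreteValuationRing {σ : Type*} [Finite σ]
    (hπ : Irreducible π) {P Q : Ideal (MvPowerSeries σ W)} [P.IsPrime] [Q.IsPrime]
    (hπP : C π ∉ P) (hπQ : C π ∉ Q) {a c : MvPowerSeries σ W} (ha : a ∉ P) (hc : c ∉ Q) :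
    C a * map C c ∉ completedTensorIdeal P Q := by
  intro h
  have hπm : (C π : MvPowerSeries σ W) ∈ maximalIdeal _ := by
    rw [mem_maximalIdeal_mvPowerSeries_iff, constantCoeff_C]
    exact (IsLocalRing.mem_maximalIdeal _).2 hπ.not_isUnit
  obtain ⟨s, b, hb, hs⟩ := exists_notMem_sup_span_singleton_sub_pow_mul_mem hπm ha
  have hb_mem : C b * map C (C π ^ s * c) ∈ completedTensorIdeal P Q := by
    convert sub_mem h (Ideal.mem_sup_left
      (Ideal.mul_mem_right (map C c) _ (Ideal.mem_map_of_mem C hs))) using 1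
    rw [map_mul, map_sub, map_mul, map_pow, map_pow, map_C]
    ring
  have hQ : C π ^ s * c ∈ Q := by
    refine mem_of_forall_mem_sup_pow (J := Ideal.span {C π}) ?_ fun n ↦ ?_
    · exact ne_top_of_le_ne_top (maximalIdeal.isMaximal _).ne_top
        ((Ideal.span_singleton_le_iff_mem _).2 hπm)
    rw [c_eq_algebraMap] at hπP hb
    obtain ⟨l, hlP, hlb⟩ := exists_linearMap_apply_eq_one hπ hπP hb n
    have hmem := C_mul_map_mem_map_of_mem_completedTensorIdeal l hlP hb_mem
    rwa [hlb, map_one, one_mul, Ideal.Quotient.algebraMap_eq, ← Ideal.mem_comap,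
      Ideal.comap_map_of_surjective' _ (mvPowerSeries_map_surjective Ideal.Quotient.mk_surjective),
      ker_map_mk_span_singleton, map_pow, ← Ideal.span_singleton_pow] at hmem
  exact (Ideal.IsPrime.mem_or_mem ‹_› hQ).elim
    (fun h ↦ hπQ (Ideal.IsPrime.mem_of_pow_mem ‹_› s h)) hc

end FunctionalDiscreteValuationRing

section DimensionInequality

open IsLocalRing MvPowerSeries

/-- Serre's dimension inequality for the ring `A`, with `d` in the role of the dimension of `A`:
any two closed subschemes of `Spec A` intersect in at least the expected dimension. -/
def DimensionInequality (A : Type*) [CommRing A] (d : WithBot ℕ∞) : Prop :=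
  ∀ I J : Ideal A,
    ringKrullDim (A ⧸ I) + ringKrullDim (A ⧸ J) ≤ d + ringKrullDim (A ⧸ (I ⊔ J))

theorem exists_isPrime_le_ringKrullDim_quotient_eq {A : Type*} [CommRing A] [IsLocalRing A]
    [IsNoetherianRing A] {I : Ideal A} (hI : I ≠ ⊤) :
    ∃ P : Ideal A, P.IsPrime ∧ I ≤ P ∧ ringKrullDim (A ⧸ I) = ringKrullDim (A ⧸ P) := by
  have : Nontrivial (A ⧸ I) := Ideal.Quotient.nontrivial_iff.2 hI
  obtain ⟨P, hP, h⟩ := exists_mem_support_supportDim_eq (R := A) (A ⧸ I)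
  rw [Module.supportDim_eq_ringKrullDim_quotient_annihilator, Ideal.annihilator_quotient] at h
  rw [Module.mem_support_iff_of_finite, Ideal.annihilator_quotient] at hP
  exact ⟨P.asIdeal, P.2, hP, h⟩

theorem ringKrullDim_quotient_map_of_surjective {A B : Type*} [CommRing A] [CommRing B]
    {φ : A →+* B} (hφ : Function.Surjective φ) (I : Ideal A) :
    ringKrullDim (B ⧸ I.map φ) = ringKrullDim (A ⧸ (I ⊔ RingHom.ker φ)) := by
  have hker : RingHom.ker ((Ideal.Quotient.mk (I.map φ)).comp φ) = I ⊔ RingHom.ker φ := by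
    rw [← RingHom.comap_ker, Ideal.mk_ker, Ideal.comap_map_of_surjective' _ hφ]
  rw [← ringKrullDim_eq_of_ringEquiv (RingHom.quotientKerEquivOfSurjective
    (f := (Ideal.Quotient.mk (I.map φ)).comp φ) (Ideal.Quotient.mk_surjective.comp hφ)), hker]

namespace DimensionInequality

theorem of_forall_isPrime {A : Type*} [CommRing A] [IsLocalRing A] [IsNoetherianRing A]
    {d : WithBot ℕ∞}
    (h : ∀ P Q : Ideal A, P.IsPrime → Q.IsPrime →
      ringKrullDim (A ⧸ P) + ringKrullDim (A ⧸ Q) ≤ d + ringKrullDim (A ⧸ (P ⊔ Q))) :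
    DimensionInequality A d := by
  intro I J
  rcases eq_or_ne I ⊤ with rfl | hI
  · simp [ringKrullDim_eq_bot_of_subsingleton]
  rcases eq_or_ne J ⊤ with rfl | hJ
  · simp [ringKrullDim_eq_bot_of_subsingleton]
  obtain ⟨P, hP, hIP, hdimP⟩ := exists_isPrime_le_ringKrullDim_quotient_eq hI
  obtain ⟨Q, hQ, hJQ, hdimQ⟩ := exists_isPrime_le_ringKrullDim_quotient_eq hJ
  rw [hdimP, hdimQ]
  refine (h P Q hP hQ).trans ?_
  gcongr
  exact ringKrullDim_le_of_surjective (Ideal.Quotient.factor (sup_le_sup hIP hJQ))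
    (Ideal.Quotient.factor_surjective _)

variable {A B : Type*} [CommRing A] [CommRing B] {φ : A →+* B} {d : WithBot ℕ∞}

theorem add_le_of_ker_le (hB : DimensionInequality B d) (hφ : Function.Surjective φ)
    {I J : Ideal A} (hI : RingHom.ker φ ≤ I) :
    ringKrullDim (A ⧸ I) + ringKrullDim (A ⧸ (J ⊔ RingHom.ker φ)) ≤
      d + ringKrullDim (A ⧸ (I ⊔ J)) := by
  have h := hB (I.map φ) (J.map φ)
  rwa [← Ideal.map_sup, ringKrullDim_quotient_map_of_surjective hφ,
    ringKrullDim_quotient_map_of_surjective hφ, ringKrullDim_quotient_map_of_surjective hφ,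
    sup_eq_left.2 hI, sup_eq_left.2 (hI.trans le_sup_left)] at h

theorem of_surjective (hA : DimensionInequality A d) (hφ : Function.Surjective φ) :
    DimensionInequality B d := by
  intro I J
  have hdim (K : Ideal A) :
      ringKrullDim (B ⧸ K.map φ) = ringKrullDim (A ⧸ (K ⊔ RingHom.ker φ)) :=
    ringKrullDim_quotient_map_of_surjective hφ K
  have h := hA (I.comap φ ⊔ RingHom.ker φ) (J.comap φ ⊔ RingHom.ker φ)
  rwa [← sup_sup_distrib_right, ← hdim, ← hdim, ← hdim, Ideal.map_sup,
    Ideal.map_comap_of_surjective φ hφ, Ideal.map_comap_of_surjective φ hφ] at h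

end DimensionInequality

theorem dimensionInequality_mvPowerSeries_of_field {σ : Type*} [Finite σ] {k : Type u} [Field k] :
    DimensionInequality (MvPowerSeries σ k) (Nat.card σ) := by
  refine .of_forall_isPrime fun P Q _ _ ↦ ?_
  have := ringKrullDim_quotient_add_le_of_notMem_completedTensorIdeal (P := P) (Q := Q)
    fun a ha c hc ↦ C_mul_map_C_notMem_completedTensorIdeal_of_field ha hc
  rwa [ringKrullDim_eq_zero_of_field, zero_add] at this

section DiscreteValuationRing

variable {σ : Type*} [Finite σ] {W : Type u} [CommRing W] [IsDomain W] [IsDiscreteValuationRing W]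

theorem ringKrullDim_quotient_add_le_of_C_mem {π : W} (hπ : Irreducible π)
    {P : Ideal (MvPowerSeries σ W)} (Q : Ideal (MvPowerSeries σ W)) [Q.IsPrime] (hP : C π ∈ P) :
    ringKrullDim (_ ⧸ P) + ringKrullDim (_ ⧸ Q) ≤
      1 + Nat.card σ + ringKrullDim (_ ⧸ (P ⊔ Q)) := by
  have : (Ideal.span {π}).IsMaximal := hπ.maximalIdeal_eq ▸ maximalIdeal.isMaximal W
  let _ : Field (W ⧸ Ideal.span {π}) := Ideal.Quotient.field _
  have hC : (C π : MvPowerSeries σ W) ∈ maximalIdeal _ := by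
    rw [mem_maximalIdeal_mvPowerSeries_iff, constantCoeff_C]
    exact (IsLocalRing.mem_maximalIdeal _).2 hπ.not_isUnit
  have hred := DimensionInequality.add_le_of_ker_le (I := P) (J := Q)
    dimensionInequality_mvPowerSeries_of_field
    (mvPowerSeries_map_surjective (σ := σ) (Ideal.Quotient.mk_surjective (I := Ideal.span {π})))
    (by rwa [ker_map_mk_span_singleton, Ideal.span_singleton_le_iff_mem])
  have hQ := ringKrullDim_quotient_le_ringKrullDim_quotient_sup_span_range_add
    (L := Q) (Ideal.IsPrime.ne_top ‹_›) (f := fun _ : Unit ↦ (C π : MvPowerSeries σ W)) fun _ ↦ hC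
  rw [ker_map_mk_span_singleton] at hred
  rw [Set.range_const, Nat.card_unique, Nat.cast_one] at hQ
  calc ringKrullDim (_ ⧸ P) + ringKrullDim (_ ⧸ Q)
      ≤ ringKrullDim (_ ⧸ P) + (ringKrullDim (_ ⧸ (Q ⊔ Ideal.span {C π})) + 1) := by gcongr
    _ ≤ Nat.card σ + ringKrullDim (_ ⧸ (P ⊔ Q)) + 1 := by
        rw [← add_assoc]
        gcongr
    _ = 1 + Nat.card σ + ringKrullDim (_ ⧸ (P ⊔ Q)) := by abel

theorem dimensionInequality_mvPowerSeries_of_isDiscreteValuationRing :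
    DimensionInequality (MvPowerSeries σ W) (1 + Nat.card σ) := by
  obtain ⟨π, hπ⟩ := IsDiscreteValuationRing.exists_irreducible W
  refine .of_forall_isPrime fun P Q _ _ ↦ ?_
  by_cases hP : C π ∈ P
  · exact ringKrullDim_quotient_add_le_of_C_mem hπ Q hP
  by_cases hQ : C π ∈ Q
  · rw [add_comm, sup_comm]
    exact ringKrullDim_quotient_add_le_of_C_mem hπ P hQ
  have := ringKrullDim_quotient_add_le_of_notMem_completedTensorIdeal (P := P) (Q := Q)
    fun a ha c hc ↦ C_mul_map_C_notMem_completedTensorIdeal_of_isDiscreteValuationRing hπ hP hQ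
      ha hc
  rwa [IsDiscreteValuationRing.ringKrullDim_eq_one W] at this

end DiscreteValuationRing

end DimensionInequality

section FormallySmoothField

open MvPolynomial

variable {F L : Type*}

theorem subsingleton_h1Cotangent_iff [CommRing F] [CommRing L] [Algebra F L] :
    Subsingleton (Algebra.H1Cotangent F L) ↔
      ∀ f : MvPolynomial L F, aeval (id : L → L) f = 0 →
        (∀ i, aeval (id : L → L) (pderiv i f) = 0) →
        f ∈ RingHom.ker (aeval (R := F) (id : L → L)) ^ 2 := by
  have hmem (f : (Algebra.Generators.self F L).toExtension.ker) :
      Algebra.Extension.Cotangent.mk f ∈ LinearMap.ker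
        (Algebra.Generators.self F L).toExtension.cotangentComplex ↔
      ∀ i, aeval (id : L → L) (pderiv i f.1) = 0 := by
    rw [LinearMap.mem_ker, Algebra.Extension.cotangentComplex_mk,
      ← (Algebra.Generators.self F L).cotangentSpaceBasis.repr.map_eq_zero_iff, Finsupp.ext_iff]
    exact forall_congr' fun i ↦ Eq.congr_left
      ((Algebra.Generators.self F L).cotangentSpaceBasis_repr_one_tmul f.1 i)
  rw [subsingleton_iff_forall_eq 0]
  refine ⟨fun h f hf hd ↦ ?_, ?_⟩
  · have := congrArg Subtype.val (h ⟨_, (hmem ⟨f, hf⟩).2 hd⟩)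
    exact (Algebra.Extension.Cotangent.mk_eq_zero_iff _).1 this
  · rintro h ⟨x, hx⟩
    obtain ⟨f, rfl⟩ := Algebra.Extension.Cotangent.mk_surjective x
    exact Subtype.ext ((Algebra.Extension.Cotangent.mk_eq_zero_iff f).2
      (h f.1 f.2 ((hmem f).1 hx)))

theorem aeval_id_rename_algHom {E : Type*} [CommRing F] [CommRing E] [CommRing L] [Algebra F E]
    [Algebra F L] (φ : E →ₐ[F] L) (g : MvPolynomial E F) :
    aeval (id : L → L) (rename φ g) = φ (aeval id g) := by
  rw [aeval_rename]
  exact (comp_aeval_apply id φ g).symm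

/-- A class in `H1Cotangent F L` is already defined over a finitely generated subextension. -/
theorem formallySmooth_of_perfectField [Field F] [Field L] [Algebra F L] [PerfectField F] :
    Algebra.FormallySmooth F L := by
  refine ⟨inferInstance, subsingleton_h1Cotangent_iff.2 fun f hf hd ↦ ?_⟩
  let E := IntermediateField.adjoin F (f.vars : Set L)
  have : Algebra.EssFiniteType F E :=
    IntermediateField.essFiniteType_iff.2 (IntermediateField.fg_adjoin_finset _)
  obtain ⟨h, hrename⟩ : ∃ h : MvPolynomial E F, rename E.val h = f :=
    exists_rename_eq_of_vars_subset_range f _ Subtype.val_injective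
      fun l hl ↦ ⟨⟨l, IntermediateField.subset_adjoin F _ hl⟩, rfl⟩
  have hh : aeval (id : E → E) h = 0 := by
    rw [← hrename, aeval_id_rename_algHom] at hf
    exact (map_eq_zero E.val).1 hf
  have hdh (i : E) : aeval (id : E → E) (pderiv i h) = 0 := by
    have hdi := hd (E.val i)
    rw [← hrename, pderiv_rename (f := E.val) Subtype.val_injective, aeval_id_rename_algHom] at hdi
    exact (map_eq_zero E.val).1 hdi
  have hmem := subsingleton_h1Cotangent_iff.1 inferInstance h hh hdh
  have hle : RingHom.ker (aeval (R := F) (id : E → E)) ≤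
      (RingHom.ker (aeval (R := F) (id : L → L))).comap (rename E.val) := by
    intro g hg
    rw [Ideal.mem_comap, RingHom.mem_ker, aeval_id_rename_algHom, (RingHom.mem_ker).1 hg, map_zero]
  rw [← hrename]
  exact Ideal.le_comap_pow _ 2 (Ideal.pow_right_mono hle 2 hmem)

end FormallySmoothField

section PowerSeriesEvaluation

open MvPowerSeries IsLocalRing

variable {σ W B : Type*} [Finite σ] [CommRing W] [CommRing B]

theorem exists_ringHom_mvPowerSeries_of_isAdicComplete (I : Ideal B) [hI : IsAdicComplete I B]
    (φ : W →+* B) {x : σ → B} (hx : ∀ i, x i ∈ I) :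
    ∃ Φ : MvPowerSeries σ W →+* B, (∀ w, Φ (C w) = φ w) ∧ ∀ i, Φ (X i) = x i := by
  let _ : WithIdeal B := ⟨I⟩
  have hadic : IsAdic I := rfl
  obtain ⟨_, _⟩ := hadic.isAdicComplete_iff.1 hI
  let _ : UniformSpace W := ⊥
  have : DiscreteTopology W := ⟨rfl⟩
  have hφ : Continuous φ := continuous_of_discreteTopology
  have hEval : HasEval x := by
    refine ⟨fun i ↦ hadic.hasBasis_nhds_zero.tendsto_right_iff.2 fun n _ ↦ ?_, ?_⟩
    · filter_upwards [Filter.eventually_ge_atTop n] with k hk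
      exact Ideal.pow_le_pow_right hk (Ideal.pow_mem_pow (hx i) k)
    · rw [Filter.cofinite_eq_bot]
      exact Filter.tendsto_bot
  refine ⟨eval₂Hom hφ hEval, fun w ↦ ?_, fun i ↦ ?_⟩
  · rw [coe_eval₂Hom, eval₂_C]
  · rw [coe_eval₂Hom, eval₂_X]

theorem exists_surjective_ringHom_mvPowerSeries_of_isAdicComplete (I : Ideal B)
    [IsAdicComplete I B] (φ : W →+* B) {x : σ → B} (hx : Ideal.span (Set.range x) ≤ I)
    (hφ : ∀ b, ∃ w, b - φ w ∈ Ideal.span (Set.range x)) :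
    ∃ Φ : MvPowerSeries σ W →+* B, Function.Surjective Φ := by
  obtain ⟨Φ, hC, hX⟩ := exists_ringHom_mvPowerSeries_of_isAdicComplete I φ
    fun i ↦ hx (Ideal.subset_span ⟨i, rfl⟩)
  have hmap : (Ideal.span (Set.range (X : σ → MvPowerSeries σ W))).map Φ =
      Ideal.span (Set.range x) := by
    rw [Ideal.map_span, ← Set.range_comp, show Φ ∘ X = x from funext hX]
  have : IsHausdorff ((Ideal.span (Set.range (X : σ → MvPowerSeries σ W))).map Φ) B :=
    .of_map (J := I) (by rwa [hmap, Algebra.algebraMap_self, Ideal.map_id])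
  refine ⟨Φ, surjective_of_mk_map_comp_surjective
    (I := Ideal.span (Set.range (X : σ → MvPowerSeries σ W))) Φ fun b ↦ ?_⟩
  obtain ⟨b, rfl⟩ := Ideal.Quotient.mk_surjective b
  obtain ⟨w, hw⟩ := hφ b
  refine ⟨C w, ?_⟩
  rw [RingHom.comp_apply, hC, eq_comm, Ideal.Quotient.eq, hmap]
  exact hw

theorem isNoetherianRing_of_isAdicComplete [IsNoetherianRing W] {I : Ideal B} (hI : I.FG)
    [IsAdicComplete I B] (φ : W →+* B) (hφ : ∀ b, ∃ w, b - φ w ∈ I) : IsNoetherianRing B := by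
  obtain ⟨n, x, rfl⟩ := Submodule.fg_iff_exists_fin_generating_family.1 hI
  obtain ⟨Φ, hΦ⟩ := exists_surjective_ringHom_mvPowerSeries_of_isAdicComplete _ φ le_rfl hφ
  exact isNoetherianRing_of_surjective _ _ Φ hΦ

theorem dimensionInequality_of_isAdicComplete_of_perfectField {B : Type u} [CommRing B]
    [IsLocalRing B] [IsAdicComplete (maximalIdeal B) B] (F : Type*) [Field F] [PerfectField F]
    [Algebra F B] {x : σ → B} (hx : Ideal.span (Set.range x) = maximalIdeal B) :
    DimensionInequality B (Nat.card σ) := by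
  have : Algebra.FormallySmooth F (ResidueField B) := formallySmooth_of_perfectField
  obtain ⟨g, hg⟩ := Algebra.FormallySmooth.exists_mkₐ_comp_eq_of_isAdicComplete
    (R := F) (I := maximalIdeal B) (AlgHom.id F (ResidueField B))
  obtain ⟨Φ, hΦ⟩ := exists_surjective_ringHom_mvPowerSeries_of_isAdicComplete (maximalIdeal B)
    (g : ResidueField B →+* B) hx.le fun b ↦ ⟨residue B b, by
      rw [hx, ← Ideal.Quotient.eq]
      exact (AlgHom.congr_fun hg (residue B b)).symm⟩
  exact dimensionInequality_mvPowerSeries_of_field.of_surjective hΦ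

end PowerSeriesEvaluation

section FormallySmoothQuotient

section

variable {A V : Type*} [CommRing A] [CommRing V] [Algebra A V] [Module.Flat A V]

theorem flat_quotient_map (I : Ideal A) :
    Module.Flat (A ⧸ I) (V ⧸ I.map (algebraMap A V)) :=
  .of_linearEquiv (Algebra.TensorProduct.quotIdealMapEquivQuotTensor V I).toLinearEquiv

theorem ker_factor_pow_succ_sq_eq_bot (I : Ideal A) (n : ℕ) :
    RingHom.ker (Ideal.Quotient.factorPow I (Nat.le_succ (n + 1))) ^ 2 = ⊥ := by
  rw [Ideal.Quotient.factor_ker, ← Ideal.map_pow, ← pow_mul, Ideal.map_eq_bot_iff_le_ker,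
    Ideal.mk_ker]
  exact Ideal.pow_le_pow_right (by lia)

theorem formallySmooth_quotient_pow_succ {I : Ideal A}
    (h : (algebraMap (A ⧸ I) (V ⧸ I.map (algebraMap A V))).FormallySmooth) (n : ℕ) :
    (algebraMap (A ⧸ I ^ (n + 1)) (V ⧸ (I ^ (n + 1)).map (algebraMap A V))).FormallySmooth := by
  induction n with
  | zero => rwa [zero_add, pow_one]
  | succ n ih =>
    have hle : I ^ (n + 1 + 1) ≤ I ^ (n + 1) := Ideal.pow_le_pow_right (Nat.le_succ _)
    refine RingHom.FormallySmooth.of_flat_of_ker_eq_map_of_square_zero _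
      (RingHom.flat_algebraMap_iff.2 (flat_quotient_map _))
      (Ideal.Quotient.factor hle) (Ideal.Quotient.factor (Ideal.map_mono hle)) _
      (Ideal.Quotient.factor_surjective _) (Ideal.Quotient.factor_surjective _)
      (Ideal.Quotient.ringHom_ext (RingHom.ext fun a ↦ rfl))
      (ker_factor_pow_succ_sq_eq_bot I n) ?_ ih
    rw [Ideal.Quotient.factor_ker, Ideal.Quotient.factor_ker, Ideal.map_map, Ideal.map_map]
    rfl

end

section

variable {V : Type*} [CommRing V] {I : Ideal ℤ}

theorem exists_comp_eq_of_formallySmooth_int {Q Q' : Type*} [CommRing Q] [CommRing Q']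
    (h : (algebraMap (ℤ ⧸ I) (V ⧸ I.map (algebraMap ℤ V))).FormallySmooth) {q : Q →+* Q'}
    (hq : Function.Surjective q) (hker : IsNilpotent (RingHom.ker q))
    (hI : I.map (Int.castRingHom Q) = ⊥) (f : V →+* Q') :
    ∃ g : V →+* Q, q.comp g = f := by
  have hIQ : I ≤ RingHom.ker (Int.castRingHom Q) := (Ideal.map_eq_bot_iff_le_ker _).1 hI
  have hIQ' : I.map (algebraMap ℤ V) ≤ RingHom.ker f := by
    rw [Ideal.map_le_iff_le_comap, RingHom.comap_ker,
      RingHom.ext_int (f.comp (algebraMap ℤ V)) (q.comp (Int.castRingHom Q)), ← RingHom.comap_ker]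
    exact hIQ.trans (Ideal.comap_mono bot_le)
  have := RingHom.formallySmooth_algebraMap.1 h
  let ι : ℤ ⧸ I →+* Q := Ideal.Quotient.lift I (Int.castRingHom Q) hIQ
  let _ : Algebra (ℤ ⧸ I) Q := ι.toAlgebra
  let _ : Algebra (ℤ ⧸ I) Q' := (q.comp ι).toAlgebra
  let qₐ : Q →ₐ[ℤ ⧸ I] Q' := { q with commutes' := fun _ ↦ rfl }
  let fₐ : (V ⧸ I.map (algebraMap ℤ V)) →ₐ[ℤ ⧸ I] Q' :=
    { Ideal.Quotient.lift _ f hIQ' with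
      commutes' := RingHom.congr_fun (Ideal.Quotient.ringHom_ext (RingHom.ext_int _ _) :
        (Ideal.Quotient.lift _ f hIQ').comp (algebraMap (ℤ ⧸ I) _) = q.comp ι) }
  refine ⟨(Algebra.FormallySmooth.liftOfSurjective fₐ qₐ hq hker).toRingHom.comp
    (Ideal.Quotient.mk _), RingHom.ext fun v ↦ ?_⟩
  exact Algebra.FormallySmooth.liftOfSurjective_apply fₐ qₐ hq hker (Ideal.Quotient.mk _ v)

variable {B : Type*} [CommRing B]

theorem exists_mk_comp_eq_of_forall_exists_factorPow_comp_eq {m : Ideal B} [IsAdicComplete m B]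
    (h : ∀ (n : ℕ) (g : V →+* B ⧸ m ^ (n + 1)), ∃ g' : V →+* B ⧸ m ^ (n + 1 + 1),
      (Ideal.Quotient.factorPow m (Nat.le_succ (n + 1))).comp g' = g) (f : V →+* B ⧸ m) :
    ∃ g : V →+* B, (Ideal.Quotient.mk m).comp g = f := by
  choose lift hlift using h
  have hle : m ≤ m ^ (0 + 1) := by rw [zero_add, pow_one]
  let F (n : ℕ) : V →+* B ⧸ m ^ (n + 1) :=
    Nat.rec ((Ideal.Quotient.factor hle).comp f) (fun n g ↦ lift n g) n
  have hF {n : ℕ} : (Ideal.Quotient.factorPow m (Nat.le_succ (n + 1))).comp (F (n + 1)) = F n :=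
    hlift n (F n)
  have hmono : StrictMono fun n : ℕ ↦ n + 1 := fun a b hab ↦ Nat.succ_lt_succ hab
  refine ⟨IsAdicComplete.StrictMono.liftRingHom m hmono F hF, RingHom.ext fun v ↦ ?_⟩
  have hmk := IsAdicComplete.StrictMono.mk_liftRingHom m hmono F hF (n := 0) v
  obtain ⟨b, hb⟩ := Ideal.Quotient.mk_surjective (f v)
  have hFb : F 0 v = Ideal.Quotient.mk _ b := by
    change Ideal.Quotient.factor hle (f v) = _
    rw [← hb, Ideal.Quotient.factor_mk]
  rw [hFb, Ideal.Quotient.eq, zero_add, pow_one] at hmk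
  rw [RingHom.comp_apply, ← hb, Ideal.Quotient.eq]
  exact hmk

theorem exists_mk_comp_eq_of_isAdicComplete [Module.Flat ℤ V] {m : Ideal B} [IsAdicComplete m B]
    (h : (algebraMap (ℤ ⧸ I) (V ⧸ I.map (algebraMap ℤ V))).FormallySmooth)
    (hI : I.map (Int.castRingHom B) ≤ m) (f : V →+* B ⧸ m) :
    ∃ g : V →+* B, (Ideal.Quotient.mk m).comp g = f := by
  refine exists_mk_comp_eq_of_forall_exists_factorPow_comp_eq (fun n g ↦ ?_) f
  refine exists_comp_eq_of_formallySmooth_int (formallySmooth_quotient_pow_succ h (n + 1))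
    (Ideal.Quotient.factor_surjective _) ⟨2, ker_factor_pow_succ_sq_eq_bot m n⟩ ?_ g
  rw [← RingHom.ext_int ((Ideal.Quotient.mk _).comp (Int.castRingHom B)) (Int.castRingHom _),
    ← Ideal.map_map, Ideal.map_eq_bot_iff_le_ker, Ideal.mk_ker, Ideal.map_pow]
  exact Ideal.pow_right_mono hI _

end

end FormallySmoothQuotient

section PrincipalMaximalIdeal

open IsLocalRing

variable {V : Type*} [CommRing V] [IsLocalRing V]

theorem isRegularLocalRing_of_maximalIdeal_eq_span_singleton [IsNoetherianRing V] {p : V}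
    (hm : maximalIdeal V = Ideal.span {p}) (hdim : 1 ≤ ringKrullDim V) : IsRegularLocalRing V :=
  isRegularLocalRing_of_ofList_eq_maximalIdeal (rs := [p])
    (by rw [Ideal.ofList_singleton, hm]) (by simpa using hdim)

theorem isDiscreteValuationRing_of_maximalIdeal_eq_span_singleton [IsNoetherianRing V] [IsDomain V]
    {p : V} (hm : maximalIdeal V = Ideal.span {p}) (hdim : 1 ≤ ringKrullDim V) :
    IsDiscreteValuationRing V := by
  have hV : ¬ IsField V := fun h ↦
    absurd (ringKrullDim_eq_zero_of_isField h ▸ hdim) (by decide)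
  have hm' : (maximalIdeal V).IsPrincipal := ⟨p, hm⟩
  exact ((IsDiscreteValuationRing.TFAE V hV).out 0 4).2 hm'

theorem formallySmooth_quotient_span_natCast {p : ℕ} (hp : p.Prime)
    (hm : maximalIdeal V = Ideal.span {(p : V)}) :
    (algebraMap (ℤ ⧸ Ideal.span {(p : ℤ)})
      (V ⧸ (Ideal.span {(p : ℤ)}).map (algebraMap ℤ V))).FormallySmooth := by
  have hmap : (Ideal.span {(p : ℤ)}).map (algebraMap ℤ V) = maximalIdeal V := by
    rw [Ideal.map_span, Set.image_singleton, map_natCast, hm]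
  have : ((Ideal.span {(p : ℤ)}).map (algebraMap ℤ V)).IsMaximal := hmap ▸ inferInstance
  have : (Ideal.span {(p : ℤ)}).IsMaximal :=
    PrincipalIdealRing.isMaximal_of_irreducible (Nat.prime_iff_prime_int.1 hp).irreducible
  let _ : Field (ℤ ⧸ Ideal.span {(p : ℤ)}) := Ideal.Quotient.field _
  let _ : Field (V ⧸ (Ideal.span {(p : ℤ)}).map (algebraMap ℤ V)) := Ideal.Quotient.field _
  have : NeZero p := ⟨hp.ne_zero⟩
  have : Finite (ℤ ⧸ Ideal.span {(p : ℤ)}) :=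
    .of_equiv _ (Int.quotientSpanNatEquivZMod p).symm.toEquiv
  exact RingHom.formallySmooth_algebraMap.2 formallySmooth_of_perfectField

theorem flat_int_of_natCast_mem_maximalIdeal [IsDomain V] {n : ℕ}
    (hn : (n : V) ∈ maximalIdeal V) (hn0 : (n : V) ≠ 0) : Module.Flat ℤ V := by
  obtain ⟨q, hq⟩ := CharP.exists V
  obtain hq_prime | rfl := CharP.char_is_prime_or_zero V q
  · have hdvd : q ∣ n := not_not.1 ((CharP.isUnit_natCast_iff hq_prime).not.1 hn)
    exact absurd ((CharP.cast_eq_zero_iff V q n).2 hdvd) hn0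
  · have := CharP.charP_to_charZero V
    infer_instance

end PrincipalMaximalIdeal

section CoefficientRing

open IsLocalRing

variable {σ : Type*} [Finite σ]

theorem exists_sub_mem_of_forall_exists_sub_mem_map_sup {V B : Type*} [CommRing V] [CommRing B]
    [IsLocalRing B] [IsNoetherianRing B] {I : Ideal V} [IsPrecomplete I V] {φ : V →+* B}
    {L : Ideal B} (hL : I.map φ ⊔ L ≠ ⊤) (hφ : ∀ b, ∃ w, b - φ w ∈ I.map φ ⊔ L) (b : B) :
    ∃ w, b - φ w ∈ L := by
  let ψ : V →+* B ⧸ L := (Ideal.Quotient.mk L).comp φ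
  have hmap : I.map ψ = (I.map φ).map (Ideal.Quotient.mk L) := (Ideal.map_map _ _).symm
  have hcomap : (I.map ψ).comap (Ideal.Quotient.mk L) = I.map φ ⊔ L := by
    rw [hmap, Ideal.comap_map_of_surjective' _ Ideal.Quotient.mk_surjective, Ideal.mk_ker]
  have hψ : I.map ψ ≠ ⊤ := fun h ↦ hL (by rw [← hcomap, h, Ideal.comap_top])
  have : IsLocalRing (B ⧸ L) := isLocalRing_quotient (ne_top_of_le_ne_top hL le_sup_right)
  have : IsHausdorff (I.map ψ) (B ⧸ L) := .of_isLocalRing _ _ hψ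
  have hsurj : Function.Surjective ψ := by
    refine surjective_of_mk_map_comp_surjective (I := I) ψ fun c ↦ ?_
    obtain ⟨c, rfl⟩ := Ideal.Quotient.mk_surjective c
    obtain ⟨c, rfl⟩ := Ideal.Quotient.mk_surjective c
    obtain ⟨w, hw⟩ := hφ c
    rw [← hcomap, Ideal.mem_comap, map_sub] at hw
    exact ⟨w, (Ideal.Quotient.eq.2 hw).symm⟩
  obtain ⟨w, hw⟩ := hsurj (Ideal.Quotient.mk L b)
  exact ⟨w, Ideal.Quotient.eq.1 hw.symm⟩

theorem dimensionInequality_of_isAdicComplete_of_isDiscreteValuationRing {B V : Type u}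
    [CommRing B] [IsLocalRing B] [IsNoetherianRing B] [IsAdicComplete (maximalIdeal B) B]
    [CommRing V] [IsDomain V] [IsDiscreteValuationRing V] [IsAdicComplete (maximalIdeal V) V]
    {p : ℕ} (hp : p.Prime) (hV : maximalIdeal V = Ideal.span {(p : V)}) {x : σ → B}
    (hx : Ideal.span {(p : B)} ⊔ Ideal.span (Set.range x) = maximalIdeal B)
    {f : V →+* ResidueField B} (hf : Function.Surjective f) :
    DimensionInequality B (1 + Nat.card σ) := by
  have hp0 : (p : V) ≠ 0 := fun h ↦ IsDiscreteValuationRing.not_a_field V (by simp [hV, h])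
  have := flat_int_of_natCast_mem_maximalIdeal (hV ▸ Ideal.mem_span_singleton_self _) hp0
  have hpB : (Ideal.span {(p : ℤ)}).map (Int.castRingHom B) ≤ maximalIdeal B := by
    rw [Ideal.map_span, Set.image_singleton, map_natCast, ← hx]
    exact le_sup_left
  obtain ⟨g, hg⟩ := exists_mk_comp_eq_of_isAdicComplete
    (formallySmooth_quotient_span_natCast hp hV) hpB f
  have hmap : (maximalIdeal V).map g ⊔ Ideal.span (Set.range x) = maximalIdeal B := by
    rw [hV, Ideal.map_span, Set.image_singleton, map_natCast, hx]
  have hgB (b : B) : ∃ w, b - g w ∈ (maximalIdeal V).map g ⊔ Ideal.span (Set.range x) := by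
    obtain ⟨w, hw⟩ := hf (residue B b)
    refine ⟨w, ?_⟩
    rw [hmap, ← Ideal.Quotient.eq]
    exact hw.symm.trans (RingHom.congr_fun hg w).symm
  obtain ⟨Φ, hΦ⟩ := exists_surjective_ringHom_mvPowerSeries_of_isAdicComplete (maximalIdeal B) g
    (hx ▸ le_sup_right) <| exists_sub_mem_of_forall_exists_sub_mem_map_sup
      (hmap ▸ (maximalIdeal.isMaximal B).ne_top) hgB
  exact dimensionInequality_mvPowerSeries_of_isDiscreteValuationRing.of_surjective hΦ

end CoefficientRing

section Completion

open IsLocalRing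

section

variable {R B : Type*} [CommRing R] [IsNoetherianRing R] [IsLocalRing R] [CommRing B]
  [IsNoetherianRing B] [IsLocalRing B] [Algebra R B] [Module.Flat R B]

theorem ringKrullDim_quotient_map_of_flat
    (hm : (maximalIdeal R).map (algebraMap R B) = maximalIdeal B) (I : Ideal R) :
    ringKrullDim (B ⧸ I.map (algebraMap R B)) = ringKrullDim (R ⧸ I) := by
  obtain rfl | hI := eq_or_ne I ⊤
  · rw [Ideal.map_top, ringKrullDim_eq_bot_of_subsingleton, ringKrullDim_eq_bot_of_subsingleton]
  have hIB : I.map (algebraMap R B) ≤ maximalIdeal B := hm ▸ Ideal.map_mono (le_maximalIdeal hI)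
  have := isLocalRing_quotient hI
  have := isLocalRing_quotient (ne_top_of_le_ne_top (maximalIdeal.isMaximal B).ne_top hIB)
  have := flat_quotient_map (V := B) I
  refine ringKrullDim_eq_of_flat_of_map_maximalIdeal_eq (A := R ⧸ I) ?_
  rw [← map_mk_maximalIdeal, ← map_mk_maximalIdeal, ← hm, Ideal.map_map, Ideal.map_map]
  rfl

theorem DimensionInequality.of_flat {d : WithBot ℕ∞} (hB : DimensionInequality B d)
    (hm : (maximalIdeal R).map (algebraMap R B) = maximalIdeal B) : DimensionInequality R d := by
  intro I J
  have h := hB (I.map (algebraMap R B)) (J.map (algebraMap R B))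
  rwa [← Ideal.map_sup, ringKrullDim_quotient_map_of_flat hm, ringKrullDim_quotient_map_of_flat hm,
    ringKrullDim_quotient_map_of_flat hm] at h

end

theorem isNoetherianRing_adicCompletion (R : Type*) [CommRing R] [IsNoetherianRing R]
    [IsLocalRing R] : IsNoetherianRing (AdicCompletion (maximalIdeal R) R) := by
  have hm := AdicCompletion.maximalIdeal_eq_map (R := R)
  refine isNoetherianRing_of_isAdicComplete (I := maximalIdeal _) ?_
    (algebraMap R (AdicCompletion (maximalIdeal R) R)) fun b ↦ ?_
  · exact hm ▸ (maximalIdeal R).fg_of_isNoetherianRing.map _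
  · obtain ⟨y, hy⟩ := (AdicCompletion.residueField_map_bijective R).2 (residue _ b)
    obtain ⟨r, rfl⟩ := residue_surjective y
    exact ⟨r, Ideal.Quotient.eq.1 hy.symm⟩

theorem ringKrullDim_adicCompletion (R : Type*) [CommRing R] [IsNoetherianRing R]
    [IsLocalRing R] : ringKrullDim (AdicCompletion (maximalIdeal R) R) = ringKrullDim R :=
  have := isNoetherianRing_adicCompletion R
  have : Module.Flat R (AdicCompletion (maximalIdeal R) R) := AdicCompletion.flat_of_isNoetherian _
  ringKrullDim_eq_of_flat_of_map_maximalIdeal_eq AdicCompletion.maximalIdeal_eq_map.symm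

theorem bijective_residueField_map_of_surjective {R A : Type*} [CommRing R] [IsLocalRing R]
    [CommRing A] [IsLocalRing A] {φ : R →+* A} [IsLocalHom φ] (hφ : Function.Surjective φ) :
    Function.Bijective (ResidueField.map φ) :=
  ⟨RingHom.injective _, .of_comp (g := residue R) (residue_surjective.comp hφ)⟩

theorem exists_surjective_adicCompletion_residueField {R A : Type*} [CommRing R]
    [IsNoetherianRing R] [IsLocalRing R] [CommRing A] [IsLocalRing A] {φ : R →+* A}
    (hφ : Function.Surjective φ) :
    ∃ f : AdicCompletion (maximalIdeal A) A →+*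
      ResidueField (AdicCompletion (maximalIdeal R) R), Function.Surjective f := by
  have : IsLocalHom φ := .of_surjective _ hφ
  let e₁ := RingEquiv.ofBijective _ (bijective_residueField_map_of_surjective hφ)
  let e₂ := RingEquiv.ofBijective _ (AdicCompletion.residueField_map_bijective R)
  let e : ResidueField A ≃+* ResidueField (AdicCompletion (maximalIdeal R) R) := e₁.symm.trans e₂
  exact ⟨e.toRingHom.comp (AdicCompletion.evalOneₐ (maximalIdeal A)).toRingHom,
    e.surjective.comp (AdicCompletion.evalOneₐ_surjective _)⟩

section

variable {R : Type u} [CommRing R] [IsNoetherianRing R] [IsLocalRing R] {σ : Type*} [Finite σ]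
  {x : σ → R}

theorem dimensionInequality_of_dimensionInequality_adicCompletion {d : WithBot ℕ∞}
    (h : DimensionInequality (AdicCompletion (maximalIdeal R) R) d) : DimensionInequality R d :=
  have := isNoetherianRing_adicCompletion R
  have : Module.Flat R (AdicCompletion (maximalIdeal R) R) := AdicCompletion.flat_of_isNoetherian _
  h.of_flat AdicCompletion.maximalIdeal_eq_map.symm

theorem dimensionInequality_of_perfectField (F : Type*) [Field F] [PerfectField F] [Algebra F R]
    (hx : Ideal.span (Set.range x) = maximalIdeal R) : DimensionInequality R (Nat.card σ) := by
  let B := AdicCompletion (maximalIdeal R) R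
  let _ : Algebra F B := ((algebraMap R B).comp (algebraMap F R)).toAlgebra
  refine dimensionInequality_of_dimensionInequality_adicCompletion <|
    dimensionInequality_of_isAdicComplete_of_perfectField (B := B) F (x := algebraMap R B ∘ x) ?_
  rw [Set.range_comp, ← Ideal.map_span, hx]
  exact AdicCompletion.maximalIdeal_eq_map.symm

theorem one_le_ringKrullDim_quotient_span_range
    (hx : Ideal.span (Set.range x) ≤ maximalIdeal R) (hdim : 1 + Nat.card σ ≤ ringKrullDim R) :
    1 ≤ ringKrullDim (R ⧸ Ideal.span (Set.range x)) := by
  have h := ringKrullDim_quotient_le_ringKrullDim_quotient_sup_span_range_add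
    (L := (⊥ : Ideal R)) bot_ne_top fun i ↦ hx (Ideal.subset_span ⟨i, rfl⟩)
  rw [bot_sup_eq, ringKrullDim_eq_of_ringEquiv (RingEquiv.quotientBot R)] at h
  exact ENat.WithBot.add_le_add_natCast_right_iff.1 (hdim.trans h)

theorem dimensionInequality_of_span_natCast_sup_span_eq_maximalIdeal {p : ℕ} (hp : p.Prime)
    (hx : Ideal.span {(p : R)} ⊔ Ideal.span (Set.range x) = maximalIdeal R)
    (hdim : 1 + Nat.card σ ≤ ringKrullDim R) : DimensionInequality R (1 + Nat.card σ) := by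
  have hxR : Ideal.span (Set.range x) ≤ maximalIdeal R := hx ▸ le_sup_right
  let A := R ⧸ Ideal.span (Set.range x)
  have : IsLocalRing A :=
    isLocalRing_quotient (ne_top_of_le_ne_top (maximalIdeal.isMaximal R).ne_top hxR)
  let V := AdicCompletion (maximalIdeal A) A
  let B := AdicCompletion (maximalIdeal R) R
  have : IsNoetherianRing V := isNoetherianRing_adicCompletion A
  have : IsNoetherianRing B := isNoetherianRing_adicCompletion R
  have hA : maximalIdeal A = Ideal.span {(p : A)} := by
    rw [← map_mk_maximalIdeal, ← hx, Ideal.map_sup, Ideal.map_quotient_self, sup_bot_eq,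
      Ideal.map_span, Set.image_singleton, map_natCast]
  have hV : maximalIdeal V = Ideal.span {(p : V)} := by
    have h := congrArg (Ideal.map (algebraMap A V)) hA
    rw [Ideal.map_span, Set.image_singleton, map_natCast] at h
    exact AdicCompletion.maximalIdeal_eq_map.trans h
  have hB : Ideal.span {(p : B)} ⊔ Ideal.span (Set.range (algebraMap R B ∘ x)) =
      maximalIdeal B := by
    have h := congrArg (Ideal.map (algebraMap R B)) hx
    rw [Ideal.map_sup, Ideal.map_span, Ideal.map_span, Set.image_singleton, map_natCast,
      ← Set.range_comp] at h
    exact h.trans AdicCompletion.maximalIdeal_eq_map.symm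
  have hdimV : 1 ≤ ringKrullDim V := by
    rw [ringKrullDim_adicCompletion]
    exact one_le_ringKrullDim_quotient_span_range hxR hdim
  have := isRegularLocalRing_of_maximalIdeal_eq_span_singleton hV hdimV
  have : IsDomain V := isDomain_of_isRegularLocalRing V
  have := isDiscreteValuationRing_of_maximalIdeal_eq_span_singleton hV hdimV
  obtain ⟨f, hf⟩ := exists_surjective_adicCompletion_residueField
    (Ideal.Quotient.mk_surjective (I := Ideal.span (Set.range x)))
  exact dimensionInequality_of_dimensionInequality_adicCompletion <|
    dimensionInequality_of_isAdicComplete_of_isDiscreteValuationRing hp hV hB hf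

end

end Completion

section Support

theorem support_tensorProduct_eq_inter {R M N : Type*} [CommRing R] [AddCommGroup M]
    [Module R M] [AddCommGroup N] [Module R N] [Module.Finite R M] [Module.Finite R N] :
    Module.support R (M ⊗[R] N) = Module.support R M ∩ Module.support R N := by
  ext P
  let κ := P.asIdeal.ResidueField
  have hfiber : Nontrivial (κ ⊗[R] (M ⊗[R] N)) ↔ Nontrivial ((κ ⊗[R] M) ⊗[κ] (κ ⊗[R] N)) :=
    (TensorProduct.AlgebraTensorModule.distribBaseChange R κ M N).nontrivial_congr
  simp only [Set.mem_inter_iff, Module.mem_support_iff_nontrivial_residueField_tensorProduct]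
  rw [hfiber]
  refine ⟨fun h ↦ ⟨?_, ?_⟩, fun ⟨_, _⟩ ↦ inferInstance⟩
  all_goals
    contrapose! h
    infer_instance

theorem supportDim_tensorProduct_eq {R M N : Type*} [CommRing R] [AddCommGroup M]
    [Module R M] [AddCommGroup N] [Module R N] [Module.Finite R M] [Module.Finite R N] :
    Module.supportDim R (M ⊗[R] N) =
      ringKrullDim (R ⧸ (Module.annihilator R M ⊔ Module.annihilator R N)) := by
  rw [Module.supportDim, ringKrullDim_quotient, support_tensorProduct_eq_inter,
    Module.support_eq_zeroLocus, Module.support_eq_zeroLocus, ← PrimeSpectrum.zeroLocus_sup]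

end Support

section UnramifiedRegular

open IsLocalRing

theorem exists_perfectField_algebra {R : Type*} [CommRing R] {K : Subring R} (hK : IsField K) :
    ∃ (F : Type) (_ : Field F) (_ : PerfectField F), Nonempty (Algebra F R) := by
  let _ : Field K := hK.toField
  obtain ⟨p, hp⟩ := CharP.exists K
  obtain hprime | rfl := CharP.char_is_prime_or_zero K p
  · have : Fact p.Prime := ⟨hprime⟩
    let _ : Algebra (ZMod p) K := ZMod.algebra K p
    exact ⟨ZMod p, inferInstance, inferInstance, ⟨(K.subtype.comp (algebraMap _ K)).toAlgebra⟩⟩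
  · have : CharZero K := CharP.charP_to_charZero K
    exact ⟨ℚ, inferInstance, inferInstance, ⟨(K.subtype.comp (algebraMap ℚ K)).toAlgebra⟩⟩

variable {R : Type u} [CommRing R] [IsLocalRing R]

namespace IsRegularLocal

theorem isRegularLocalRing (hR : IsRegularLocal R) : IsRegularLocalRing R := by
  obtain ⟨_, s, hs, hcard⟩ := hR
  refine .of_spanFinrank_maximalIdeal_le _ (hcard ▸ ?_)
  rw [← hs]
  exact_mod_cast Submodule.spanFinrank_span_le_ncard_of_finite s.finite_toSet |>.trans_eq
    (Set.ncard_coe_finset s)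

theorem dimensionInequality (hR : IsRegularLocal R) (hur : IsUnramifiedLocal R) :
    DimensionInequality R (ringKrullDim R) := by
  classical
  obtain ⟨_, s, hs, hcard⟩ := hR
  rcases hur with ⟨K, hK⟩ | ⟨-, p, hp, hchar, hp2⟩
  · obtain ⟨F, _, _, ⟨_⟩⟩ := exists_perfectField_algebra hK
    have h := dimensionInequality_of_perfectField F (x := ((↑) : s → R)) (by simpa using hs)
    rwa [Nat.card_eq_finsetCard, hcard] at h
  · have hpm : (p : R) ∈ maximalIdeal R := by
      rw [← residue_eq_zero_iff, map_natCast]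
      exact CharP.cast_eq_zero _ p
    obtain ⟨y, hys, hy⟩ := exists_span_singleton_sup_span_erase_eq_maximalIdeal hs hpm hp2
    have hdim : (1 + Nat.card (s.erase y) : WithBot ℕ∞) = ringKrullDim R := by
      rw [← hcard, ← Finset.card_erase_add_one hys]
      rw [← Nat.card_eq_finsetCard, Nat.cast_add, Nat.cast_one, add_comm]
    rw [← hdim]
    exact dimensionInequality_of_span_natCast_sup_span_eq_maximalIdeal hp
      (x := ((↑) : (s.erase y) → R)) (Subtype.range_coe.symm ▸ hy) hdim.le

end IsRegularLocal

end UnramifiedRegular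

theorem stmt_15 (R : Type u) [CommRing R] [IsLocalRing R] (hR : IsRegularLocal R)
    (hur : IsUnramifiedLocal R)
    (M N : Type u) [AddCommGroup M] [Module R M] [AddCommGroup N] [Module R N]
    [Module.Finite R M] [Module.Finite R N] [Nontrivial M] [Nontrivial N]
    (htor : ∀ i : ℕ, 0 < i →
      IsZero (((Tor (ModuleCat.{u} R) i).obj (ModuleCat.of R M)).obj (ModuleCat.of R N))) :
    moduleDim R M + moduleDim R N = ringDim R + moduleDim R (M ⊗[R] N) := by
  have hreg := hR.isRegularLocalRing
  simp only [moduleDim, ringDim]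
  refine le_antisymm ?_ ?_
  · rw [← Module.supportDim_eq_ringKrullDim_quotient_annihilator (R := R) (M := M ⊗[R] N),
      supportDim_tensorProduct_eq]
    exact hR.dimensionInequality hur _ _
  · simp only [← Module.supportDim_eq_ringKrullDim_quotient_annihilator]
    have hsupp := support_tensorProduct_eq_inter (R := R) (M := M) (N := N)
    have : Nontrivial (M ⊗[R] N) := by
      rw [← Module.nonempty_support_iff (R := R), hsupp]
      exact ⟨IsLocalRing.closedPoint R, IsLocalRing.closedPoint_mem_support R M,
        IsLocalRing.closedPoint_mem_support R N⟩
    obtain ⟨P, hP, hdim⟩ := exists_mem_support_supportDim_eq (R := R) (M ⊗[R] N)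
    rw [hsupp] at hP
    rw [hdim]
    exact ringKrullDim_add_ringKrullDim_quotient_le_of_isZero_tor (R := R) htor hP.1 hP.2
end
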